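/- arXiv:1909.08680 — 5 statements merged into one kernel-verified Lean document; each statement's English description precedes it below -/
import Mathlib

section
/- For all integers n ≥ 1 and N ≥ n² − n + 2, every 2-coloring of the Boolean lattice Q_N contains a red copy of Q_n or a blue copy of Q_n. (Equivalently, R(Q_n, Q_n) ≤ n² − n + 2.) -/
/-- A red copy of the Boolean lattice `Q m` inside the 2-colored Boolean lattice `Q N`,
where `c S = true` means `S` is red and `c S = false` means `S` is blue. -/
def HasRedCopy (m N : ℕ) (c : Finset (Fin N) → Bool) : Prop :=
  ∃ f : Finset (Fin m) → Finset (Fin N),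
    Function.Injective f ∧
    (∀ S T : Finset (Fin m), S ⊆ T ↔ f S ⊆ f T) ∧
    (∀ S : Finset (Fin m), c (f S) = true)

/-- A blue copy of the Boolean lattice `Q m` inside the 2-colored Boolean lattice `Q N`. -/
def HasBlueCopy (m N : ℕ) (c : Finset (Fin N) → Bool) : Prop :=
  ∃ f : Finset (Fin m) → Finset (Fin N),
    Function.Injective f ∧
    (∀ S T : Finset (Fin m), S ⊆ T ↔ f S ⊆ f T) ∧
    (∀ S : Finset (Fin m), c (f S) = false)

/-!
Fix `X` with `n` elements and a chain `A 0 ⊆ A 1 ⊆ ⋯` of sets disjoint from `X`. If every `T ⊆ X`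
of size `k` can be completed to a red set `T ∪ D` with `A k ⊆ D ⊆ A (k + 1)`, then the sets `T ∪ D`
form a red copy of `Q_n`. Without a blue copy of `Q_n`, the completion exists as soon as
`A (k + 1) \ A k` has `n` elements, so a level `k` costs at most `n` points of the ground set; all
`n + 1` levels would cost `n² + n` points on top of `X`. If three levels come for free, then
`n + n (n - 2) = n² - n` points suffice, and the two remaining points leave some room in choosing
the free levels: the colors of the sets of size at most two and of their complements always allow
such a choice, for one of the two colors.
-/

open Finset

/-- The set `s` contains a copy of the Boolean lattice `Q_n`. -/
def HasCube {β : Type*} [LE β] (n : ℕ) (s : Set β) : Prop :=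
  ∃ f : Finset (Fin n) ↪o β, ∀ S, f S ∈ s

/-- The 2-coloring with color classes `s` and `sᶜ` has a monochromatic copy of `Q_n`. The elements
of `s` are called red below, the others blue. -/
def HasMonoCube {β : Type*} [LE β] (n : ℕ) (s : Set β) : Prop :=
  HasCube n s ∨ HasCube n sᶜ

theorem HasMonoCube.of_compl {β : Type*} [LE β] {n : ℕ} {s : Set β} (h : HasMonoCube n sᶜ) :
    HasMonoCube n s := by
  rwa [HasMonoCube, compl_compl, or_comm] at h

section BooleanAlgebra

variable {β : Type*} [BooleanAlgebra β] {n : ℕ} {s : Set β}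

theorem HasCube.of_preimage_compl (h : HasCube n (compl ⁻¹' s)) : HasCube n s := by
  obtain ⟨f, hf⟩ := h
  have compl_f_compl_le_iff (S T : Finset (Fin n)) : (f Sᶜ)ᶜ ≤ (f Tᶜ)ᶜ ↔ S ≤ T := by
    rw [compl_le_compl_iff_le, f.le_iff_le, compl_le_compl_iff_le]
  exact ⟨OrderEmbedding.ofMapLEIff _ compl_f_compl_le_iff, fun S => hf Sᶜ⟩

theorem HasMonoCube.of_preimage_compl (h : HasMonoCube n (compl ⁻¹' s)) : HasMonoCube n s :=
  h.imp HasCube.of_preimage_compl HasCube.of_preimage_compl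

end BooleanAlgebra

section Layers

variable {α : Type*} [DecidableEq α] {n : ℕ} {𝒜 : Set (Finset α)} {X : Finset α}

theorem hasCube_of_union_mem (hX : #X = n) {D : Finset α → Finset α}
    (hmono : MonotoneOn D (Set.Iic X)) (hdisj : ∀ T ⊆ X, Disjoint X (D T))
    (hmem : ∀ T ⊆ X, T ∪ D T ∈ 𝒜) : HasCube n 𝒜 := by
  let g : Fin n ↪ α := (X.equivFinOfCardEq hX).symm.toEmbedding.trans (.subtype _)
  have hg (i : Fin n) : g i ∈ X := ((X.equivFinOfCardEq hX).symm i).2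
  have map_subset (S : Finset (Fin n)) : S.map g ⊆ X := by
    simpa only [subset_iff, forall_mem_map] using fun i _ => hg i
  refine ⟨.ofMapLEIff (fun S => S.map g ∪ D (S.map g)) fun S U => ⟨fun h i hi => ?_, fun h => ?_⟩,
    fun S => hmem _ (map_subset S)⟩
  · have hiU : g i ∈ U.map g ∪ D (U.map g) := h (mem_union_left _ (mem_map_of_mem g hi))
    have hiD : g i ∉ D (U.map g) := disjoint_left.1 (hdisj _ (map_subset U)) (hg i)
    simpa [hiD] using hiU
  · have hSU : S.map g ⊆ U.map g := map_subset_map.2 h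
    exact union_subset_union hSU (hmono (map_subset S) (map_subset U) hSU)

theorem exists_mem_Icc_union_mem (hcube : ¬ HasCube n 𝒜ᶜ) {T B C : Finset α} (hBC : B ⊆ C)
    (hTC : Disjoint T C) (hn : n ≤ #(C \ B)) : ∃ D ∈ Set.Icc B C, T ∪ D ∈ 𝒜 := by
  by_contra! hblue
  obtain ⟨Y, hY, hYn⟩ := exists_subset_card_eq hn
  obtain ⟨hYC, hYB⟩ := subset_sdiff.1 hY
  refine hcube (hasCube_of_union_mem hYn (D := fun _ => T ∪ B) monotoneOn_const ?_ ?_)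
  · exact fun _ _ => disjoint_union_right.2 ⟨(hTC.mono_right hYC).symm, hYB⟩
  · intro S hS
    rw [union_left_comm]
    exact hblue _ ⟨subset_union_right, union_subset (hS.trans hYC) hBC⟩

theorem hasCube_of_layers (hcube : ¬ HasCube n 𝒜ᶜ) (hX : #X = n) {A : ℕ → Finset α}
    (hA : Monotone A) (hdisj : ∀ k, Disjoint X (A k))
    (hlayer : ∀ T ⊆ X, n ≤ #(A (#T + 1) \ A #T) ∨
      ∃ D ∈ Set.Icc (A #T) (A (#T + 1)), T ∪ D ∈ 𝒜) : HasCube n 𝒜 := by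
  have hfill (T : Finset α) (hT : T ⊆ X) : ∃ D ∈ Set.Icc (A #T) (A (#T + 1)), T ∪ D ∈ 𝒜 :=
    (hlayer T hT).elim
      (exists_mem_Icc_union_mem hcube (hA (Nat.le_succ _)) ((hdisj _).mono_left hT)) id
  choose! D hD hmem using hfill
  refine hasCube_of_union_mem hX (fun S hS T hT hST => ?_)
    (fun T hT => (hdisj _).mono_right (hD T hT).2) hmem
  rcases hST.eq_or_ssubset with rfl | hlt
  · rfl
  · exact (hD S hS).2.trans ((hA (card_lt_card hlt)).trans (hD T hT).1)

theorem exists_chain_of_mul_le_card {A B : Finset α} (hAB : A ⊆ B) {m : ℕ}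
    (hcard : n * m ≤ #(B \ A)) :
    ∃ C : ℕ → Finset α, Monotone C ∧ C 0 = A ∧ (∀ k, C k ⊆ B) ∧ C (m + 1) = B ∧
      ∀ k < m, n ≤ #(C (k + 1) \ C k) := by
  induction m generalizing A with
  | zero =>
    refine ⟨fun | 0 => A | _ + 1 => B, ?_, rfl, ?_, rfl, by simp⟩
    · refine monotone_nat_of_le_succ ?_
      rintro (_ | k)
      exacts [hAB, le_rfl]
    · rintro (_ | k)
      exacts [hAB, le_rfl]
  | succ m ih =>
    rw [Nat.mul_succ] at hcard
    obtain ⟨E, hE, hEn⟩ := exists_subset_card_eq (le_of_add_le_right hcard)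
    obtain ⟨hEB, hEA⟩ := subset_sdiff.1 hE
    have hrest : n * m ≤ #(B \ (A ∪ E)) := by
      rw [← sup_eq_union, ← sdiff_sdiff, card_sdiff_of_subset hE]
      omega
    obtain ⟨C, hC, hC0, hCB, hCm, hgap⟩ := ih (union_subset hAB hEB) hrest
    refine ⟨fun | 0 => A | k + 1 => C k, ?_, rfl, ?_, hCm, ?_⟩
    · refine monotone_nat_of_le_succ ?_
      rintro (_ | k)
      · exact subset_union_left.trans hC0.ge
      · exact hC k.le_succ
    · rintro (_ | k)
      exacts [hAB, hCB k]
    · rintro (_ | k) hk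
      · simp only [hC0, union_sdiff_cancel_left hEA.symm, hEn, le_refl]
      · exact hgap k (by omega)

theorem hasCube_of_bottom_of_atoms_of_top (hcube : ¬ HasCube n 𝒜ᶜ) (hn : 2 ≤ n) (hX : #X = n)
    {b a t : Finset α} (hba : b ⊆ a) (hXa : Disjoint X a) (hXt : X ⊆ t) (hat : a ⊆ t)
    (hb : b ∈ 𝒜) (hatom : ∀ x ∈ X, ∃ D ∈ Set.Icc b a, insert x D ∈ 𝒜) (ht : t ∈ 𝒜)
    (hcard : n * (n - 1) + #a ≤ #t) : HasCube n 𝒜 := by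
  obtain ⟨m, rfl⟩ := Nat.exists_eq_add_of_le' hn
  have hatX : a ⊆ t \ X := subset_sdiff.2 ⟨hat, hXa.symm⟩
  have hroom : (m + 2) * m ≤ #((t \ X) \ a) := by
    rw [card_sdiff_of_subset hatX, card_sdiff_of_subset hXt, hX]
    have : (m + 2) * (m + 1) = (m + 2) * m + (m + 2) := by ring
    simp only [Nat.add_succ_sub_one] at hcard
    omega
  obtain ⟨C, hC, hC0, hCt, hCm, hgap⟩ := exists_chain_of_mul_le_card hatX hroom
  let A : ℕ → Finset α
    | 0 => b
    | 1 => b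
    | k + 2 => C k
  have hA : Monotone A := by
    refine monotone_nat_of_le_succ ?_
    rintro (_ | _ | k)
    exacts [le_rfl, hba.trans hC0.ge, hC k.le_succ]
  have hAt (k : ℕ) : A k ⊆ t \ X := by
    obtain _ | _ | k := k
    exacts [hba.trans hatX, hba.trans hatX, hCt k]
  refine hasCube_of_layers hcube hX hA (fun k => disjoint_sdiff.mono_right (hAt k)) fun T hT => ?_
  have hTm : #T ≤ m + 2 := hX ▸ card_le_card hT
  obtain hk | hk | ⟨k, hk⟩ : #T = 0 ∨ #T = 1 ∨ ∃ k, #T = k + 2 := by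
    rcases #T with _ | _ | k <;> simp
  · rw [hk, card_eq_zero.1 hk]
    exact .inr ⟨b, ⟨le_rfl, le_rfl⟩, by rwa [empty_union]⟩
  · obtain ⟨x, rfl⟩ := card_eq_one.1 hk
    obtain ⟨D, ⟨hbD, hDa⟩, hD⟩ := hatom x (singleton_subset_iff.1 hT)
    exact .inr ⟨D, ⟨hbD, hDa.trans hC0.ge⟩, hD⟩
  · rw [hk]
    rcases (show k ≤ m by omega).lt_or_eq with hkm | rfl
    · exact .inl (hgap k hkm)
    · obtain rfl : T = X := eq_of_subset_of_card_le hT (by omega)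
      exact .inr ⟨t \ T, ⟨hCt k, hCm.ge⟩, by rwa [union_sdiff_of_subset hXt]⟩

end Layers

section Ramsey

variable {α : Type*} {n : ℕ} {𝒜 : Set (Finset α)}

theorem hasMonoCube_one_of_ssubset {b t : Finset α} (hbt : b ⊂ t) (h : b ∈ 𝒜 ↔ t ∈ 𝒜) :
    HasMonoCube 1 𝒜 := by
  classical
  have hasCube {ℬ : Set (Finset α)} (hb : b ∈ ℬ) (ht : t ∈ ℬ) : HasCube 1 ℬ := by
    obtain ⟨x, hxt, hxb⟩ := exists_of_ssubset hbt
    have hbx : b ⊆ t \ {x} := subset_sdiff.2 ⟨hbt.subset, disjoint_singleton_right.2 hxb⟩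
    refine hasCube_of_union_mem (card_singleton x)
      (D := fun T => if T = ∅ then b else t \ {x}) ?_ ?_ ?_
    · intro S _ T _ hST
      by_cases hS : S = ∅ <;> by_cases hT : T = ∅ <;> simp_all
    · intro T _
      by_cases hT : T = ∅ <;> simp [hT, hxb]
    · intro T hT
      rcases subset_singleton_iff.1 hT with rfl | rfl
      · simpa using hb
      · simpa [insert_eq_of_mem hxt] using ht
  by_cases hb : b ∈ 𝒜
  · exact .inl (hasCube hb (h.1 hb))
  · exact .inr (hasCube hb (mt h.2 hb))

variable [Fintype α]

theorem hasMonoCube_one (hα : 2 ≤ Fintype.card α) : HasMonoCube 1 𝒜 := by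
  obtain ⟨x, y, hxy⟩ := Fintype.one_lt_card_iff.1 hα
  have hx : ({x} : Finset α) ⊂ univ :=
    ssubset_univ_iff.2 fun h => hxy (mem_singleton.1 (h ▸ mem_univ y)).symm
  by_contra h
  have hcolor {b t : Finset α} (hbt : b ⊂ t) : ¬ (b ∈ 𝒜 ↔ t ∈ 𝒜) :=
    fun hiff => h (hasMonoCube_one_of_ssubset hbt hiff)
  have hx0 : (∅ : Finset α) ⊂ {x} := empty_ssubset_singleton
  have h_bottom := hcolor hx0
  have h_top := hcolor hx
  have h_bottom_top := hcolor (hx0.trans hx)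
  tauto

theorem hasMonoCube_of_forall_card_le_two (hα : n * (n - 1) ≤ Fintype.card α) (hn : 2 ≤ n)
    (hsmall : ∀ s : Finset α, #s ≤ 2 → s ∈ 𝒜) : HasMonoCube n 𝒜 := by
  classical
  by_contra h
  obtain ⟨hred, hblue⟩ := not_or.1 h
  obtain ⟨m, rfl⟩ := Nat.exists_eq_add_of_le' hn
  have hsplit : (m + 2) * m + (m + 2) ≤ Fintype.card α := by
    convert hα using 1
    simp only [Nat.add_succ_sub_one]
    ring
  obtain ⟨X, -, hX⟩ := exists_subset_card_eq (s := (univ : Finset α)) (n := m + 2)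
    (by rw [card_univ]; omega)
  have hroom : (m + 2) * m ≤ #(Xᶜ \ ∅) := by
    rw [sdiff_empty, card_compl, hX]
    omega
  obtain ⟨C, hC, hC0, hCX, -, hgap⟩ := exists_chain_of_mul_le_card (empty_subset Xᶜ) hroom
  -- Truncated subtraction: `A 0`, ..., `A 3` are empty, so levels 0, 1, 2 use the sets `T` alone.
  refine hred (hasCube_of_layers hblue hX (A := fun k => C (k - 3))
    (fun i j hij => hC (Nat.sub_le_sub_right hij 3))
    (fun k => disjoint_compl_right.mono_right (hCX _)) fun T hT => ?_)
  have hTm : #T ≤ m + 2 := hX ▸ card_le_card hT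
  rcases le_or_gt #T 2 with hT2 | hT2
  · refine .inr ⟨∅, ⟨?_, empty_subset _⟩, by simpa using hsmall T hT2⟩
    rw [Nat.sub_eq_zero_of_le (by omega), hC0]
  · have hnext : #T + 1 - 3 = #T - 3 + 1 := by omega
    simp only [hnext]
    exact .inl (hgap _ (by omega))

theorem card_le_add_add_of_forall_mem_or {s t u : Finset α} (h : ∀ x, x ∈ s ∨ x ∈ t ∨ x ∈ u) :
    Fintype.card α ≤ #s + #t + #u := by
  classical
  calc Fintype.card α = #(s ∪ t ∪ u) := by
        rw [(eq_univ_of_forall (s := s ∪ t ∪ u) fun x => by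
          simpa only [mem_union, or_assoc] using h x), card_univ]
    _ ≤ #s + #t + #u := (card_union_le _ _).trans (Nat.add_le_add_right (card_union_le _ _) _)

theorem two_mul_le_of_mul_sub_one_add_two_le {m : ℕ} (hn : 2 ≤ n) (hm : n * (n - 1) + 2 ≤ m) :
    2 * n ≤ m := by
  obtain ⟨k, rfl⟩ := Nat.exists_eq_add_of_le' hn
  simp only [Nat.add_succ_sub_one] at hm
  nlinarith

variable (hn : 2 ≤ n) (hα : n * (n - 1) + 2 ≤ Fintype.card α)

include hn hα

section DecidableEq

variable [DecidableEq α]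

theorem hasMonoCube_of_atoms {b a s : Finset α} (hba : b ⊆ a) (has : Disjoint a s)
    (hcard : #a + #s ≤ 2) (hb : b ∈ 𝒜) (hs : sᶜ ∈ 𝒜) {Y : Finset α} (hY : n ≤ #Y)
    (hatom : ∀ x ∈ Y, x ∉ a ∧ x ∉ s ∧ ∃ D ∈ Set.Icc b a, insert x D ∈ 𝒜) :
    HasMonoCube n 𝒜 := by
  by_contra h
  obtain ⟨hred, hblue⟩ := not_or.1 h
  obtain ⟨X, hXY, hX⟩ := exists_subset_card_eq hY
  refine hred (hasCube_of_bottom_of_atoms_of_top hblue hn hX hba ?_ ?_ ?_ hb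
    (fun x hx => (hatom x (hXY hx)).2.2) hs ?_)
  · exact disjoint_left.2 fun x hx => (hatom x (hXY hx)).1
  · exact fun x hx => mem_compl.2 (hatom x (hXY hx)).2.1
  · exact has.le_compl_right
  · rw [card_compl]
    omega

theorem hasMonoCube_of_empty_mem_of_pairs {s : Finset α} (hcard : #s ≤ 1) (h0 : ∅ ∈ 𝒜)
    (hs : sᶜ ∈ 𝒜) {y : α} (hys : y ∉ s) {Y : Finset α} (hY : n ≤ #Y)
    (hpair : ∀ x ∈ Y, x ≠ y ∧ x ∉ s ∧ ({x} ∈ 𝒜 ∨ {x, y} ∈ 𝒜)) : HasMonoCube n 𝒜 := by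
  refine hasMonoCube_of_atoms hn hα (empty_subset {y}) (disjoint_singleton_left.2 hys)
    (by rw [card_singleton]; omega) h0 hs hY fun x hx => ?_
  obtain ⟨hxy, hxs, hmem⟩ := hpair x hx
  refine ⟨notMem_singleton.2 hxy, hxs, ?_⟩
  rcases hmem with hx | hxy
  · exact ⟨∅, ⟨le_rfl, empty_subset _⟩, by rwa [insert_empty_eq]⟩
  · exact ⟨{y}, ⟨empty_subset _, le_rfl⟩, hxy⟩

theorem hasMonoCube_of_singleton_mem_of_pairs {s : Finset α} (hcard : #s ≤ 1) {y : α}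
    (hy : {y} ∈ 𝒜) (hs : sᶜ ∈ 𝒜) (hys : y ∉ s) {Y : Finset α} (hY : n ≤ #Y)
    (hpair : ∀ x ∈ Y, x ≠ y ∧ x ∉ s ∧ {x, y} ∈ 𝒜) : HasMonoCube n 𝒜 := by
  refine hasMonoCube_of_atoms hn hα subset_rfl (disjoint_singleton_left.2 hys)
    (by rw [card_singleton]; omega) hy hs hY fun x hx => ?_
  obtain ⟨hxy, hxs, hmem⟩ := hpair x hx
  exact ⟨notMem_singleton.2 hxy, hxs, {y}, ⟨le_rfl, le_rfl⟩, hmem⟩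

theorem hasMonoCube_of_univ_mem_of_coatoms {s : Finset α} (hcard : #s ≤ 2) (h1 : univ ∈ 𝒜)
    (hs : s ∈ 𝒜) {Y : Finset α} (hY : n ≤ #Y) (hcoatom : ∀ x ∈ Y, x ∉ s ∧ {x}ᶜ ∈ 𝒜) :
    HasMonoCube n 𝒜 := by
  refine .of_preimage_compl (hasMonoCube_of_atoms hn hα (subset_refl ∅) (disjoint_empty_left s)
    (by simpa using hcard) ?_ ?_ hY fun x hx => ⟨notMem_empty x, (hcoatom x hx).1, ∅, ?_⟩)
  · simpa using h1
  · simpa using hs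
  · simpa using (hcoatom x hx).2

theorem hasMonoCube_of_univ_mem_of_pair_mem (h0 : ∅ ∈ 𝒜) (h1 : univ ∈ 𝒜) {y z : α}
    (hy : {y} ∉ 𝒜) (hz : {z}ᶜ ∉ 𝒜) (hzy : z ≠ y) (hpair : {z, y} ∈ 𝒜) : HasMonoCube n 𝒜 := by
  classical
  have h2n := two_mul_le_of_mul_sub_one_add_two_le hn hα
  let R : Finset α := {x | x ≠ y ∧ {x, y} ∈ 𝒜}
  let B : Finset α := {x | x ≠ y ∧ x ≠ z ∧ {x, y} ∉ 𝒜}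
  have hcover : Fintype.card α ≤ #R + #B + #{y} :=
    card_le_add_add_of_forall_mem_or (by grind)
  rw [card_singleton] at hcover
  rcases show n ≤ #R ∨ n ≤ #B by omega with hR | hB
  · exact hasMonoCube_of_empty_mem_of_pairs hn hα (s := ∅) (by simp) h0 (by simpa using h1)
      (notMem_empty y) hR (by grind)
  · exact .of_compl <| hasMonoCube_of_singleton_mem_of_pairs hn hα (s := {z}) (by simp) hy hz
      (by simpa using hzy.symm) hB (by simp [B])

theorem hasMonoCube_or_pair_mem_of_univ_mem (h0 : ∅ ∈ 𝒜) (h1 : univ ∈ 𝒜) {y : α}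
    (hy : {y} ∉ 𝒜) :
    HasMonoCube n 𝒜 ∨ (∃ g, {g}ᶜ ∈ 𝒜) ∧ ∀ g, {g}ᶜ ∈ 𝒜 → {g, y} ∈ 𝒜 := by
  classical
  refine or_iff_not_imp_left.2 fun h => ?_
  have h2n := two_mul_le_of_mul_sub_one_add_two_le hn hα
  let G : Finset α := {g | {g}ᶜ ∈ 𝒜}
  have mem_G {g : α} : g ∈ G ↔ {g}ᶜ ∈ 𝒜 := mem_filter_univ g
  have card_G : #G < n := lt_of_not_ge fun hle => h <|
    hasMonoCube_of_univ_mem_of_coatoms hn hα (s := ∅) (by simp) h1 h0 hle (by simp [G])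
  obtain ⟨z, -, hz⟩ : ∃ z ∈ univ, z ∉ insert y G := by
    refine exists_mem_notMem_of_card_lt_card ((card_insert_le y G).trans_lt ?_)
    rw [card_univ]
    omega
  obtain ⟨hzy, hzG⟩ : z ≠ y ∧ z ∉ G := by simpa using hz
  let B : Finset α := {x | x ≠ y ∧ x ≠ z ∧ {x, y} ∉ 𝒜}
  have card_B : #B < n := lt_of_not_ge fun hle => h <| .of_compl <|
    hasMonoCube_of_singleton_mem_of_pairs hn hα (s := {z}) (by simp) hy (mt mem_G.2 hzG)
      (by simpa using hzy.symm) hle (by simp [B])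
  have pair_notMem {x : α} (hx : x ∉ G) (hxy : x ≠ y) : {x, y} ∉ 𝒜 := fun hpair =>
    h <| hasMonoCube_of_univ_mem_of_pair_mem hn hα h0 h1 hy (mt mem_G.2 hx) hxy hpair
  have hcover : Fintype.card α ≤ #B + #{g ∈ G | {g, y} ∈ 𝒜} + #{y, z} :=
    card_le_add_add_of_forall_mem_or (by grind)
  rw [card_pair hzy.symm] at hcover
  have filter_eq : {g ∈ G | {g, y} ∈ 𝒜} = G :=
    eq_of_subset_of_card_le (filter_subset _ _) (by omega)
  rw [filter_eq] at hcover
  obtain ⟨g, hg⟩ := card_pos.1 (show 0 < #G by omega)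
  exact ⟨⟨g, mem_G.1 hg⟩, fun g hg => filter_eq_self.1 filter_eq g (mem_G.2 hg)⟩

theorem hasMonoCube_of_univ_notMem_of_pair_notMem (h0 : ∅ ∈ 𝒜) (h1 : univ ∉ 𝒜) {p y z : α}
    (hz : {z}ᶜ ∈ 𝒜) (hy : {y} ∉ 𝒜) (hyz : y ≠ z) (hp : p = z ∨ {p} ∈ 𝒜) (hpy : p ≠ y)
    (hpair : {p, y} ∉ 𝒜) : HasMonoCube n 𝒜 := by
  classical
  have h2n := two_mul_le_of_mul_sub_one_add_two_le hn hα
  let B : Finset α := {x | x ≠ y ∧ {x, y} ∉ 𝒜}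
  let R : Finset α := {x | x ≠ y ∧ x ≠ z ∧ ({x} ∈ 𝒜 ∨ {x, y} ∈ 𝒜)}
  have hcover : Fintype.card α ≤ #(B.erase p) + #R + #{y, z} :=
    card_le_add_add_of_forall_mem_or (by grind)
  have card_B : #(B.erase p) + 1 = #B := card_erase_add_one (by simp [B, hpy, hpair])
  rw [card_pair hyz] at hcover
  rcases show n ≤ #B ∨ n ≤ #R by omega with hB | hR
  · exact .of_compl <| hasMonoCube_of_singleton_mem_of_pairs hn hα (s := ∅) (by simp) hy
      (by simpa using h1) (notMem_empty y) hB (by simp [B])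
  · exact hasMonoCube_of_empty_mem_of_pairs hn hα (s := {z}) (by simp) h0 hz (by simpa using hyz)
      hR (by simp [R])

theorem hasMonoCube_of_univ_notMem_of_compl_singleton_mem (h0 : ∅ ∈ 𝒜) (h1 : univ ∉ 𝒜) {z : α}
    (hz : {z}ᶜ ∈ 𝒜) : HasMonoCube n 𝒜 := by
  classical
  by_contra h
  have h2n := two_mul_le_of_mul_sub_one_add_two_le hn hα
  have pair_mem {p y : α} (hp : p = z ∨ {p} ∈ 𝒜) (hpy : p ≠ y) (hy : {y} ∉ 𝒜) (hyz : y ≠ z) :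
      {y, p} ∈ 𝒜 := by
    rw [pair_comm]
    exact not_imp_comm.1
      (hasMonoCube_of_univ_notMem_of_pair_notMem hn hα h0 h1 hz hy hyz hp hpy) h
  obtain ⟨p, s, hs, hps, hp, hzps⟩ : ∃ p s, {s}ᶜ ∈ 𝒜 ∧ p ≠ s ∧ (p = z ∨ {p} ∈ 𝒜) ∧
      (z = p ∨ z = s) := by
    by_cases hred : ∃ p, p ≠ z ∧ {p} ∈ 𝒜
    · obtain ⟨p, hpz, hp⟩ := hred
      exact ⟨p, z, hz, hpz, .inr hp, .inr rfl⟩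
    · push Not at hred
      obtain ⟨y, hyz⟩ := Fintype.exists_ne_of_one_lt_card (show 1 < Fintype.card α by omega) z
      suffices ∃ s, s ≠ z ∧ {s}ᶜ ∈ 𝒜 by
        obtain ⟨s, hsz, hs⟩ := this
        exact ⟨z, s, hs, hsz.symm, .inl rfl, .inl rfl⟩
      by_contra! hcoatom
      refine h <| .of_compl <| hasMonoCube_of_univ_mem_of_coatoms hn hα (s := {y}) (by simp) h1
        (Set.mem_compl (hred y hyz)) (Y := {y, z}ᶜ) ?_ (by grind [mem_compl])
      rw [card_compl, card_pair hyz]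
      omega
  have red_of_mem_compl {x : α} (hx : x ∈ ({p, s} : Finset α)ᶜ) :
      x ≠ p ∧ x ∉ ({s} : Finset α) ∧ ({x} ∈ 𝒜 ∨ {x, p} ∈ 𝒜) := by
    obtain ⟨hxp, hxs⟩ : x ≠ p ∧ x ≠ s := by simpa using hx
    have hxz : x ≠ z := by rintro rfl; exact hzps.elim hxp hxs
    exact ⟨hxp, notMem_singleton.2 hxs,
      or_iff_not_imp_left.2 fun hxmem => pair_mem hp hxp.symm hxmem hxz⟩
  refine h <| hasMonoCube_of_empty_mem_of_pairs hn hα (s := {s}) (by simp) h0 hs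
    (by simpa using hps) (Y := {p, s}ᶜ) ?_ fun _ => red_of_mem_compl
  rw [card_compl, card_pair hps]
  omega

end DecidableEq

theorem hasMonoCube_of_empty_mem_of_univ_mem (h0 : ∅ ∈ 𝒜) (h1 : univ ∈ 𝒜) :
    HasMonoCube n 𝒜 := by
  classical
  by_contra h
  have h2n := two_mul_le_of_mul_sub_one_add_two_le hn hα
  have hred {y : α} (hy : {y} ∉ 𝒜) :=
    (hasMonoCube_or_pair_mem_of_univ_mem hn hα h0 h1 hy).resolve_left h
  obtain ⟨g, hg⟩ : ∃ g, ∀ y, {y} ∉ 𝒜 → {g, y} ∈ 𝒜 := by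
    by_cases hall : ∃ y, {y} ∉ 𝒜
    · obtain ⟨y, hy⟩ := hall
      obtain ⟨g, hg⟩ := (hred hy).1
      exact ⟨g, fun y' hy' => (hred hy').2 g hg⟩
    · have : Nonempty α := Fintype.card_pos_iff.1 (by omega)
      exact ⟨Classical.arbitrary α, fun y hy => absurd ⟨y, hy⟩ hall⟩
  refine h (hasMonoCube_of_empty_mem_of_pairs hn hα (s := ∅) (by simp) h0 (by simpa using h1)
    (notMem_empty g) (Y := {g}ᶜ) ?_ fun x hx => ⟨by simpa using hx, notMem_empty x, ?_⟩)
  · rw [card_compl, card_singleton]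
    omega
  · rw [pair_comm]
    exact or_iff_not_imp_left.2 (hg x)

theorem hasMonoCube_of_empty_mem_of_univ_notMem (h0 : ∅ ∈ 𝒜) (h1 : univ ∉ 𝒜) :
    HasMonoCube n 𝒜 := by
  classical
  by_contra h
  have h2n := two_mul_le_of_mul_sub_one_add_two_le hn hα
  have coatom_notMem (z : α) : {z}ᶜ ∉ 𝒜 := fun hz =>
    h (hasMonoCube_of_univ_notMem_of_compl_singleton_mem hn hα h0 h1 hz)
  refine h (hasMonoCube_of_forall_card_le_two (by omega) hn fun s hs => ?_)
  by_contra hsmem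
  refine h (.of_compl (hasMonoCube_of_univ_mem_of_coatoms hn hα hs h1 hsmem (Y := sᶜ) ?_
    fun x hx => ⟨mem_compl.1 hx, coatom_notMem x⟩))
  rw [card_compl]
  omega

theorem hasMonoCube_of_le_card : HasMonoCube n 𝒜 := by
  by_cases h0 : ∅ ∈ 𝒜 <;> by_cases h1 : univ ∈ 𝒜
  · exact hasMonoCube_of_empty_mem_of_univ_mem hn hα h0 h1
  · exact hasMonoCube_of_empty_mem_of_univ_notMem hn hα h0 h1
  · exact .of_compl (hasMonoCube_of_empty_mem_of_univ_notMem hn hα h0 (not_not.2 h1))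
  · exact .of_compl (hasMonoCube_of_empty_mem_of_univ_mem hn hα h0 h1)

end Ramsey

section Bool

variable {n N : ℕ} {c : Finset (Fin N) → Bool}

theorem HasCube.hasRedCopy (h : HasCube n {S | c S = true}) : HasRedCopy n N c := by
  obtain ⟨f, hf⟩ := h
  exact ⟨f, f.injective, fun _ _ => f.le_iff_le.symm, hf⟩

theorem HasCube.hasBlueCopy (h : HasCube n {S | c S = true}ᶜ) : HasBlueCopy n N c := by
  obtain ⟨f, hf⟩ := h
  exact ⟨f, f.injective, fun _ _ => f.le_iff_le.symm, fun S => Bool.eq_false_of_not_eq_true (hf S)⟩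

end Bool

/-- If n ≥ 1 and N ≥ n² − n + 2, every 2-coloring of Q_N contains a red
copy of Q_n or a blue copy of Q_n, i.e. R(Q_n, Q_n) ≤ n² − n + 2. -/
theorem ramsey_Qn_Qn (n N : ℕ) (hn : 1 ≤ n) (hN : N ≥ n ^ 2 - n + 2)
    (c : Finset (Fin N) → Bool) :
    HasRedCopy n N c ∨ HasBlueCopy n N c := by
  suffices HasMonoCube n {S | c S = true} from this.imp HasCube.hasRedCopy HasCube.hasBlueCopy
  rcases hn.eq_or_lt with rfl | hn2
  · exact hasMonoCube_one (by rw [Fintype.card_fin]; omega)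
  · refine hasMonoCube_of_le_card hn2 ?_
    rw [Fintype.card_fin, Nat.mul_sub_one, ← sq]
    exact hN
end

section
/- For all integers n ≥ 1 and N with 16N ≥ 37n + 39, every 2-coloring of the Boolean lattice Q_N contains a red copy of Q_3 or a blue copy of Q_n. (Equivalently, R(Q_3, Q_n) ≤ (37/16)n + 39/16.) -/
/-!
The blue copies of `Q n` are built layer by layer: fix an `n`-element set `X` and a chain
`W₀ = V 0 ⊆ V 1 ⊆ ⋯ ⊆ W₁` outside `X`, and send `S ⊆ X` to a blue set between `S ∪ V i` and
`S ∪ V (i + 1)`, where `i` grows with `#S`. If there is no red `Q 3`, three new elements per step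
suffice to find such a blue set, and no elements at all have to be spent on the small (large) `S`
for which `S ∪ W₀` (`S ∪ W₁`) is known to be blue.

Let `A` be a smallest red set and `B` a largest red set above it. If `B \ A` is small, sets with
fewer than `#A` elements and sets above `A` with more than `#B` elements are blue, so few layers
need new elements. If `B \ A` is large, work in the interval from `A` to `B`, whose ends are red.
There, among the small nonempty red sets, three sets with private points would span a red `Q 3`
together with red sets found above their pairwise unions, so two points meet all small nonempty red
sets. By duality two points meet the complements of all large red sets. Keeping `X` away from these
four points makes the low and high layers blue again.

For a ground set of size `N`, the first method applies when `3 * (#B - #A) + 4 * n + 3 ≤ 4 * N` and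
the second when `7 * n + 11 ≤ 4 * (#B - #A)`; both fail only if `16 * N < 37 * n + 39`.
-/

open Finset

/-- The set `P` of elements of an ordered set contains a copy of the Boolean lattice `Q m`, given
by an order embedding. A coloring is encoded by the set `R` of red elements, so that monochromatic
copies are copies contained in `R` or in `Rᶜ`. -/
def ContainsCube {β : Type*} [LE β] (m : ℕ) (P : Set β) : Prop :=
  ∃ f : Finset (Fin m) ↪o β, ∀ S, f S ∈ P

theorem ContainsCube.hasRedCopy {m N : ℕ} {c : Finset (Fin N) → Bool}
    (h : ContainsCube m {S | c S = true}) : HasRedCopy m N c :=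
  let ⟨f, hf⟩ := h
  ⟨f, f.injective, fun _ _ => f.le_iff_le.symm, hf⟩

theorem ContainsCube.hasBlueCopy {m N : ℕ} {c : Finset (Fin N) → Bool}
    (h : ContainsCube m {S | c S = true}ᶜ) : HasBlueCopy m N c :=
  let ⟨f, hf⟩ := h
  ⟨f, f.injective, fun _ _ => f.le_iff_le.symm, fun S => Bool.eq_false_of_not_eq_true (hf S)⟩

theorem ContainsCube.of_preimage {β γ : Type*} [LE β] [LE γ] {m : ℕ} {P : Set γ} (e : β ↪o γ)
    (h : ContainsCube m (e ⁻¹' P)) : ContainsCube m P :=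
  let ⟨f, hf⟩ := h
  ⟨f.trans e, hf⟩

theorem ContainsCube.of_preimage_compl {β : Type*} [BooleanAlgebra β] {m : ℕ} {P : Set β}
    (h : ContainsCube m (compl ⁻¹' P)) : ContainsCube m P := by
  obtain ⟨f, hf⟩ := h
  refine ⟨OrderEmbedding.ofMapLEIff (fun S => (f Sᶜ)ᶜ) fun S T => ?_, fun S => hf Sᶜ⟩
  rw [compl_le_compl_iff_le, f.le_iff_le, compl_le_compl_iff_le]

theorem ContainsCube.of_monotone {β : Type*} [Preorder β] {m : ℕ} {P : Set β}
    {f : Finset (Fin m) → β} (hf : Monotone f) (hsep : ∀ i, ¬ f {i} ≤ f {i}ᶜ)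
    (hP : ∀ S, f S ∈ P) : ContainsCube m P := by
  refine ⟨OrderEmbedding.ofMapLEIff f fun S T => ⟨fun h i hi => ?_, fun h => hf h⟩, hP⟩
  by_contra hiT
  refine hsep i ?_
  calc f {i} ≤ f S := hf (singleton_subset_iff.2 hi)
    _ ≤ f T := h
    _ ≤ f {i}ᶜ := hf (by simpa [subset_compl_comm] using hiT)

theorem containsCube_three_of_crown {β : Type*} [Preorder β] {P : Set β} {b t : β}
    {x y : Fin 3 → β} (hb : b ∈ P) (ht : t ∈ P) (hx : ∀ i, x i ∈ P) (hy : ∀ i, y i ∈ P)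
    (hbx : ∀ i, b ≤ x i) (hxy : ∀ i j, i ≠ j → x i ≤ y j) (hyt : ∀ i, y i ≤ t)
    (hsep : ∀ i, ¬ x i ≤ y i) : ContainsCube 3 P := by
  have cases_fin3 : ∀ S : Finset (Fin 3),
      S = ∅ ∨ (∃ i, S = {i}) ∨ (∃ i, S = {i}ᶜ) ∨ S = univ := by decide
  -- A sum over a singleton selects its only element.
  let f : Finset (Fin 3) → β := fun S =>
    if S = ∅ then b else if S = univ then t else
      if #S = 1 then x (∑ i ∈ S, i) else y (∑ i ∈ Sᶜ, i)
  have f_singleton (i) : f {i} = x i := by fin_cases i <;> rfl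
  have f_compl_singleton (i) : f {i}ᶜ = y i := by fin_cases i <;> rfl
  have hby (i) : b ≤ y i := (hbx (i + 1)).trans (hxy _ _ (by simp))
  have hxt (i) : x i ≤ t := (hxy i (i + 1) (by simp)).trans (hyt _)
  have b_le (S) : b ≤ f S := by
    obtain rfl | ⟨i, rfl⟩ | ⟨i, rfl⟩ | rfl := cases_fin3 S
    exacts [le_rfl, f_singleton i ▸ hbx i, f_compl_singleton i ▸ hby i, (hby 0).trans (hyt 0)]
  have x_le {S i} (hi : i ∈ S) : x i ≤ f S := by
    obtain rfl | ⟨j, rfl⟩ | ⟨j, rfl⟩ | rfl := cases_fin3 S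
    · simp at hi
    · rw [f_singleton, mem_singleton.1 hi]
    · exact f_compl_singleton j ▸ hxy i j (by simpa using hi)
    · exact hxt i
  have hmono : Monotone f := fun S T hST => by
    obtain rfl | ⟨i, rfl⟩ | ⟨i, rfl⟩ | rfl := cases_fin3 S
    · exact b_le T
    · exact f_singleton i ▸ x_le (singleton_subset_iff.1 hST)
    · obtain hT | hT := subset_singleton_iff.1 (compl_le_of_compl_le hST)
      · exact (compl_eq_empty_iff T).1 hT ▸ f_compl_singleton i ▸ hyt i
      · exact (congrArg f (compl_eq_comm.1 hT)).le
    · rw [univ_subset_iff.1 hST]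
  refine .of_monotone hmono (fun i => f_singleton i ▸ f_compl_singleton i ▸ hsep i) fun S => ?_
  obtain rfl | ⟨i, rfl⟩ | ⟨i, rfl⟩ | rfl := cases_fin3 S
  exacts [hb, f_singleton i ▸ hx i, f_compl_singleton i ▸ hy i, ht]

section SubsetLattice

variable {α : Type*} {m n : ℕ}

/-- The order embedding `S ↦ A ∪ S` of the subsets of `β` into the subsets of `α`, for `β` embedded
in `α` outside of `A`. It identifies the subsets of `B \ A` with the interval from `A` to `B`. -/
def unionMapEmbedding [DecidableEq α] {β : Type*} (e : β ↪ α) (A : Finset α) (he : ∀ b, e b ∉ A) :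
    Finset β ↪o Finset α :=
  OrderEmbedding.ofMapLEIff (fun S => A ∪ S.map e) fun S T => by
    refine ⟨fun h b hb => ?_, fun h => union_subset_union_right (map_subset_map.2 h)⟩
    have hbT : e b ∈ A ∪ T.map e := h (mem_union_right _ (mem_map_of_mem e hb))
    simpa [he b] using hbT

theorem exists_notMem_between {P : Set (Finset α)} (h : ¬ ContainsCube m P) {A B : Finset α}
    (hAB : A ⊆ B) (hcard : #A + m ≤ #B) : ∃ Z ∉ P, A ⊆ Z ∧ Z ⊆ B := by
  classical
  by_contra! hcon
  have hm : Fintype.card (Fin m) ≤ Fintype.card ↥(B \ A) := by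
    rw [Fintype.card_fin, Fintype.card_coe, card_sdiff_of_subset hAB]
    omega
  obtain ⟨e⟩ := Function.Embedding.nonempty_of_card_le hm
  let g := e.trans (Function.Embedding.subtype _)
  have hg (i) : g i ∈ B \ A := (e i).2
  refine h ⟨unionMapEmbedding g A fun i => (mem_sdiff.1 (hg i)).2, fun S => ?_⟩
  by_contra hS
  refine hcon _ hS subset_union_left (union_subset hAB fun a ha => ?_)
  obtain ⟨i, -, rfl⟩ := mem_map.1 ha
  exact (mem_sdiff.1 (hg i)).1

theorem containsCube_of_inter_eq [DecidableEq α] {P : Set (Finset α)} {X : Finset α}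
    {f : Finset α → Finset α} (hmono : MonotoneOn f (Set.Iic X))
    (hinter : ∀ S ⊆ X, f S ∩ X = S) (hP : ∀ S ⊆ X, f S ∈ P) : ContainsCube #X P := by
  let e : Fin #X ↪ α := X.equivFin.symm.toEmbedding.trans (Function.Embedding.subtype _)
  have heX (S : Finset (Fin #X)) : S.map e ⊆ X := fun a ha => by
    obtain ⟨i, -, rfl⟩ := mem_map.1 ha
    exact (X.equivFin.symm i).2
  refine ⟨OrderEmbedding.ofMapLEIff (fun S => f (S.map e)) fun S T => ⟨fun h => ?_, fun h => ?_⟩,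
    fun S => hP _ (heX S)⟩
  · rw [← map_subset_map (f := e), ← hinter _ (heX S), ← hinter _ (heX T)]
    exact inter_subset_inter_right h
  · exact hmono (heX S) (heX T) (map_subset_map.2 h)

theorem containsCube_of_sandwich [DecidableEq α] {P : Set (Finset α)} {X : Finset α}
    {L U : ℕ → Finset α} (hUL : ∀ s t, s < t → U s ⊆ L t) (hXU : ∀ s, Disjoint X (U s))
    (h : ∀ S ⊆ X, ∃ Z ∈ P, S ∪ L #S ⊆ Z ∧ Z ⊆ S ∪ U #S) : ContainsCube #X P := by
  choose! f hfP hLf hfU using h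
  refine containsCube_of_inter_eq (f := f) (fun S hS T hT hST => ?_) (fun S hS => ?_) hfP
  · obtain rfl | hlt := eq_or_ssubset_of_subset hST
    · exact le_rfl
    · calc f S ⊆ S ∪ U #S := hfU S hS
        _ ⊆ T ∪ L #T := union_subset_union hST (hUL _ _ (card_lt_card hlt))
        _ ⊆ f T := hLf T hT
  · refine Subset.antisymm ?_ (subset_inter (subset_union_left.trans (hLf S hS)) hS)
    calc f S ∩ X ⊆ (S ∪ U #S) ∩ X := inter_subset_inter_right (hfU S hS)
      _ ⊆ S := by
        rw [union_inter_distrib_right, disjoint_iff_inter_eq_empty.1 (hXU _).symm, union_empty]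
        exact inter_subset_left

theorem exists_monotone_chain (m k : ℕ) {W₀ W₁ : Finset α} (hW : W₀ ⊆ W₁)
    (hcard : #W₀ + m * k ≤ #W₁) :
    ∃ V : ℕ → Finset α, Monotone V ∧ V 0 = W₀ ∧ (∀ i, V i ⊆ W₁) ∧
      ∀ i < k, #(V i) + m ≤ #(V (i + 1)) := by
  induction k generalizing W₀ with
  | zero => exact ⟨fun _ => W₀, monotone_const, rfl, fun _ => hW, by simp⟩
  | succ k ih =>
    rw [mul_add_one] at hcard
    obtain ⟨Z, hWZ, hZW, hZ⟩ := exists_subsuperset_card_eq hW (n := #W₀ + m) (by omega) (by omega)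
    obtain ⟨V, hmono, rfl, hVW, hV⟩ := ih hZW (by omega)
    refine ⟨fun | 0 => W₀ | i + 1 => V i, monotone_nat_of_le_succ ?_, rfl, ?_, ?_⟩
    · rintro (_ | i)
      exacts [hWZ, hmono i.le_succ]
    · rintro (_ | i)
      exacts [hW, hVW i]
    · rintro (_ | i) hi
      exacts [hZ.ge, hV i (by omega)]

theorem containsCube_compl_of_layers [DecidableEq α] {R : Set (Finset α)} (hR : ¬ ContainsCube m R)
    {X W₀ W₁ : Finset α} {k l : ℕ} (hW : W₀ ⊆ W₁) (hX : Disjoint X W₁)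
    (hcard : #W₀ + m * k ≤ #W₁) (hlow : ∀ S ⊆ X, #S < l → S ∪ W₀ ∉ R)
    (hhigh : ∀ S ⊆ X, l + k ≤ #S → S ∪ W₁ ∉ R) : ContainsCube #X Rᶜ := by
  obtain ⟨V, hmono, rfl, hVW, hV⟩ := exists_monotone_chain m k hW hcard
  -- Truncated subtraction makes both bounds equal to `V 0` below layer `l`.
  refine containsCube_of_sandwich (L := fun s => if s < l + k then V (s - l) else W₁)
    (U := fun s => if s < l + k then V (s + 1 - l) else W₁) (fun s t hst => ?_) (fun s => ?_)
    (fun S hS => ?_)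
  · split_ifs
    exacts [hmono (by omega), hVW _, by omega, subset_rfl]
  · split_ifs
    exacts [hX.mono_right (hVW _), hX]
  · rcases lt_or_ge #S (l + k) with hk | hk
    · simp only [if_pos hk]
      rcases lt_or_ge #S l with hl | hl
      · refine ⟨S ∪ V 0, hlow S hS hl, ?_, ?_⟩
        · rw [Nat.sub_eq_zero_of_le hl.le]
        · rw [Nat.sub_eq_zero_of_le hl]
      · have hdisj (i) : Disjoint S (V i) := disjoint_of_subset_left hS (hX.mono_right (hVW i))
        refine exists_notMem_between hR (union_subset_union_right (hmono (by omega))) ?_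
        rw [card_union_of_disjoint (hdisj _), card_union_of_disjoint (hdisj _), add_assoc,
          Nat.sub_add_comm hl]
        exact Nat.add_le_add_left (hV _ (by omega)) _
    · simp only [if_neg hk.not_gt]
      exact ⟨S ∪ W₁, hhigh S hS hk, subset_rfl, subset_rfl⟩

/-- `P` meets every nonempty member of `R` with at most `r` elements. For `R` the family of red
sets, such a `P` avoiding a set `X` certifies that small subsets of `X` are blue. -/
def MeetsSmall (R : Set (Finset α)) (r : ℕ) (P : Finset α) : Prop :=
  ∀ S ∈ R, S.Nonempty → #S ≤ r → ¬ Disjoint S P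

theorem exists_transversal_with_private_sets [Finite α] [DecidableEq α] {F : Set (Finset α)}
    (hF : ∀ S ∈ F, S.Nonempty) :
    ∃ P : Finset α, (∀ S ∈ F, ¬ Disjoint S P) ∧ ∀ p ∈ P, ∃ S ∈ F, S ∩ P = {p} := by
  cases nonempty_fintype α
  have huniv : ∀ S ∈ F, ¬ Disjoint S univ := fun S hS =>
    not_disjoint_iff_nonempty_inter.2 (by rw [inter_univ]; exact hF S hS)
  obtain ⟨P, hP⟩ := (Set.toFinite {P | ∀ S ∈ F, ¬ Disjoint S P}).exists_minimal ⟨univ, huniv⟩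
  refine ⟨P, hP.prop, fun p hp => ?_⟩
  have herase := hP.not_prop_of_lt (erase_ssubset hp)
  simp only [Set.mem_ofPred_eq, not_forall, not_not] at herase
  obtain ⟨S, hSF, hS⟩ := herase
  have hsub : S ∩ P ⊆ {p} := fun q hq => by
    by_contra hqp
    obtain ⟨hqS, hqP⟩ := mem_inter.1 hq
    exact disjoint_left.1 hS hqS (mem_erase.2 ⟨by simpa using hqp, hqP⟩)
  have hne : (S ∩ P).Nonempty := not_disjoint_iff_nonempty_inter.1 (hP.prop S hSF)
  exact ⟨S, hSF, (hne.subset_singleton_iff).1 hsub⟩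

theorem containsCube_three_of_private_points [Fintype α] {R : Set (Finset α)}
    (hblue : ¬ ContainsCube n Rᶜ) (hbot : ∅ ∈ R) (htop : univ ∈ R) {r : ℕ}
    (hr : 2 * r + 1 + n ≤ Fintype.card α) {p : Fin 3 → α} {x : Fin 3 → Finset α}
    (hx : ∀ i, x i ∈ R) (hxr : ∀ i, #(x i) ≤ r) (hpx : ∀ i j, p i ∈ x j ↔ i = j) :
    ContainsCube 3 R := by
  classical
  have hy (i) : ∃ y ∈ R, (∀ j, j ≠ i → x j ⊆ y) ∧ p i ∉ y := by
    have hsub : (univ.erase i).biUnion x ⊆ univ.erase (p i) := by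
      simp +contextual [subset_erase, hpx, eq_comm]
    have hcard : #((univ.erase i).biUnion x) + n ≤ #(univ.erase (p i)) := by
      have := card_biUnion_le_card_mul (univ.erase i) x r fun j _ => hxr j
      simp only [card_erase_of_mem (mem_univ _), card_univ, Fintype.card_fin] at this ⊢
      omega
    obtain ⟨y, hyR, hxy, hyp⟩ := exists_notMem_between hblue hsub hcard
    exact ⟨y, not_not.1 hyR, fun j hj => (subset_biUnion_of_mem x (by simpa using hj)).trans hxy,
      (subset_erase.1 hyp).2⟩
  choose y hyR hxy hpy using hy
  exact containsCube_three_of_crown hbot htop hx hyR (fun _ => empty_subset _)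
    (fun i j hij => hxy j i hij) (fun _ => subset_univ _)
    fun i hi => hpy i (hi ((hpx i i).2 rfl))

theorem exists_meetsSmall_card_le_two [Fintype α] {R : Set (Finset α)} (hred : ¬ ContainsCube 3 R)
    (hblue : ¬ ContainsCube n Rᶜ) (hbot : ∅ ∈ R) (htop : univ ∈ R) {r : ℕ}
    (hr : 2 * r + 1 + n ≤ Fintype.card α) : ∃ P : Finset α, #P ≤ 2 ∧ MeetsSmall R r P := by
  classical
  obtain ⟨P, hmeets, hprivate⟩ := exists_transversal_with_private_sets
    (F := {S | S ∈ R ∧ S.Nonempty ∧ #S ≤ r}) fun S hS => hS.2.1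
  refine ⟨P, ?_, fun S hSR hS hSr => hmeets S ⟨hSR, hS, hSr⟩⟩
  by_contra! hP
  obtain ⟨p⟩ := Function.Embedding.nonempty_of_card_le (α := Fin 3) (β := P)
    (by simpa using hP.nat_succ_le)
  choose x hx hxp using fun i => hprivate (p i) (p i).2
  refine hred (containsCube_three_of_private_points hblue hbot htop hr (p := fun i => p i)
    (fun i => (hx i).1) (fun i => (hx i).2.2) fun i j => ?_)
  calc (p i : α) ∈ x j ↔ (p i : α) ∈ x j ∩ P := by simp
    _ ↔ i = j := by rw [hxp, mem_singleton, Subtype.coe_inj, p.injective.eq_iff]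

theorem exists_disjoint_card_eq_with_spare_points [Fintype α] {P Q : Finset α}
    (hP : #P + n + 1 ≤ Fintype.card α) (hQ : #Q + n + 2 ≤ Fintype.card α)
    (hPQ : #P + #Q + n ≤ Fintype.card α) :
    ∃ (X : Finset α) (p q : α), #X = n ∧ p ≠ q ∧
      (Disjoint X P ∧ p ∉ X ∧ p ∉ P) ∧ (Disjoint X Q ∧ q ∉ X ∧ q ∉ Q) := by
  classical
  have hfree : n ≤ #(P ∪ Q)ᶜ := by
    rw [card_compl]
    have := card_union_le P Q
    omega
  obtain ⟨X, hX, hXn⟩ := exists_subset_card_eq hfree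
  have hp : #(P ∪ X) < Fintype.card α := (card_union_le P X).trans_lt (by omega)
  obtain ⟨p, hp⟩ := exists_mem_notMem_of_card_lt_card (hp.trans_eq card_univ.symm)
  have hq : #(insert p (Q ∪ X)) < Fintype.card α := by
    have := card_insert_le p (Q ∪ X)
    have := card_union_le Q X
    omega
  obtain ⟨q, hq⟩ := exists_mem_notMem_of_card_lt_card (hq.trans_eq card_univ.symm)
  rw [compl_union, subset_inter_iff, subset_compl_iff_disjoint_right,
    subset_compl_iff_disjoint_right] at hX
  simp only [mem_univ, true_and, mem_insert, mem_union, not_or] at hp hq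
  exact ⟨X, p, q, hXn, Ne.symm hq.1, ⟨hX.1, hp.2, hp.1⟩, hX.2, hq.2.2, hq.2.1⟩

theorem containsCube_compl_of_meetsSmall [Fintype α] [DecidableEq α] {R : Set (Finset α)}
    (hR : ¬ ContainsCube m R) {P Q : Finset α} {r k : ℕ} (hP : MeetsSmall R r P)
    (hQ : MeetsSmall (compl ⁻¹' R) r Q) (hPn : #P + n + 1 ≤ Fintype.card α)
    (hQn : #Q + n + 2 ≤ Fintype.card α) (hPQn : #P + #Q + n ≤ Fintype.card α)
    (hr : n + 1 ≤ 2 * r + k) (hk : m * k + n + 2 ≤ Fintype.card α) : ContainsCube n Rᶜ := by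
  obtain ⟨X, p, q, rfl, hpq, ⟨hXP, hpX, hpP⟩, hXQ, hqX, hqQ⟩ :=
    exists_disjoint_card_eq_with_spare_points hPn hQn hPQn
  refine containsCube_compl_of_layers (W₀ := {p}) (W₁ := (insert q X)ᶜ) (k := k) (l := r) hR
    ?_ ?_ ?_ (fun S hS hSr hSR => ?_) fun S hS hSr hSR => ?_
  · simp [hpq, hpX]
  · exact disjoint_compl_right.mono_left (subset_insert q X)
  · rw [card_singleton, card_compl, card_insert_of_notMem hqX]
    omega
  · refine hP _ hSR ⟨p, by simp⟩ ?_ ?_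
    · have := card_union_le S {p}
      rw [card_singleton] at this
      omega
    · exact disjoint_union_left.2 ⟨disjoint_of_subset_left hS hXP, disjoint_singleton_left.2 hpP⟩
  · have hcompl : (S ∪ (insert q X)ᶜ)ᶜ = insert q (X \ S) := by
      rw [compl_union, compl_compl, inter_comm, ← sdiff_eq_inter_compl,
        insert_sdiff_of_notMem _ fun hqS => hqX (hS hqS)]
    refine hQ (insert q (X \ S)) ?_ (insert_nonempty _ _) ?_ ?_
    · rwa [← hcompl, Set.mem_preimage, compl_compl]
    · have := card_le_card hS
      have := card_insert_le q (X \ S)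
      rw [card_sdiff_of_subset hS] at this
      omega
    · exact disjoint_insert_left.2 ⟨hqQ, disjoint_of_subset_left sdiff_subset hXQ⟩

theorem containsCube_three_or_compl_of_ends_mem [Fintype α] (hn : 1 ≤ n) {R : Set (Finset α)}
    (hbot : ∅ ∈ R) (htop : univ ∈ R) (hcard : 7 * n + 11 ≤ 4 * Fintype.card α) :
    ContainsCube 3 R ∨ ContainsCube n Rᶜ := by
  classical
  by_contra! ⟨hred, hblue⟩
  obtain ⟨r, hr, hr'⟩ :
      ∃ r, 2 * r + 1 + n ≤ Fintype.card α ∧ Fintype.card α ≤ 2 * r + 2 + n :=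
    ⟨(Fintype.card α - n - 1) / 2, by omega, by omega⟩
  obtain ⟨P, hP, hPR⟩ := exists_meetsSmall_card_le_two hred hblue hbot htop hr
  obtain ⟨Q, hQ, hQR⟩ := exists_meetsSmall_card_le_two (n := n) (R := compl ⁻¹' R)
    (mt .of_preimage_compl hred) (mt (.of_preimage_compl (P := Rᶜ)) hblue)
    (by simpa using htop) (by simpa using hbot) hr
  exact hblue (containsCube_compl_of_meetsSmall hred hPR hQR (k := n + 1 - 2 * r) (by omega)
    (by omega) (by omega) (by omega) (by omega))

theorem containsCube_three_or_compl_of_interval (hn : 1 ≤ n) {R : Set (Finset α)}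
    {A B : Finset α} (hAB : A ⊆ B) (hA : A ∈ R) (hB : B ∈ R)
    (hcard : 7 * n + 11 + 4 * #A ≤ 4 * #B) : ContainsCube 3 R ∨ ContainsCube n Rᶜ := by
  classical
  let e := unionMapEmbedding (Function.Embedding.subtype (· ∈ B \ A)) A
    fun b => (mem_sdiff.1 b.2).2
  have he_empty : e ∅ = A := by simp [e, unionMapEmbedding]
  have he_univ : e univ = B := by
    simpa [e, unionMapEmbedding, ← attach_eq_univ, attach_map_val] using hAB
  refine (containsCube_three_or_compl_of_ends_mem hn (R := e ⁻¹' R) ?_ ?_ ?_).imp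
    (.of_preimage e) (.of_preimage e)
  · rwa [Set.mem_preimage, he_empty]
  · rwa [Set.mem_preimage, he_univ]
  · rw [Fintype.card_coe, card_sdiff_of_subset hAB]
    omega

theorem containsCube_compl_of_card_bounds [Fintype α] {R : Set (Finset α)} (hR : ¬ ContainsCube m R)
    {A : Finset α} {a b k : ℕ} (hA : #A + n ≤ Fintype.card α) (hlow : ∀ S ∈ R, a ≤ #S)
    (hhigh : ∀ S ∈ R, A ⊆ S → #S ≤ b) (hk : b + n + 1 ≤ Fintype.card α + a + k)
    (hm : m * k + n ≤ Fintype.card α) : ContainsCube n Rᶜ := by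
  classical
  have hfree : n ≤ #Aᶜ := by
    rw [card_compl]
    omega
  obtain ⟨X, hXA, rfl⟩ := exists_subset_card_eq hfree
  have hXc : #Xᶜ = Fintype.card α - #X := card_compl X
  refine containsCube_compl_of_layers hR (W₀ := ∅) (W₁ := Xᶜ) (k := k) (l := a)
    (empty_subset _) disjoint_compl_right ?_ (fun S _ hSa hSR => ?_) fun S hSX hSa hSR => ?_
  · rw [card_empty]
    omega
  · have := hlow _ hSR
    rw [union_empty] at this
    omega
  · have := hhigh _ hSR ((subset_compl_comm.1 hXA).trans subset_union_right)
    rw [card_union_of_disjoint (disjoint_of_subset_left hSX disjoint_compl_right)] at this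
    omega

theorem exists_mem_card_le_of_not_containsCube_compl [Fintype α] {R : Set (Finset α)}
    (hblue : ¬ ContainsCube n Rᶜ) (hn : n ≤ Fintype.card α) : ∃ S ∈ R, #S ≤ n := by
  classical
  obtain ⟨X, -, hX⟩ := exists_subset_card_eq (hn.trans_eq card_univ.symm)
  obtain ⟨S, hS, -, hSX⟩ := exists_notMem_between hblue (empty_subset X) (by simp [hX])
  exact ⟨S, not_not.1 hS, hX ▸ card_le_card hSX⟩

theorem ramsey_Q3_Qn_general [Fintype α] (hn : 1 ≤ n) (hcard : 37 * n + 39 ≤ 16 * Fintype.card α)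
    (R : Set (Finset α)) : ContainsCube 3 R ∨ ContainsCube n Rᶜ := by
  by_contra! ⟨hred, hblue⟩
  obtain ⟨S, hSR, hSn⟩ := exists_mem_card_le_of_not_containsCube_compl hblue (by omega)
  obtain ⟨A, hAR, hAmin⟩ := R.exists_min_image card R.toFinite ⟨S, hSR⟩
  obtain ⟨B, ⟨hBR, hAB⟩, hBmax⟩ :=
    {T ∈ R | A ⊆ T}.exists_max_image card (Set.toFinite _) ⟨A, hAR, subset_rfl⟩
  have hAn : #A ≤ n := (hAmin S hSR).trans hSn
  by_cases hlarge : 7 * n + 11 + 4 * #A ≤ 4 * #B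
  · exact (containsCube_three_or_compl_of_interval hn hAB hAR hBR hlarge).elim hred hblue
  · exact hblue (containsCube_compl_of_card_bounds hred (k := #B + n + 1 - Fintype.card α - #A)
      (by omega) hAmin (fun T hT hAT => hBmax T ⟨hT, hAT⟩) (by omega) (by omega))

end SubsetLattice

/-- If n ≥ 1 and 16N ≥ 37n + 39, every 2-coloring of Q_N contains a red
copy of Q_3 or a blue copy of Q_n, i.e. R(Q_3, Q_n) ≤ (37/16)n + 39/16. -/
theorem ramsey_Q3_Qn (n N : ℕ) (hn : 1 ≤ n) (hN : 16 * N ≥ 37 * n + 39)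
    (c : Finset (Fin N) → Bool) :
    HasRedCopy 3 N c ∨ HasBlueCopy n N c :=
  (ramsey_Q3_Qn_general hn (by simpa using hN) {S | c S = true}).imp
    ContainsCube.hasRedCopy ContainsCube.hasBlueCopy
end

section
/- For all integers n ≥ m ≥ 4 and every integer N satisfying (N : ℝ) ≥ (m − 2 + (9m − 9)/((2m − 3)(m + 1)))·n + m + 3, every 2-coloring of the Boolean lattice Q_N contains a red copy of Q_m or a blue copy of Q_n. (Equivalently, R(Q_m, Q_n) ≤ (m − 2 + (9m − 9)/((2m − 3)(m + 1)))n + m + 3 for all n ≥ m ≥ 4.) -/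
/-!
Suppose there is no red `Q_m` and no blue `Q_n`; then every interval of `Q_N` with `n` free elements
contains a red set. Let `F` be a smallest red set and `D` a smallest set disjoint from `F` with red
complement. This provides `#F + #D` blue layers, and building the remaining layers of a blue `Q_n`
out of the absence of a red `Q_m` would succeed if `#F + #D` were large, so it is small.

A red `Q_m` is then sought between `F` and `Dᶜ`. Each of its atoms is `F` with one element `x` and
at most `L` extra elements added, and dually each coatom is `Dᶜ` with `x` and at most `L'` extra
elements removed. The costs `L` and `L'` are chosen to suffice for all but one `x` each, whereas
anything smaller fails for two; distinct failing elements at the bottom and at the top give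
`L + L'` blue layers, hence by the same count a bound on `m * (L + L')`. The middle layers are
chosen red one after the other along a chain of free elements, each layer being allotted `n` steps
of the chain that avoid the extra elements of its sets. This fits if `L` or `L'` is small. Otherwise
both are moderate by the bound on their sum, and a layer or two at either end can absorb the extra
elements.
-/

section

open Finset

variable {α : Type*}

/-- The set family `R` contains a copy of the Boolean lattice `Q_k`. A red/blue colouring is encoded
throughout by its family `R` of red sets, so that blue copies are copies in `Rᶜ`. -/
def HasCopy (R : Set (Finset α)) (k : ℕ) : Prop :=
  ∃ f : Finset (Fin k) ↪o Finset α, ∀ S, f S ∈ R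

theorem HasCopy.of_Icc {R : Set (Finset α)} {X₀ : Finset α} (lo hi : Finset α → Finset α)
    (hmem : ∀ S ⊆ X₀, (Set.Icc (lo S) (hi S) ∩ R).Nonempty)
    (hlo : ∀ S ⊆ X₀, S ⊆ lo S) (hhi : ∀ S ⊆ X₀, ∀ x ∈ X₀, x ∈ hi S → x ∈ S)
    (hmono : ∀ S S', S ⊂ S' → S' ⊆ X₀ → hi S ⊆ lo S') : HasCopy R #X₀ := by
  choose! g hg hgR using hmem
  let e : Fin #X₀ ↪ α := X₀.equivFin.symm.toEmbedding.trans (.subtype _)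
  have he (S : Finset (Fin #X₀)) : S.map e ⊆ X₀ := by
    intro x hx
    obtain ⟨i, -, rfl⟩ := mem_map.1 hx
    exact (X₀.equivFin.symm i).2
  refine ⟨.ofMapLEIff (fun S ↦ g (S.map e)) fun S T ↦ ⟨fun hST ↦ ?_, fun hST ↦ ?_⟩,
    fun S ↦ hgR _ (he S)⟩
  · refine map_subset_map.1 fun x hx ↦ hhi _ (he T) x (he S hx) ?_
    exact (hg _ (he T)).2 (hST ((hg _ (he S)).1 (hlo _ (he S) hx)))
  · obtain rfl | hST := eq_or_ssubset_of_subset hST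
    · exact le_rfl
    · exact (hg _ (he S)).2.trans
        ((hmono _ _ (map_ssubset_map.2 hST) (he T)).trans (hg _ (he T)).1)

theorem Icc_inter_nonempty_of_not_hasCopy_compl [DecidableEq α] {R : Set (Finset α)} {n : ℕ}
    (hR : ¬HasCopy Rᶜ n) {A B : Finset α} (hAB : A ⊆ B) (hn : n ≤ #(B \ A)) :
    (Set.Icc A B ∩ R).Nonempty := by
  by_contra hempty
  obtain ⟨X₀, hX₀, rfl⟩ := exists_subset_card_eq hn
  refine hR (.of_Icc (A ∪ ·) (A ∪ ·) (fun S hS ↦ ⟨A ∪ S, ⟨le_rfl, le_rfl⟩, fun hSR ↦ ?_⟩)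
    (fun S _ ↦ subset_union_right) (fun S _ x hx hxS ↦ ?_)
    fun S S' hSS' _ ↦ union_subset_union_right hSS'.subset)
  · exact hempty ⟨A ∪ S, ⟨subset_union_left,
      union_subset hAB ((hS.trans hX₀).trans sdiff_subset)⟩, hSR⟩
  · exact (mem_union.1 hxS).resolve_left (mem_sdiff.1 (hX₀ hx)).2

theorem exists_union_mem_of_not_hasCopy_compl [DecidableEq α] {R : Set (Finset α)} {n : ℕ}
    (hR : ¬HasCopy Rᶜ n) {A W : Finset α} (hAW : Disjoint A W) (hW : n ≤ #W) :
    ∃ T ⊆ W, A ∪ T ∈ R := by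
  obtain ⟨C, ⟨hAC, hCW⟩, hCR⟩ := Icc_inter_nonempty_of_not_hasCopy_compl hR
    (subset_union_left : A ⊆ A ∪ W) (by rwa [union_sdiff_cancel_left hAW])
  exact ⟨C \ A, sdiff_le_iff.2 hCW, by rwa [union_sdiff_of_subset hAC]⟩

theorem hasCopy_preimage_compl [Fintype α] [DecidableEq α] {R : Set (Finset α)} {k : ℕ} :
    HasCopy (compl ⁻¹' R) k ↔ HasCopy R k := by
  have dual {R : Set (Finset α)} : HasCopy R k → HasCopy (compl ⁻¹' R) k := fun ⟨f, hf⟩ ↦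
    ⟨.ofMapLEIff (fun S ↦ (f Sᶜ)ᶜ) fun S T ↦ by simp,
      fun S ↦ by simpa using hf Sᶜ⟩
  exact ⟨fun h ↦ by simpa [Set.preimage_preimage] using dual h, dual⟩

theorem exists_chain_through {U V Y : Finset α} (hUV : U ⊆ V) (hVY : V ⊆ Y) :
    ∃ P : ℕ → Finset α, Monotone P ∧ (∀ j, P j ⊆ Y) ∧ (∀ j, #(P j) = min j #Y) ∧
      P #U = U ∧ P #V = V := by
  classical
  let l := U.toList ++ (V \ U).toList ++ (Y \ V).toList
  have hnodup : l.Nodup := by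
    simp only [l, List.nodup_append, nodup_toList, mem_toList, List.mem_append]
    grind
  have hl : l.toFinset = Y := by
    ext x
    simp only [l, List.mem_toFinset, mem_toList, List.mem_append]
    grind
  have hlength : l.length = #Y := by rw [← hl, List.toFinset_card_of_nodup hnodup]
  have hV : #V = (U.toList ++ (V \ U).toList).length := by
    simp [← card_sdiff_add_card_eq_card hUV, add_comm]
  refine ⟨fun j ↦ (l.take j).toFinset, fun i j hij ↦ ?_, fun j ↦ ?_, fun j ↦ ?_, ?_, ?_⟩
  · exact fun x hx ↦ List.mem_toFinset.2 (List.take_subset_take_left l hij (List.mem_toFinset.1 hx))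
  · exact fun x hx ↦ hl ▸ List.mem_toFinset.2 (List.mem_of_mem_take (List.mem_toFinset.1 hx))
  · rw [List.toFinset_card_of_nodup (hnodup.sublist (List.take_sublist _ _)), List.length_take,
      hlength]
  · simp [l]
  · dsimp only [l]
    rw [hV, List.take_left, List.toFinset_append, toList_toFinset, toList_toFinset,
      union_sdiff_of_subset hUV]

theorem card_inter_le_ite [DecidableEq α] {A B : Finset α} {p : Prop} [Decidable p] {k : ℕ}
    (hp : p → Disjoint A B) (hB : #B ≤ k) : #(A ∩ B) ≤ if p then 0 else k := by
  split_ifs with h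
  · rw [disjoint_iff_inter_eq_empty.1 (hp h), card_empty]
  · exact (card_le_card inter_subset_right).trans hB

theorem card_le_card_sdiff_union_add [DecidableEq α] (A B C : Finset α) :
    #A ≤ #(A \ (B ∪ C)) + #(A ∩ B) + #(A ∩ C) := by
  rw [← card_sdiff_add_card_inter A (B ∪ C), inter_union_distrib_left, add_assoc]
  gcongr
  exact card_union_le _ _

/-- Raw material for a copy of `Q_k` in `R` indexed by the subsets of `X₀`, where `k = #X₀`. The
lowest `ℓ` layers are realised by the sets `F ∪ S ∪ ⋃ x ∈ S, E x` and the highest `ℓ'` layers by the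
complements of the sets `D ∪ S ∪ ⋃ x ∈ S, E' x`. -/
structure Scaffold [Fintype α] [DecidableEq α] (R : Set (Finset α)) (F D X₀ : Finset α)
    (E E' : α → Finset α) (ℓ ℓ' : ℕ) : Prop where
  disjoint_bot_top : Disjoint F D
  disjoint_bot_base : Disjoint F X₀
  disjoint_top_base : Disjoint D X₀
  lower_subset : ∀ x ∈ X₀, E x ⊆ (F ∪ D ∪ X₀)ᶜ
  upper_subset : ∀ x ∈ X₀, E' x ⊆ (F ∪ D ∪ X₀)ᶜ
  disjoint_lower_upper : ∀ x ∈ X₀, ∀ y ∈ X₀, Disjoint (E x) (E' y)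
  lower_mem : ∀ S ⊆ X₀, #S < ℓ → F ∪ S ∪ S.biUnion E ∈ R
  upper_mem : ∀ S ⊆ X₀, #S < ℓ' → (D ∪ S ∪ S.biUnion E')ᶜ ∈ R

/-- The image of `S ⊆ X₀` prescribed by a scaffold once the elements of `C` have been added. It
interpolates between the lower layers (`C = ∅`) and the upper layers (`C = (F ∪ D ∪ X₀)ᶜ`). -/
def interpolant [DecidableEq α] (F X₀ : Finset α) (E E' : α → Finset α) (C S : Finset α) :
    Finset α :=
  F ∪ S ∪ (C \ (X₀ \ S).biUnion E') ∪ S.biUnion E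

theorem interpolant_empty [DecidableEq α] (F X₀ : Finset α) (E E' : α → Finset α) (S : Finset α) :
    interpolant F X₀ E E' ∅ S = F ∪ S ∪ S.biUnion E := by
  simp only [interpolant, empty_sdiff, union_empty]

theorem interpolant_mono [DecidableEq α] (F X₀ : Finset α) (E E' : α → Finset α)
    {C C' S S' : Finset α} (hC : C ⊆ C') (hS : S ⊆ S') :
    interpolant F X₀ E E' C S ⊆ interpolant F X₀ E E' C' S' := by
  unfold interpolant
  gcongr

theorem sdiff_subset_interpolant_sdiff [Fintype α] [DecidableEq α] {F D X₀ : Finset α}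
    {E E' : α → Finset α} {C C' S : Finset α}
    (hC' : C' ⊆ (F ∪ D ∪ X₀)ᶜ) (hS : S ⊆ X₀) :
    (C' \ C) \ (S.biUnion E ∪ (X₀ \ S).biUnion E') ⊆
      interpolant F X₀ E E' C' S \ interpolant F X₀ E E' C S := by
  intro x hx
  have hCx := @hC' x
  have hSx := @hS x
  simp only [interpolant, mem_union, mem_sdiff, mem_compl] at *
  tauto

namespace Scaffold

variable [Fintype α] [DecidableEq α] {R : Set (Finset α)} {F D X₀ : Finset α}
  {E E' : α → Finset α} {ℓ ℓ' n : ℕ}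

theorem biUnion_lower_subset (h : Scaffold R F D X₀ E E' ℓ ℓ') {S : Finset α} (hS : S ⊆ X₀) :
    S.biUnion E ⊆ (F ∪ D ∪ X₀)ᶜ :=
  biUnion_subset.2 fun x hx ↦ h.lower_subset x (hS hx)

theorem biUnion_upper_subset (h : Scaffold R F D X₀ E E' ℓ ℓ') {S : Finset α} (hS : S ⊆ X₀) :
    S.biUnion E' ⊆ (F ∪ D ∪ X₀)ᶜ :=
  biUnion_subset.2 fun x hx ↦ h.upper_subset x (hS hx)

theorem disjoint_biUnion (h : Scaffold R F D X₀ E E' ℓ ℓ') {S S' : Finset α} (hS : S ⊆ X₀)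
    (hS' : S' ⊆ X₀) : Disjoint (S.biUnion E) (S'.biUnion E') := by
  simp only [disjoint_biUnion_left, disjoint_biUnion_right]
  exact fun y hy x hx ↦ h.disjoint_lower_upper x (hS hx) y (hS' hy)

theorem interpolant_free (h : Scaffold R F D X₀ E E' ℓ ℓ') {S : Finset α} (hS : S ⊆ X₀) :
    interpolant F X₀ E E' (F ∪ D ∪ X₀)ᶜ S = (D ∪ (X₀ \ S) ∪ (X₀ \ S).biUnion E')ᶜ := by
  ext x
  have hlower : x ∈ S.biUnion E → _ := (h.biUnion_lower_subset hS ·)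
  have hupper : x ∈ (X₀ \ S).biUnion E' → _ := (h.biUnion_upper_subset sdiff_subset ·)
  have hdisj : x ∈ S.biUnion E → x ∉ (X₀ \ S).biUnion E' :=
    (disjoint_left.1 (h.disjoint_biUnion hS sdiff_subset) ·)
  have hFD : x ∈ F → x ∉ D := (disjoint_left.1 h.disjoint_bot_top ·)
  have hFX : x ∈ F → x ∉ X₀ := (disjoint_left.1 h.disjoint_bot_base ·)
  have hDX : x ∈ D → x ∉ X₀ := (disjoint_left.1 h.disjoint_top_base ·)
  have hSx := @hS x
  simp only [interpolant, mem_union, mem_sdiff, mem_compl] at *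
  grind

theorem mem_of_mem_interpolant (h : Scaffold R F D X₀ E E' ℓ ℓ') {C S : Finset α} {x : α}
    (hC : C ⊆ (F ∪ D ∪ X₀)ᶜ) (hS : S ⊆ X₀) (hx : x ∈ X₀) (hxS : x ∈ interpolant F X₀ E E' C S) :
    x ∈ S := by
  have hlower : x ∈ S.biUnion E → _ := (h.biUnion_lower_subset hS ·)
  have hFX := disjoint_right.1 h.disjoint_bot_base hx
  have hCx := @hC x
  simp only [interpolant, mem_union, mem_sdiff, mem_compl] at *
  tauto

theorem hasCopy_of_chain (h : Scaffold R F D X₀ E E' ℓ ℓ') (hR : ¬HasCopy Rᶜ n)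
    {C : ℕ → Finset α} (hC : Monotone C) (hCfree : ∀ j, C j ⊆ (F ∪ D ∪ X₀)ᶜ) (hC₀ : C 0 = ∅)
    (hCtop : ∀ j, 0 < j → #X₀ + 1 < ℓ + j + ℓ' → C j = (F ∪ D ∪ X₀)ᶜ)
    (hroom : ∀ S ⊆ X₀, ∀ j, #S = ℓ + j → ℓ + j + ℓ' ≤ #X₀ →
      n ≤ #((C (j + 1) \ C j) \ (S.biUnion E ∪ (X₀ \ S).biUnion E'))) :
    HasCopy R #X₀ := by
  refine .of_Icc (fun S ↦ interpolant F X₀ E E' (C (#S - ℓ)) S)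
    (fun S ↦ interpolant F X₀ E E' (C (#S + 1 - ℓ)) S) (fun S hS ↦ ?_)
    (fun S _ ↦ ?_) (fun S hS x ↦ h.mem_of_mem_interpolant (hCfree _) hS)
    fun S S' hSS' _ ↦ ?_
  · have hmono : interpolant F X₀ E E' (C (#S - ℓ)) S ⊆ interpolant F X₀ E E' (C (#S + 1 - ℓ)) S :=
      interpolant_mono _ _ _ _ (hC (by lia)) subset_rfl
    obtain hlow | hlow := lt_or_ge #S ℓ
    · refine ⟨_, ⟨le_rfl, hmono⟩, ?_⟩
      rw [Nat.sub_eq_zero_of_le hlow.le, hC₀, interpolant_empty]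
      exact h.lower_mem S hS hlow
    obtain hup | hup := lt_or_ge (#X₀ - #S) ℓ'
    · refine ⟨_, ⟨hmono, le_rfl⟩, ?_⟩
      have hle := card_le_card hS
      rw [hCtop _ (by lia) (by lia), h.interpolant_free hS]
      exact h.upper_mem _ sdiff_subset (by rwa [card_sdiff_of_subset hS])
    obtain ⟨j, hj⟩ := Nat.exists_eq_add_of_le hlow
    have hle := card_le_card hS
    refine Icc_inter_nonempty_of_not_hasCopy_compl hR hmono
      ((hroom S hS j hj ?_).trans (card_le_card ?_))
    · by_cases hℓ' : ℓ' = 0 <;> lia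
    · rw [show #S + 1 - ℓ = j + 1 by lia, show #S - ℓ = j by lia]
      exact sdiff_subset_interpolant_sdiff (hCfree _) hS
  · exact fun x hx ↦ by simp [interpolant, hx]
  · have hlt := card_lt_card hSS'
    exact interpolant_mono _ _ _ _ (hC (by lia)) hSS'.subset

theorem hasCopy_of_cuts (h : Scaffold R F D X₀ E E' ℓ ℓ') (hR : ¬HasCopy Rᶜ n)
    {κ κ' cut : ℕ → ℕ} (hκ : ∀ S ⊆ X₀, #(S.biUnion E) ≤ κ #S)
    (hκ' : ∀ S ⊆ X₀, #(S.biUnion E') ≤ κ' #S) (hcut₀ : cut 0 = 0)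
    (hcut_le : ∀ j, cut j ≤ #(F ∪ D ∪ X₀)ᶜ)
    (hcut_top : ∀ j, 0 < j → #X₀ + 1 < ℓ + j + ℓ' → #(F ∪ D ∪ X₀)ᶜ ≤ cut j)
    (hgap : ∀ j, ℓ + j + ℓ' ≤ #X₀ →
      n + cut j + (if κ #X₀ ≤ cut j then 0 else κ (ℓ + j)) +
        (if cut (j + 1) + κ' #X₀ ≤ #(F ∪ D ∪ X₀)ᶜ then 0 else κ' (#X₀ - (ℓ + j))) ≤
          cut (j + 1)) :
    HasCopy R #X₀ := by
  have hcut : Monotone cut := monotone_nat_of_le_succ fun j ↦ by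
    obtain hj | hj := le_or_gt (ℓ + j + ℓ') #X₀
    · exact le_trans (by lia) (hgap j hj)
    · exact (hcut_le j).trans (hcut_top _ j.succ_pos (by lia))
  -- The chain exhausts `⋃ E` first and `⋃ E'` last, so that most of its steps avoid both.
  obtain ⟨P, hP, hPfree, hPcard, hPlower, hPupper⟩ := exists_chain_through
    (subset_sdiff.2 ⟨h.biUnion_lower_subset subset_rfl, h.disjoint_biUnion subset_rfl subset_rfl⟩)
    (sdiff_subset : (F ∪ D ∪ X₀)ᶜ \ X₀.biUnion E' ⊆ (F ∪ D ∪ X₀)ᶜ)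
  have hPcut (j : ℕ) : #(P (cut j)) = cut j := by rw [hPcard, min_eq_left (hcut_le j)]
  refine h.hasCopy_of_chain hR (C := fun j ↦ P (cut j)) (hP.comp hcut) (fun j ↦ hPfree _)
    (card_eq_zero.1 (by rw [hPcut, hcut₀]))
    (fun j hj hX ↦ eq_of_subset_of_card_le (hPfree _) (by rw [hPcut]; exact hcut_top j hj hX))
    fun S hS j hSj hj ↦ ?_
  have hlower : #((P (cut (j + 1)) \ P (cut j)) ∩ S.biUnion E) ≤
      if κ #X₀ ≤ cut j then 0 else κ (ℓ + j) := by
    refine card_inter_le_ite (fun hκj ↦ disjoint_sdiff_self_left.mono_right ?_) (hSj ▸ hκ S hS)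
    exact (biUnion_subset_biUnion_of_subset_left E hS).trans
      (hPlower.symm.subset.trans (hP ((hκ X₀ subset_rfl).trans hκj)))
  have hupper : #((P (cut (j + 1)) \ P (cut j)) ∩ (X₀ \ S).biUnion E') ≤
      if cut (j + 1) + κ' #X₀ ≤ #(F ∪ D ∪ X₀)ᶜ then 0 else κ' (#X₀ - (ℓ + j)) := by
    refine card_inter_le_ite (fun hκj ↦ disjoint_sdiff_self_left.mono
      (sdiff_subset.trans ((hP ?_).trans hPupper.subset))
      (biUnion_subset_biUnion_of_subset_left E' sdiff_subset)) ?_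
    · have hcard := card_sdiff_add_card_eq_card (h.biUnion_upper_subset subset_rfl)
      have hX₀ := hκ' X₀ subset_rfl
      lia
    · rw [← hSj, ← card_sdiff_of_subset hS]
      exact hκ' _ sdiff_subset
  have hstep := card_sdiff_add_card_eq_card (hP (hcut j.le_succ))
  simp only [hPcut] at hstep
  have hsplit := card_le_card_sdiff_union_add (P (cut (j + 1)) \ P (cut j))
    (S.biUnion E) ((X₀ \ S).biUnion E')
  have hgapj := hgap j hj
  lia

theorem hasCopy_of_cheap_lower (h : Scaffold R F D X₀ E E' 2 2) (hR : ¬HasCopy Rᶜ n)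
    (hX₀ : 4 ≤ #X₀) {L : ℕ} (hE : ∀ x ∈ X₀, #(E x) ≤ L) {W : Finset α}
    (hE' : ∀ x ∈ X₀, E' x ⊆ W) (hW : #W ≤ n) (hL : #X₀ * L ≤ n + 2 * L)
    (hfree : (#X₀ - 2) * n + 2 * L ≤ #(F ∪ D ∪ X₀)ᶜ) : HasCopy R #X₀ := by
  obtain ⟨k, hk⟩ := Nat.exists_eq_add_of_le' hX₀
  rw [hk, show k + 4 - 2 = k + 2 by lia, add_mul] at hfree
  rw [hk, add_mul] at hL
  refine h.hasCopy_of_cuts hR (κ := (· * L)) (κ' := fun _ ↦ n)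
    (cut := fun j ↦ if j = 0 then 0 else if j ≤ k then 2 * L + j * n else #(F ∪ D ∪ X₀)ᶜ)
    (fun S hS ↦ card_biUnion_le_card_mul _ _ _ fun x hx ↦ hE x (hS hx))
    (fun S hS ↦ (card_le_card (biUnion_subset.2 fun x hx ↦ hE' x (hS hx))).trans hW)
    (if_pos rfl) (fun j ↦ ?_) (fun j hj hX ↦ ?_) (fun j hj ↦ ?_)
  · split_ifs with hj₀ hj
    · exact Nat.zero_le _
    · have hjk : j * n ≤ k * n := Nat.mul_le_mul_right n hj
      lia
    · exact le_rfl
  · rw [if_neg (by lia), if_neg (by lia)]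
  · have hjk : j ≤ k := by lia
    rw [hk, add_mul 2 j, add_mul k 4]
    obtain hjk' | rfl := lt_or_eq_of_le hjk
    · have hjn : (j + 1) * n ≤ k * n := Nat.mul_le_mul_right n hjk'
      rw [if_neg j.succ_ne_zero, if_pos (show j + 1 ≤ k from hjk'), if_pos (by lia : _ + n ≤ _)]
      obtain rfl | hj₀ := Nat.eq_zero_or_pos j
      · rw [if_pos rfl]
        split_ifs <;> omega
      · have hnj : n ≤ j * n := Nat.le_mul_of_pos_left n hj₀
        rw [if_neg hj₀.ne', if_pos hjk, if_pos (by lia : k * L + 4 * L ≤ _)]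
        lia
    · rw [if_neg j.succ_ne_zero, if_neg (show ¬j + 1 ≤ j by lia)]
      obtain rfl | hj₀ := Nat.eq_zero_or_pos j
      · rw [if_pos rfl]
        split_ifs <;> omega
      · have hnj : n ≤ j * n := Nat.le_mul_of_pos_left n hj₀
        rw [if_neg hj₀.ne', if_pos le_rfl, if_pos (by lia : j * L + 4 * L ≤ _)]
        split_ifs <;> lia

end Scaffold

/-- Cut points for a chain that has to traverse `u` forbidden elements, `L` per element of `X₀`. The
first `r` steps leave room for the forbidden elements they may meet, the `r`-th one traverses what
is left of them, and the later steps have length `n`. -/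
def profile (n L u r j : ℕ) : ℕ :=
  if j < r then ∑ i ∈ range j, (n + (i + 2) * L)
  else max (∑ i ∈ range r, (n + (i + 2) * L)) u + (j - r) * n

theorem profile_zero (n L u : ℕ) {r : ℕ} (hr : 0 < r) : profile n L u r 0 = 0 := by
  simp [profile, hr]

theorem profile_of_le {r j : ℕ} (n L u : ℕ) (h : r ≤ j) :
    profile n L u r j = max (∑ i ∈ range r, (n + (i + 2) * L)) u + (j - r) * n :=
  if_neg h.not_gt

theorem le_profile {r j : ℕ} (n L u : ℕ) (h : r ≤ j) : u ≤ profile n L u r j := by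
  rw [profile_of_le n L u h]
  exact (le_max_right _ _).trans (Nat.le_add_right _ _)

theorem profile_add_le_succ (n L u r j : ℕ) :
    profile n L u r j + n + (if u ≤ profile n L u r j then 0 else (j + 2) * L) ≤
      profile n L u r (j + 1) := by
  obtain hj | hj := lt_or_ge j r
  · have hj₁ : ∑ i ∈ range (j + 1), (n + (i + 2) * L) ≤ profile n L u r (j + 1) := by
      obtain hjr | rfl := lt_or_eq_of_le (Nat.succ_le_of_lt hj)
      · exact (if_pos hjr).ge
      · rw [profile_of_le n L u le_rfl]
        exact (le_max_left _ _).trans (Nat.le_add_right _ _)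
    refine le_trans ?_ hj₁
    rw [sum_range_succ, ← add_assoc, profile, if_pos hj]
    gcongr
    split_ifs <;> lia
  · rw [if_pos (le_profile n L u hj), profile_of_le n L u hj, profile_of_le n L u (by lia),
      Nat.succ_sub hj, Nat.succ_mul]
    lia

theorem Scaffold.hasCopy_of_profiles [Fintype α] [DecidableEq α] {R : Set (Finset α)}
    {F D X₀ : Finset α} {E E' : α → Finset α} {n : ℕ} (h : Scaffold R F D X₀ E E' 2 2)
    (hR : ¬HasCopy Rᶜ n) {κ κ' g g' : ℕ → ℕ} {r r' : ℕ}
    (hκ : ∀ S ⊆ X₀, #(S.biUnion E) ≤ κ #S) (hκ' : ∀ S ⊆ X₀, #(S.biUnion E') ≤ κ' #S)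
    (hrr' : r + r' + 3 = #X₀) (hg₀ : g 0 = 0) (hg'₀ : g' 0 = 0)
    (hg : ∀ j, g j + n + (if κ #X₀ ≤ g j then 0 else κ (j + 2)) ≤ g (j + 1))
    (hg' : ∀ j, g' j + n + (if κ' #X₀ ≤ g' j then 0 else κ' (j + 2)) ≤ g' (j + 1))
    (hκg : κ #X₀ ≤ g r) (hκg' : κ' #X₀ ≤ g' r') (hsum : g r + g' r' ≤ #(F ∪ D ∪ X₀)ᶜ) :
    HasCopy R #X₀ := by
  have hgmono : Monotone g := monotone_nat_of_le_succ fun j ↦ le_trans (by lia) (hg j)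
  have hgmono' : Monotone g' := monotone_nat_of_le_succ fun j ↦ le_trans (by lia) (hg' j)
  refine h.hasCopy_of_cuts hR hκ hκ'
    (cut := fun j ↦ if j ≤ r then g j else #(F ∪ D ∪ X₀)ᶜ - g' (r + r' - j))
    (by rw [if_pos (Nat.zero_le r), hg₀]) (fun j ↦ ?_) (fun j _ hX ↦ ?_) (fun j hj ↦ ?_)
  · split_ifs with hj
    · exact (hgmono hj).trans (by lia)
    · exact Nat.sub_le _ _
  · rw [if_neg (by lia), show r + r' - j = 0 by lia, hg'₀, Nat.sub_zero]
  · obtain hjr | hjr := lt_or_ge j r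
    · have hgj := hg j
      have hgr := hgmono (show j + 1 ≤ r from hjr)
      rw [if_pos hjr.le, if_pos (show j + 1 ≤ r from hjr), if_pos (by lia : _ + κ' #X₀ ≤ _),
        add_comm 2 j]
      lia
    · obtain ⟨i, hi⟩ := Nat.exists_eq_add_of_lt (show j < r + r' by lia)
      have hgi := hg' i
      have hgr := hgmono' (show i + 1 ≤ r' by lia)
      have hcut_lower : g r ≤ if j ≤ r then g j else #(F ∪ D ∪ X₀)ᶜ - g' (i + 1) := by
        split_ifs with hj'
        exacts [hgmono hjr, by lia]
      have hcut_upper : (if j ≤ r then g j else #(F ∪ D ∪ X₀)ᶜ - g' (i + 1)) ≤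
          #(F ∪ D ∪ X₀)ᶜ - g' (i + 1) := by
        split_ifs with hj'
        exacts [(hgmono hj').trans (by lia), le_rfl]
      rw [show r + r' - j = i + 1 by lia, show r + r' - (j + 1) = i by lia,
        if_neg (show ¬j + 1 ≤ r by lia), if_pos (hκg.trans hcut_lower),
        show #X₀ - (2 + j) = i + 2 by lia]
      split_ifs at hgi ⊢ <;> lia

theorem HasCopy.of_layers [Fintype α] [DecidableEq α] {R : Set (Finset α)} {m n : ℕ}
    (hR : ¬HasCopy Rᶜ m) {B D V V' : Finset α} {L L' : ℕ} (hBD : Disjoint B D) (hBV : B ⊆ V)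
    (hDV' : D ⊆ V') (hlower : ∀ T, Disjoint T V → #T < L → B ∪ T ∈ R)
    (hupper : ∀ T, Disjoint T V' → #T < L' → (D ∪ T)ᶜ ∈ R)
    (hroom : n + #(V ∪ V') ≤ Fintype.card α)
    (hsize : n + #B + #D + m * (n + 1 - (L + L')) ≤ Fintype.card α) : HasCopy R n := by
  obtain ⟨X₀, hX₀, rfl⟩ : ∃ X₀ ⊆ (V ∪ V')ᶜ, #X₀ = n :=
    exists_subset_card_eq (by rw [card_compl]; lia)
  have hdisj : Disjoint X₀ (V ∪ V') := le_compl_iff_disjoint_right.1 hX₀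
  obtain ⟨hX₀V, hX₀V'⟩ := disjoint_union_right.1 hdisj
  have hempty (S : Finset α) : S.biUnion (fun _ ↦ (∅ : Finset α)) = ∅ := by ext; simp
  have hscaffold : Scaffold R B D X₀ (fun _ ↦ ∅) (fun _ ↦ ∅) L L' :=
    { disjoint_bot_top := hBD
      disjoint_bot_base := (hX₀V.mono_right hBV).symm
      disjoint_top_base := (hX₀V'.mono_right hDV').symm
      lower_subset := by simp
      upper_subset := by simp
      disjoint_lower_upper := by simp
      lower_mem := fun S hS hSL ↦ by simpa [hempty] using hlower S (hX₀V.mono_left hS) hSL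
      upper_mem := fun S hS hSL ↦ by simpa [hempty] using hupper S (hX₀V'.mono_left hS) hSL }
  have hfree : m * (#X₀ + 1 - (L + L')) ≤ #(B ∪ D ∪ X₀)ᶜ := by
    rw [card_compl]
    have := card_union_le (B ∪ D) X₀
    have := card_union_le B D
    lia
  have hle (j : ℕ) (hj : j ≤ #X₀ + 1 - (L + L')) : m * j ≤ #(B ∪ D ∪ X₀)ᶜ :=
    (Nat.mul_le_mul_left m hj).trans hfree
  refine hscaffold.hasCopy_of_cuts hR (κ := fun _ ↦ 0) (κ' := fun _ ↦ 0)
    (cut := fun j ↦ if j ≤ #X₀ + 1 - (L + L') then m * j else #(B ∪ D ∪ X₀)ᶜ)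
    (by simp [hempty]) (by simp [hempty]) (by simp) (fun j ↦ ?_) (fun j hj hX ↦ ?_) (fun j hj ↦ ?_)
  · split_ifs with hj
    exacts [hle j hj, le_rfl]
  · rw [if_neg (by lia)]
  · rw [if_pos (by lia), if_pos (by lia)]
    simp only [ite_self]
    lia

theorem card_add_lt_of_not_hasCopy [Fintype α] [DecidableEq α] {R : Set (Finset α)} {m n : ℕ}
    (hR : ¬HasCopy R m) (hRc : ¬HasCopy Rᶜ n) {B D V V' : Finset α} {L L' : ℕ}
    (hBD : Disjoint B D) (hBV : B ⊆ V) (hDV' : D ⊆ V')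
    (hlower : ∀ T, Disjoint T V → #T < L → B ∪ T ∉ R)
    (hupper : ∀ T, Disjoint T V' → #T < L' → (D ∪ T)ᶜ ∉ R)
    (hroom : n + #(V ∪ V') ≤ Fintype.card α) :
    Fintype.card α + m * (L + L') < n + #B + #D + m * (n + 1) := by
  by_contra! hle
  refine hRc (.of_layers (by rwa [compl_compl]) hBD hBV hDV' hlower hupper hroom ?_)
  have hcard : #B + #D ≤ #(V ∪ V') :=
    (card_union_of_disjoint hBD).symm.trans_le (card_le_card (union_subset_union hBV hDV'))
  obtain hLL' | hLL' := le_total (n + 1) (L + L')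
  · rw [Nat.sub_eq_zero_of_le hLL']
    lia
  · rw [Nat.mul_sub]
    have := Nat.mul_le_mul_left m hLL'
    lia

theorem hasCopy_or_hasCopy_compl_of_add_mul_le [Fintype α] {m n : ℕ}
    (h : m + n * (m + 1) ≤ Fintype.card α) (R : Set (Finset α)) :
    HasCopy R m ∨ HasCopy Rᶜ n := by
  classical
  by_contra! ⟨hm, hn⟩
  exact hm (.of_layers (B := ∅) (D := ∅) (V := ∅) (V' := ∅) (L := 0) (L' := 0) hn
    (disjoint_empty_left _) subset_rfl subset_rfl (by simp) (by simp) (by simp; lia)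
    (by simpa using h))

/-- Adding `x` to `A` costs less than `L`: even when `O` and any further `ξ` elements are forbidden,
fewer than `L` extra elements complete `insert x A` to a member of `R`. For the upper layers this is
applied to `compl ⁻¹' R`. -/
def Extendable [DecidableEq α] (R : Set (Finset α)) (A O : Finset α) (ξ L : ℕ) (x : α) : Prop :=
  ∀ X, #X ≤ ξ → ∃ T, Disjoint T (insert x A ∪ O ∪ X) ∧ #T < L ∧ insert x A ∪ T ∈ R

namespace Extendable

variable [DecidableEq α] {R : Set (Finset α)} {A O : Finset α} {ξ ξ' L : ℕ} {x : α}

theorem mono (h : Extendable R A O ξ L x) (hξ : ξ' ≤ ξ) : Extendable R A O ξ' L x :=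
  fun X hX ↦ h X (hX.trans hξ)

theorem not_zero : ¬Extendable R A O ξ 0 x := fun h ↦ by
  obtain ⟨T, -, hT, -⟩ := h ∅ (by simp)
  exact Nat.not_lt_zero _ hT

theorem of_not_hasCopy_compl [Fintype α] {n : ℕ} (hR : ¬HasCopy Rᶜ n)
    (hroom : #A + #O + 1 + ξ + n ≤ Fintype.card α) (x : α) : Extendable R A O ξ (n + 1) x := by
  intro X hX
  obtain ⟨W, hW, rfl⟩ : ∃ W ⊆ (insert x A ∪ O ∪ X)ᶜ, #W = n := by
    refine exists_subset_card_eq ?_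
    rw [card_compl]
    have := card_union_le (insert x A ∪ O) X
    have := card_union_le (insert x A) O
    have := card_insert_le x A
    lia
  have hdisj : Disjoint W (insert x A ∪ O ∪ X) := le_compl_iff_disjoint_right.1 hW
  obtain ⟨T, hT, hTR⟩ := exists_union_mem_of_not_hasCopy_compl hR (A := insert x A)
    (hdisj.symm.mono_left (subset_union_left.trans subset_union_left)) le_rfl
  exact ⟨T, hdisj.mono_left hT, Nat.lt_succ_of_le (card_le_card hT), hTR⟩

end Extendable

theorem exists_threshold (K : Finset α) (hK : 1 < #K) (Q : ℕ → α → Prop)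
    [∀ L, DecidablePred (Q L)] {n : ℕ} (h₀ : ∀ x, ¬Q 0 x) (hn : ∀ x, Q n x) :
    ∃ L, 1 < #{x ∈ K | ¬Q L x} ∧ #{x ∈ K | ¬Q (L + 1) x} ≤ 1 := by
  obtain ⟨L, hL, hL'⟩ := Nat.exists_not_and_succ_of_not_zero_of_exists
    (p := fun L ↦ #{x ∈ K | ¬Q L x} ≤ 1) (by simpa [h₀] using hK) ⟨n, by simp [hn]⟩
  exact ⟨L, not_le.1 hL, hL'⟩

theorem union_biUnion_mem_of_card_lt_two [DecidableEq α] {R : Set (Finset α)} {A X₀ S : Finset α}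
    {E : α → Finset α} (hA : A ∈ R) (hE : ∀ x ∈ X₀, insert x A ∪ E x ∈ R) (hS : S ⊆ X₀)
    (hS₂ : #S < 2) : A ∪ S ∪ S.biUnion E ∈ R := by
  obtain hS₁ | hS₁ : #S = 0 ∨ #S = 1 := by lia
  · simpa [card_eq_zero.1 hS₁] using hA
  · obtain ⟨x, rfl⟩ := card_eq_one.1 hS₁
    rw [singleton_biUnion, union_singleton]
    exact hE x (singleton_subset_iff.1 hS)

/-- `F ⊆ Dᶜ` are members of `R`, serving as the bottom and the top of a copy. Recording the top by
its complement makes the notion symmetric under `compl ⁻¹' R`. -/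
structure IsFrame [Fintype α] [DecidableEq α] (R : Set (Finset α)) (F D : Finset α) : Prop where
  disjoint : Disjoint F D
  bot_mem : F ∈ R
  top_mem : Dᶜ ∈ R

namespace IsFrame

variable [Fintype α] [DecidableEq α] {R : Set (Finset α)} {F D X₀ : Finset α}
  {E E' : α → Finset α} {n L L' : ℕ}

theorem dual (h : IsFrame R F D) : IsFrame (compl ⁻¹' R) D F where
  disjoint := h.disjoint.symm
  bot_mem := h.top_mem
  top_mem := by simpa using h.bot_mem

theorem scaffold (h : IsFrame R F D) (hX₀ : Disjoint (F ∪ D) X₀)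
    (hE : ∀ x ∈ X₀, Disjoint (E x) (F ∪ D ∪ X₀))
    (hE' : ∀ x ∈ X₀, Disjoint (E' x) (F ∪ D ∪ X₀))
    (hEE' : ∀ x ∈ X₀, ∀ y ∈ X₀, Disjoint (E x) (E' y)) (hER : ∀ x ∈ X₀, insert x F ∪ E x ∈ R)
    (hER' : ∀ x ∈ X₀, (insert x D ∪ E' x)ᶜ ∈ R) : Scaffold R F D X₀ E E' 2 2 where
  disjoint_bot_top := h.disjoint
  disjoint_bot_base := hX₀.mono_left subset_union_left
  disjoint_top_base := hX₀.mono_left subset_union_right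
  lower_subset x hx := le_compl_iff_disjoint_right.2 (hE x hx)
  upper_subset x hx := le_compl_iff_disjoint_right.2 (hE' x hx)
  disjoint_lower_upper := hEE'
  lower_mem _ := union_biUnion_mem_of_card_lt_two h.bot_mem hER
  upper_mem _ := union_biUnion_mem_of_card_lt_two (R := compl ⁻¹' R) h.top_mem hER'

theorem hasCopy_of_extendable (h : IsFrame R F D) (hR : ¬HasCopy Rᶜ n)
    (hX₀ : Disjoint (F ∪ D) X₀) (hcard : 4 ≤ #X₀)
    (hext : ∀ x ∈ X₀, Extendable R F D #X₀ (L + 1) x) (hL : #X₀ * L ≤ n + 2 * L)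
    (hfree : (#X₀ - 2) * n + 2 * L ≤ #(F ∪ D ∪ X₀)ᶜ) : HasCopy R #X₀ := by
  choose! E hE hEcard hER using fun x hx ↦ hext x hx X₀ le_rfl
  have hEcard_biUnion (S : Finset α) (hS : S ⊆ X₀) : #(S.biUnion E) ≤ #S * L :=
    card_biUnion_le_card_mul _ _ _ fun x hx ↦ Nat.le_of_lt_succ (hEcard x (hS hx))
  have hEbase (x) (hx : x ∈ X₀) : Disjoint (E x) (F ∪ D ∪ X₀) :=
    (hE x hx).mono_right (by grind)
  obtain ⟨W, hW, rfl⟩ : ∃ W ⊆ (F ∪ D ∪ X₀)ᶜ \ X₀.biUnion E, #W = n := by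
    refine exists_subset_card_eq (le_trans ?_ (le_card_sdiff _ _))
    have := hEcard_biUnion X₀ subset_rfl
    have : 2 * n ≤ (#X₀ - 2) * n := Nat.mul_le_mul_right n (by lia)
    lia
  obtain ⟨hWfree, hWE⟩ := subset_sdiff.1 hW
  have hWbase : Disjoint W (F ∪ D ∪ X₀) := le_compl_iff_disjoint_right.1 hWfree
  have hinsert (x) (hx : x ∈ X₀) : Disjoint (insert x D) W :=
    (hWbase.mono_right (by grind)).symm
  choose! E' hE' hER' using fun x hx ↦ exists_union_mem_of_not_hasCopy_compl
    (hasCopy_preimage_compl.not.2 hR) (hinsert x hx) le_rfl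
  have hscaffold : Scaffold R F D X₀ E E' 2 2 := h.scaffold hX₀ hEbase
    (fun x hx ↦ hWbase.mono_left (hE' x hx))
    (fun x hx y hy ↦ (hWE.mono (hE' y hy) (subset_biUnion_of_mem E hx)).symm) hER hER'
  exact hscaffold.hasCopy_of_cheap_lower hR hcard (fun x hx ↦ Nat.le_of_lt_succ (hEcard x hx))
    hE' le_rfl hL hfree

theorem hasCopy_of_extendable_of_extendable (h : IsFrame R F D) (hR : ¬HasCopy Rᶜ n)
    (hX₀ : Disjoint (F ∪ D) X₀) (hext : ∀ x ∈ X₀, Extendable R F D #X₀ (L + 1) x)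
    (hext' : ∀ x ∈ X₀, Extendable (compl ⁻¹' R) D F (#X₀ + #X₀ * L) (L' + 1) x)
    {r : ℕ} (hr₀ : 0 < r) (hr : 2 * r + 3 ≤ #X₀)
    (hfree : (#X₀ - 3 - 2 * r) * n + max (∑ i ∈ range r, (n + (i + 2) * L)) (#X₀ * L) +
      max (∑ i ∈ range r, (n + (i + 2) * L')) (#X₀ * L') ≤ #(F ∪ D ∪ X₀)ᶜ) : HasCopy R #X₀ := by
  choose! E hE hEcard hER using fun x hx ↦ hext x hx X₀ le_rfl
  have hE_biUnion (S : Finset α) (hS : S ⊆ X₀) : #(S.biUnion E) ≤ #S * L :=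
    card_biUnion_le_card_mul _ _ _ fun x hx ↦ Nat.le_of_lt_succ (hEcard x (hS hx))
  have hcard : #(X₀ ∪ X₀.biUnion E) ≤ #X₀ + #X₀ * L :=
    (card_union_le _ _).trans (Nat.add_le_add_left (hE_biUnion X₀ subset_rfl) _)
  choose! E' hE' hE'card hER' using fun x hx ↦ hext' x hx _ hcard
  have hE'_biUnion (S : Finset α) (hS : S ⊆ X₀) : #(S.biUnion E') ≤ #S * L' :=
    card_biUnion_le_card_mul _ _ _ fun x hx ↦ Nat.le_of_lt_succ (hE'card x (hS hx))
  have hscaffold : Scaffold R F D X₀ E E' 2 2 := h.scaffold hX₀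
    (fun x hx ↦ (hE x hx).mono_right (by grind)) (fun x hx ↦ (hE' x hx).mono_right (by grind))
    (fun x hx y hy ↦ ((hE' y hy).mono_right ((subset_biUnion_of_mem E hx).trans
      (subset_union_right.trans subset_union_right))).symm) hER hER'
  refine hscaffold.hasCopy_of_profiles hR (κ := (· * L)) (κ' := (· * L'))
    (r := #X₀ - 3 - r) (r' := r)
    (g := profile n L (#X₀ * L) r) (g' := profile n L' (#X₀ * L') r) hE_biUnion hE'_biUnion
    (by lia) (profile_zero _ _ _ hr₀) (profile_zero _ _ _ hr₀) (profile_add_le_succ n L _ r)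
    (profile_add_le_succ n L' _ r) (le_profile _ _ _ (show r ≤ #X₀ - 3 - r by lia))
    (le_profile _ _ _ le_rfl) ?_
  rw [profile_of_le _ _ _ (show r ≤ #X₀ - 3 - r by lia), profile_of_le _ _ _ le_rfl, Nat.sub_self,
    Nat.zero_mul, Nat.add_zero, show #X₀ - 3 - r - r = #X₀ - 3 - 2 * r by lia]
  lia

end IsFrame

theorem exists_mem_forall_card_lt [Fintype α] {R : Set (Finset α)} {n : ℕ}
    (hR : ¬HasCopy Rᶜ n) (O : Finset α) (hO : n + #O ≤ Fintype.card α) :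
    ∃ A ∈ R, Disjoint A O ∧ #A ≤ n ∧ ∀ T, Disjoint T O → #T < #A → T ∉ R := by
  classical
  obtain ⟨W, hWO, rfl⟩ : ∃ W ⊆ Oᶜ, #W = n := exists_subset_card_eq (by rw [card_compl]; lia)
  obtain ⟨T, hTW, hTR⟩ := exists_union_mem_of_not_hasCopy_compl hR (disjoint_empty_left W) le_rfl
  rw [empty_union] at hTR
  have hTO : Disjoint T O := le_compl_iff_disjoint_right.1 (hTW.trans hWO)
  obtain ⟨A, ⟨hAO, hAR⟩, hA⟩ := Set.exists_min_image {T | Disjoint T O ∧ T ∈ R} card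
    (Set.toFinite _) ⟨T, hTO, hTR⟩
  exact ⟨A, hAR, hAO, (hA T ⟨hTO, hTR⟩).trans (card_le_card hTW),
    fun T hTO hT hTR ↦ hT.not_ge (hA T ⟨hTO, hTR⟩)⟩

namespace IsFrame

variable [Fintype α] [DecidableEq α] {R : Set (Finset α)} {F D : Finset α} {m n L L' ξ ξ' : ℕ}

theorem exists_of_not_hasCopy (hR : ¬HasCopy R m) (hRc : ¬HasCopy Rᶜ n)
    (hroom : 2 * n ≤ Fintype.card α) :
    ∃ F D, IsFrame R F D ∧ Fintype.card α + m * (#F + #D) < n + m * (n + 1) := by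
  obtain ⟨F, hF, -, hFn, hFmin⟩ := exists_mem_forall_card_lt hRc ∅ (by rw [card_empty]; lia)
  obtain ⟨D, hD, hDF, -, hDmin⟩ := exists_mem_forall_card_lt (hasCopy_preimage_compl.not.2 hRc) F
    (by lia)
  refine ⟨F, D, ⟨hDF.symm, hF, hD⟩, ?_⟩
  simpa using card_add_lt_of_not_hasCopy hR hRc (B := ∅) (D := ∅) (V := ∅) (V' := F)
    (disjoint_empty_left ∅) subset_rfl (empty_subset F)
    (fun T hT ↦ by rw [empty_union]; exact hFmin T hT)
    (fun T hT ↦ by rw [empty_union]; exact hDmin T hT) (by rw [empty_union]; lia)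

theorem card_add_lt_of_not_extendable (h : IsFrame R F D) (hR : ¬HasCopy R m)
    (hRc : ¬HasCopy Rᶜ n) {p q : α} (hpq : p ≠ q) (hp : p ∉ F ∪ D) (hq : q ∉ F ∪ D)
    (hpL : ¬Extendable R F D ξ L p) (hqL' : ¬Extendable (compl ⁻¹' R) D F ξ' L' q)
    (hroom : n + (#F + #D + 2) + (ξ + ξ') ≤ Fintype.card α) :
    Fintype.card α + m * (L + L') < n + (#F + #D + 2) + m * (n + 1) := by
  simp only [Extendable, not_forall, not_exists, not_and] at hpL hqL'
  obtain ⟨X, hX, hXmem⟩ := hpL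
  obtain ⟨X', hX', hXmem'⟩ := hqL'
  have hF := card_insert_le p F
  have hD := card_insert_le q D
  have hdisj : Disjoint (insert p F) (insert q D) := by
    have hFD := h.disjoint
    grind
  have hcount := card_add_lt_of_not_hasCopy hR hRc hdisj
    (subset_union_left.trans subset_union_left) (subset_union_left.trans subset_union_left)
    hXmem hXmem' ?_
  · lia
  · have hsub : insert p F ∪ D ∪ X ∪ (insert q D ∪ F ∪ X') ⊆
      insert p F ∪ insert q D ∪ (X ∪ X') := by grind
    have := card_le_card hsub
    have := card_union_le (insert p F ∪ insert q D) (X ∪ X')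
    have := card_union_le (insert p F) (insert q D)
    have := card_union_le X X'
    lia

theorem exists_extendable (h : IsFrame R F D) (hR : ¬HasCopy R m) (hRc : ¬HasCopy Rᶜ n)
    (hm : #F + #D + m + 2 ≤ Fintype.card α)
    (hroom : n + (#F + #D + 2) + (ξ + ξ') ≤ Fintype.card α) :
    ∃ (X₀ : Finset α) (L L' : ℕ), Disjoint (F ∪ D) X₀ ∧ #X₀ = m ∧
      (∀ x ∈ X₀, Extendable R F D ξ (L + 1) x) ∧
      (∀ x ∈ X₀, Extendable (compl ⁻¹' R) D F ξ' (L' + 1) x) ∧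
      Fintype.card α + m * (L + L') < n + (#F + #D + 2) + m * (n + 1) := by
  classical
  have hfree : #F + #D + #(F ∪ D)ᶜ = Fintype.card α := by
    rw [← card_union_of_disjoint h.disjoint, card_add_card_compl]
  obtain ⟨L, hL, hL₁⟩ := exists_threshold (F ∪ D)ᶜ (by lia) (Extendable R F D ξ)
    (fun _ ↦ Extendable.not_zero) (Extendable.of_not_hasCopy_compl hRc (by lia))
  obtain ⟨L', hL', hL'₁⟩ := exists_threshold (F ∪ D)ᶜ (by lia) (Extendable (compl ⁻¹' R) D F ξ')
    (fun _ ↦ Extendable.not_zero)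
    (Extendable.of_not_hasCopy_compl (hasCopy_preimage_compl.not.2 hRc) (by lia))
  obtain ⟨p, hp⟩ := card_pos.1 (zero_lt_one.trans hL)
  obtain ⟨q, hq, hqp⟩ := exists_mem_ne hL' p
  simp only [mem_filter, mem_compl] at hp hq
  obtain ⟨X₀, hX₀, hX₀m⟩ : ∃ X₀ ⊆ {x ∈ (F ∪ D)ᶜ | Extendable R F D ξ (L + 1) x ∧
      Extendable (compl ⁻¹' R) D F ξ' (L' + 1) x}, #X₀ = m := by
    refine exists_subset_card_eq ?_
    have := card_filter_add_card_filter_not (s := (F ∪ D)ᶜ) fun x ↦ Extendable R F D ξ (L + 1) x ∧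
      Extendable (compl ⁻¹' R) D F ξ' (L' + 1) x
    simp only [not_and_or, filter_or] at this
    have := card_union_le {x ∈ (F ∪ D)ᶜ | ¬Extendable R F D ξ (L + 1) x}
      {x ∈ (F ∪ D)ᶜ | ¬Extendable (compl ⁻¹' R) D F ξ' (L' + 1) x}
    lia
  refine ⟨X₀, L, L', ?_, hX₀m, fun x hx ↦ (mem_filter.1 (hX₀ hx)).2.1,
    fun x hx ↦ (mem_filter.1 (hX₀ hx)).2.2,
    h.card_add_lt_of_not_extendable hR hRc hqp.symm hp.1 hq.1 hp.2 hq.2 hroom⟩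
  exact (le_compl_iff_disjoint_right.1 (hX₀.trans (filter_subset _ _))).symm

end IsFrame

section Arithmetic

-- `y` counts the elements of the ground set left free by `F`, `D` and `X₀`, and `L`, `L'` are the
-- costs of one element of `X₀` at the bottom and at the top; the threshold between cheap and
-- expensive is `3 * e / 2`, where `e = n / (2 * m - 3)`.
variable {m n y L L' : ℕ} {e : ℝ}

theorem mul_add_add_three_le_of_bound_le {N : ℕ} (hm : 4 ≤ m)
    (hN : ((m : ℝ) - 2 + (9 * m - 9) / ((2 * m - 3) * (m + 1))) * n + m + 3 ≤ N) :
    (m - 2) * n + m + 3 ≤ N := by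
  have hmR : (4 : ℝ) ≤ m := by exact_mod_cast hm
  have hfrac : 0 ≤ (9 * (m : ℝ) - 9) / ((2 * m - 3) * (m + 1)) := by
    apply div_nonneg <;> nlinarith
  rify [show 2 ≤ m by lia]
  refine le_trans ?_ hN
  gcongr
  exact le_add_of_nonneg_right hfrac

-- The constant in the bound is the one for which `N - s - m` still exceeds `(m - 2) * n + 3 * e`
-- at the largest `s` allowed by the count `hs`.
theorem exists_free_of_bound_le {N s : ℕ} (hm : 4 ≤ m)
    (hN : ((m : ℝ) - 2 + (9 * m - 9) / ((2 * m - 3) * (m + 1))) * n + m + 3 ≤ N)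
    (hs : N + m * s < n + m * (n + 1)) :
    ∃ (y : ℕ) (e : ℝ), y + s + m = N ∧ 0 ≤ e ∧ e * (2 * m - 3) = n ∧
      ((m : ℝ) - 2) * n + 3 * e + 3 ≤ y := by
  have hmR : (4 : ℝ) ≤ m := by exact_mod_cast hm
  have hpos : (0 : ℝ) < 2 * m - 3 := by linarith
  obtain ⟨g, hg₀, hg⟩ : ∃ g : ℝ, 0 ≤ g ∧ g * (m + 1) * (2 * m - 3) = n :=
    ⟨n / ((2 * m - 3) * (m + 1)), by positivity, by field_simp⟩
  have hfrac : (9 * (m : ℝ) - 9) / ((2 * m - 3) * (m + 1)) * n = 9 * (m - 1) * g := by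
    rw [← hg, div_mul_eq_mul_div, div_eq_iff (by positivity)]
    ring
  rw [add_mul, hfrac] at hN
  have hsg : (s : ℝ) ≤ 6 * (m - 2) * g := by
    have hsR : (N : ℝ) + m * s + 1 ≤ n + m * (n + 1) := by exact_mod_cast hs
    refine le_of_mul_le_mul_left ?_ (show (0 : ℝ) < m by linarith)
    linarith
  have hyR : ((m : ℝ) - 2) * n + 3 * (g * (m + 1)) + 3 ≤ N - s - m := by linarith
  have hg₁ : 0 ≤ g * (m + 1) := by positivity
  have hmn : 0 ≤ ((m : ℝ) - 2) * n := by apply mul_nonneg <;> linarith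
  obtain ⟨y, rfl⟩ : ∃ y, N = s + m + y := Nat.exists_eq_add_of_le (by rify; linarith)
  push_cast at hyR
  exact ⟨y, g * (m + 1), by lia, hg₁, hg, by linarith⟩

theorem cheap_layer_bounds (hm : 4 ≤ m) (he : e * (2 * m - 3) = n)
    (hy : ((m : ℝ) - 2) * n + 3 * e + 3 ≤ y) (hL : 2 * (L : ℝ) ≤ 3 * e) :
    m * L ≤ n + 2 * L ∧ (m - 2) * n + 2 * L ≤ y := by
  rify [show 2 ≤ m by lia] at hm ⊢
  have : 0 ≤ ((m : ℝ) - 2) * (3 * e - 2 * L) := mul_nonneg (by linarith) (by linarith)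
  constructor <;> linarith

theorem add_two_le_free (hm : 4 ≤ m) (hn : 2 ≤ n) (he : e * (2 * m - 3) = n)
    (hy : ((m : ℝ) - 2) * n + 3 * e + 3 ≤ y) : m + n + 2 ≤ y := by
  rify at hm hn ⊢
  nlinarith [mul_nonneg (sub_nonneg.2 hm) (sub_nonneg.2 hn)]

theorem five_le_of_expensive_layers (hm : 4 ≤ m) (he : e * (2 * m - 3) = n)
    (hL : 3 * e < 2 * L) (hL' : 3 * e < 2 * L')
    (hLL' : (m : ℝ) * (L + L') ≤ 3 * n - 3 * e - 2) : 5 ≤ m := by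
  by_contra! h
  obtain rfl : m = 4 := by lia
  push_cast at *
  linarith

theorem add_mul_add_two_le_free (hm : 5 ≤ m) (he₀ : 0 ≤ e) (he : e * (2 * m - 3) = n)
    (hy : ((m : ℝ) - 2) * n + 3 * e + 3 ≤ y) (hL' : 3 * e < 2 * L')
    (hLL' : (m : ℝ) * (L + L') ≤ 3 * n - 3 * e - 2) : m + m * L + n + 2 ≤ y := by
  have hL'₀ : 0 < L' := by exact_mod_cast (show (0 : ℝ) < L' by linarith)
  have hmL' : m ≤ m * L' := Nat.le_mul_of_pos_right m hL'₀
  rify at hmL' ⊢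
  obtain rfl | hm₆ := hm.eq_or_lt
  · push_cast at *
    linarith
  · have hm₆R : (6 : ℝ) ≤ m := by exact_mod_cast hm₆
    have : 0 ≤ ((m : ℝ) - 6) * n := by apply mul_nonneg <;> linarith
    linarith

theorem exists_profile_sum_le_free (hm : 5 ≤ m) (he₀ : 0 ≤ e) (he : e * (2 * m - 3) = n)
    (hy : ((m : ℝ) - 2) * n + 3 * e + 3 ≤ y) (hL : 3 * e < 2 * L) (hL' : 3 * e < 2 * L')
    (hLL' : (m : ℝ) * (L + L') ≤ 3 * n - 3 * e - 2) :
    ∃ r, 0 < r ∧ 2 * r + 3 ≤ m ∧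
      (m - 3 - 2 * r) * n + max (∑ i ∈ range r, (n + (i + 2) * L)) (m * L) +
        max (∑ i ∈ range r, (n + (i + 2) * L')) (m * L') ≤ y := by
  have hmR : (5 : ℝ) ≤ m := by exact_mod_cast hm
  have h5L : 5 * (L : ℝ) ≤ m * L := by gcongr
  have h5L' : 5 * (L' : ℝ) ≤ m * L' := by gcongr
  obtain hm₁₂ | hm₁₃ := le_or_gt m 12
  · refine ⟨1, by lia, by lia, ?_⟩
    simp only [sum_range_succ, range_zero, sum_empty, zero_add]
    rify [show 3 ≤ m by lia, show 2 * 1 ≤ m - 3 by lia] at hm₁₂ ⊢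
    have : (m : ℝ) * e ≤ 12 * e := by gcongr
    have : 0 ≤ ((m : ℝ) - 2) * (2 * L - 3 * e) := by apply mul_nonneg <;> linarith
    have : 0 ≤ ((m : ℝ) - 2) * (2 * L' - 3 * e) := by apply mul_nonneg <;> linarith
    rcases max_choice ((n : ℝ) + 2 * L) (m * L) with h | h <;>
    rcases max_choice ((n : ℝ) + 2 * L') (m * L') with h' | h' <;> rw [h, h'] <;> linarith
  · refine ⟨2, by lia, by lia, ?_⟩
    simp only [sum_range_succ, range_zero, sum_empty, zero_add]
    have hm₁₃R : (13 : ℝ) ≤ m := by exact_mod_cast hm₁₃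
    rify [show 3 ≤ m by lia, show 2 * 2 ≤ m - 3 by lia]
    have : e ≤ n := by nlinarith
    have : 0 ≤ ((m : ℝ) - 13) * (n - e) := by apply mul_nonneg <;> linarith
    have : 5 * (L + L') ≤ n + 3 * e + 3 := by
      refine le_of_mul_le_mul_left ?_ (show (0 : ℝ) < m by linarith)
      linarith
    rcases max_choice ((n : ℝ) + 2 * L + (n + (1 + 2) * L)) (m * L) with h | h <;>
    rcases max_choice ((n : ℝ) + 2 * L' + (n + (1 + 2) * L')) (m * L') with h' | h' <;>
    rw [h, h'] <;> linarith

end Arithmetic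

theorem IsFrame.hasCopy_of_bounds [Fintype α] [DecidableEq α] {R : Set (Finset α)}
    {F D X₀ : Finset α} {n L L' : ℕ} {e : ℝ} (h : IsFrame R F D) (hR : ¬HasCopy Rᶜ n)
    (hX₀ : Disjoint (F ∪ D) X₀) (hm : 4 ≤ #X₀) (hn : 2 ≤ n)
    (hext : ∀ x ∈ X₀, Extendable R F D #X₀ (L + 1) x)
    (hext' : ∀ x ∈ X₀, Extendable (compl ⁻¹' R) D F (#(F ∪ D ∪ X₀)ᶜ - n - 2) (L' + 1) x)
    (he₀ : 0 ≤ e) (he : e * (2 * #X₀ - 3) = n)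
    (hy : ((#X₀ : ℝ) - 2) * n + 3 * e + 3 ≤ #(F ∪ D ∪ X₀)ᶜ)
    (hLL' : (#X₀ : ℝ) * (L + L') ≤ 3 * n - 3 * e - 2) : HasCopy R #X₀ := by
  obtain hL | hL := le_or_gt (2 * (L : ℝ)) (3 * e)
  · obtain ⟨hmL, hfree⟩ := cheap_layer_bounds hm he hy hL
    exact h.hasCopy_of_extendable hR hX₀ hm hext hmL hfree
  obtain hL' | hL' := le_or_gt (2 * (L' : ℝ)) (3 * e)
  · obtain ⟨hmL', hfree⟩ := cheap_layer_bounds hm he hy hL'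
    have hroom := add_two_le_free hm hn he hy
    exact hasCopy_preimage_compl.1 (h.dual.hasCopy_of_extendable (hasCopy_preimage_compl.not.2 hR)
      (by rwa [union_comm D F]) hm (fun x hx ↦ (hext' x hx).mono (by lia)) hmL'
      (by rwa [union_comm D F]))
  have hm₅ := five_le_of_expensive_layers hm he hL hL' hLL'
  have hroom := add_mul_add_two_le_free hm₅ he₀ he hy hL' hLL'
  obtain ⟨r, hr₀, hr, hfree⟩ := exists_profile_sum_le_free hm₅ he₀ he hy hL hL' hLL'
  exact h.hasCopy_of_extendable_of_extendable hR hX₀ hext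
    (fun x hx ↦ (hext' x hx).mono (by lia)) hr₀ hr hfree

theorem hasCopy_or_hasCopy_compl_of_bound_le [Fintype α] {m n : ℕ} (hm : 4 ≤ m)
    (hα : ((m : ℝ) - 2 + (9 * m - 9) / ((2 * m - 3) * (m + 1))) * n + m + 3 ≤ Fintype.card α)
    (R : Set (Finset α)) : HasCopy R m ∨ HasCopy Rᶜ n := by
  classical
  have hmn := mul_add_add_three_le_of_bound_le hm hα
  obtain hn | hn := lt_or_ge n 2
  · refine hasCopy_or_hasCopy_compl_of_add_mul_le ?_ R
    interval_cases n <;> lia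
  by_contra! ⟨hR, hRc⟩
  have h2n : 2 * n ≤ (m - 2) * n := Nat.mul_le_mul_right n (by lia)
  obtain ⟨F, D, h, hFD⟩ := IsFrame.exists_of_not_hasCopy hR hRc (by lia)
  obtain ⟨y, e, hy, he₀, he, hye⟩ := exists_free_of_bound_le hm hα hFD
  have hmny := add_two_le_free hm hn he hye
  obtain ⟨X₀, L, L', hX₀, rfl, hext, hext', hLL'⟩ :=
    h.exists_extendable (ξ := m) (ξ' := y - n - 2) hR hRc (by lia) (by lia)
  have hfree : #(F ∪ D ∪ X₀)ᶜ = y := by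
    rw [card_compl, card_union_of_disjoint hX₀, card_union_of_disjoint h.disjoint]
    lia
  rw [← hfree] at hext' hye
  refine hR (h.hasCopy_of_bounds hRc hX₀ hm hn hext hext' he₀ he hye ?_)
  rw [hfree] at hye
  rify at hy
  have : (Fintype.card α : ℝ) + #X₀ * (L + L') + 1 ≤ n + (#F + #D + 2) + #X₀ * (n + 1) := by
    exact_mod_cast hLL'
  linarith

theorem HasCopy.exists_injective {R : Set (Finset α)} {k : ℕ} (h : HasCopy R k) :
    ∃ f : Finset (Fin k) → Finset α, Function.Injective f ∧ (∀ S T, S ⊆ T ↔ f S ⊆ f T) ∧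
      ∀ S, f S ∈ R :=
  let ⟨f, hf⟩ := h
  ⟨f, f.injective, fun _ _ ↦ f.le_iff_le.symm, hf⟩

end

theorem ramsey_Qm_Qn_general (m n N : ℕ) (hm : 4 ≤ m)
    (hN : ((m : ℝ) - 2 + (9 * m - 9) / ((2 * m - 3) * (m + 1))) * n + m + 3 ≤ N)
    (c : Finset (Fin N) → Bool) :
    HasRedCopy m N c ∨ HasBlueCopy n N c := by
  obtain hred | hblue : HasCopy {S | c S = true} m ∨ HasCopy {S | c S = true}ᶜ n :=
    hasCopy_or_hasCopy_compl_of_bound_le hm (by rwa [Fintype.card_fin]) _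
  · exact .inl hred.exists_injective
  · obtain ⟨f, hf, hle, hfR⟩ := hblue.exists_injective
    exact .inr ⟨f, hf, hle, fun S ↦ Bool.eq_false_of_not_eq_true (hfR S)⟩

/-- For n ≥ m ≥ 4 and (N : ℝ) ≥ (m − 2 + (9m − 9)/((2m − 3)(m + 1)))n + m + 3,
every 2-coloring of Q_N contains a red copy of Q_m or a blue copy of Q_n. -/
theorem ramsey_Qm_Qn (m n N : ℕ) (hm : 4 ≤ m) (hmn : m ≤ n)
    (hN : (N : ℝ) ≥ ((m : ℝ) - 2 + (9 * (m : ℝ) - 9) / ((2 * (m : ℝ) - 3) * ((m : ℝ) + 1))) * (n : ℝ)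
      + (m : ℝ) + 3)
    (c : Finset (Fin N) → Bool) :
    HasRedCopy m N c ∨ HasBlueCopy n N c :=
  ramsey_Qm_Qn_general m n N hm hN c
end

section
/- For all integers n ≥ 1 and N with 4N ≥ 7n + 9, every 2-coloring of the Boolean lattice Q_N contains a copy of Q_3 all of whose elements other than possibly the empty set and the full ground set [N] are red, or a copy of Q_n all of whose elements other than possibly the empty set and [N] are blue. (Equivalently, R̂(Q_3, Q_n) ≤ (7/4)n + 9/4.) -/
/-- A copy of `Q m` in `Q N` all of whose elements, other than possibly `∅` and the
full ground set, are red. -/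
def HasQuasiRedCopy (m N : ℕ) (c : Finset (Fin N) → Bool) : Prop :=
  ∃ f : Finset (Fin m) → Finset (Fin N),
    Function.Injective f ∧
    (∀ S T : Finset (Fin m), S ⊆ T ↔ f S ⊆ f T) ∧
    (∀ S : Finset (Fin m), f S ≠ ∅ → f S ≠ Finset.univ → c (f S) = true)

/-- A copy of `Q m` in `Q N` all of whose elements, other than possibly `∅` and the
full ground set, are blue. -/
def HasQuasiBlueCopy (m N : ℕ) (c : Finset (Fin N) → Bool) : Prop :=
  ∃ f : Finset (Fin m) → Finset (Fin N),
    Function.Injective f ∧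
    (∀ S T : Finset (Fin m), S ⊆ T ↔ f S ⊆ f T) ∧
    (∀ S : Finset (Fin m), f S ≠ ∅ → f S ≠ Finset.univ → c (f S) = false)

/-!
Suppose there is neither a red `Q_3` nor a blue `Q_n`, and put `h = ⌊(N - n - 1) / 2⌋`. Let `T` be a
minimal transversal of the nonempty red sets of size at most `h`. If `T` had three points, each
would be the only one of the three in some small red set. The interval from the union of two of
these red sets to the complement of the third point has dimension at least `n`, so it is not
entirely blue; the red sets found this way are the coatoms of a red `Q_3` whose atoms are the small
red sets. Hence `|T| ≤ 2`, and dually the complements of the large red sets have a transversal `T'`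
with `|T'| ≤ 2`.

Extend `T ∪ T'` to a set `Y` of size `N - n` and embed `Q_n` as the subsets `S` of the complement
of `Y`, each enlarged by a part of `Y`: by `∅` if `|S| ≤ h`, by all of `Y` if `|S| ≥ n - h`. Each of
the `n - 2h - 1` layers in between owns a block of three points of `Y`, and `S` takes the blocks of
all lower layers together with a subset of its own block that makes the result blue; one exists
since the block would otherwise span a red `Q_3`. The blocks fit as `3 (n - 2h - 1) ≤ N - n`.
-/

open Finset

namespace BooleanRamsey

variable {ι κ α : Type*} {F P R : Set (Finset α)} {T : Finset α} {h : ℕ}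

/-- `T` is a transversal (vertex cover) of the hypergraph `F`: it meets every member of `F`. -/
def IsTransversal (F : Set (Finset α)) (T : Finset α) : Prop :=
  ∀ A ∈ F, ¬ Disjoint A T

theorem IsTransversal.mono {T' : Finset α} (hT : IsTransversal F T) (hTT' : T ⊆ T') :
    IsTransversal F T' :=
  fun A hA hdisj => hT A hA (hdisj.mono_right hTT')

theorem exists_inter_eq_singleton_of_minimal [DecidableEq α] (hT : Minimal (IsTransversal F) T)
    {x : α} (hx : x ∈ T) : ∃ A ∈ F, A ∩ T = {x} := by
  have herase : ¬ IsTransversal F (T.erase x) := hT.not_prop_of_lt (erase_ssubset hx)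
  simp only [IsTransversal, not_forall, not_not] at herase
  obtain ⟨A, hA, hdisj⟩ := herase
  refine ⟨A, hA, Nonempty.subset_singleton_iff ?_ |>.1 fun y hy => ?_⟩
  · exact not_disjoint_iff_nonempty_inter.1 (hT.prop A hA)
  · by_contra hyx
    rw [mem_inter] at hy
    exact disjoint_left.1 hdisj hy.1 (mem_erase.2 ⟨by simpa using hyx, hy.2⟩)

/-- The nonempty members of `R` with at most `h` elements. -/
def smallMembers (R : Set (Finset α)) (h : ℕ) : Set (Finset α) :=
  {A ∈ R | A.Nonempty ∧ #A ≤ h}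

theorem isTransversal_smallMembers_zero : IsTransversal (smallMembers R 0) T := by
  rintro A ⟨-, hA, hA0⟩
  exact absurd hA0 hA.card_pos.not_ge

theorem exists_monotone_card_eq (Y : Finset α) :
    ∃ Z : ℕ → Finset α, Monotone Z ∧ (∀ k, Z k ⊆ Y) ∧ ∀ k ≤ #Y, #(Z k) = k := by
  classical
  refine ⟨fun k => (Y.toList.take k).toFinset, fun k l hkl a ha => ?_, fun k a ha => ?_,
    fun k hk => ?_⟩
  · simp only [List.mem_toFinset] at ha ⊢
    exact (List.take_prefix_take_left hkl).subset ha
  · exact mem_toList.1 (List.mem_of_mem_take (List.mem_toFinset.1 ha))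
  · rw [List.toFinset_card_of_nodup (Y.nodup_toList.sublist (List.take_sublist _ _))]
    simpa using hk

-- A member of layer `k` of the embedded Boolean lattice on `n` points is going to be enlarged by a
-- set between `W k` and `W (k + 1)`. That set may be empty up to layer `h`, may be `Y` from layer
-- `n - h` on, and has `m` points of freedom in between.
theorem exists_layer_boundaries {Y : Finset α} {m n : ℕ}
    (hY : m * n ≤ #Y + m * (2 * h + 1)) :
    ∃ W : ℕ → Finset α, Monotone W ∧ (∀ k, W k ⊆ Y) ∧ (∀ k ≤ h, W k = ∅) ∧
      (∀ k, h < k → n < k + h → W k = Y) ∧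
      ∀ k, h < k → k + h < n → #(W k) + m ≤ #(W (k + 1)) := by
  obtain ⟨Z, hZ, hZY, hZcard⟩ := exists_monotone_card_eq Y
  have middle_le {k : ℕ} (hk : h < k) (hkn : k + h ≤ n) : m * (k - (h + 1)) ≤ #Y := by
    have : m * (k - (h + 1) + (2 * h + 1)) ≤ m * n := Nat.mul_le_mul_left m (by omega)
    rw [mul_add] at this
    omega
  let φ (k : ℕ) : ℕ := if k ≤ h then 0 else if n < k + h then #Y else m * (k - (h + 1))
  have hφ : Monotone φ := by
    intro k l hkl
    simp only [φ]
    split_ifs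
    any_goals omega
    · exact middle_le (by omega) (by omega)
    · exact Nat.mul_le_mul_left m (by omega)
  refine ⟨Z ∘ φ, hZ.comp hφ, fun k => hZY _, fun k hk => ?_, fun k hk hkn => ?_,
    fun k hk hkn => ?_⟩
  · simpa [φ, hk] using hZcard 0 (Nat.zero_le _)
  · have hφk : φ k = #Y := by simp [φ, hk.not_ge, hkn]
    exact eq_of_subset_of_card_le (hZY _) (by simp [hφk, hZcard])
  · have hφk : φ k = m * (k - (h + 1)) := by grind
    have hφk' : φ (k + 1) = m * (k - (h + 1)) + m := by
      have : k + 1 - (h + 1) = k - (h + 1) + 1 := by omega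
      grind
    have := middle_le (k := k + 1) (by omega) (by omega)
    simp only [Function.comp_apply]
    rw [hZcard, hZcard] <;> grind

variable [Fintype α]

theorem isTransversal_univ (hF : ∀ A ∈ F, A.Nonempty) : IsTransversal F univ :=
  fun A hA hdisj => (hF A hA).ne_empty (disjoint_top.1 hdisj)

/-- The family `P` contains a copy of the Boolean lattice on `ι`, except possibly for the members
`∅` and `univ` of that copy. Taking `P` to be the red (or the blue) sets of a 2-coloring gives the
copies of the modified Ramsey number, in which `∅` and `univ` have both colors. -/
def HasQuasiCopy (ι : Type*) (P : Set (Finset α)) : Prop :=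
  ∃ f : Finset ι ↪o Finset α, ∀ S, f S ≠ ∅ → f S ≠ univ → f S ∈ P

theorem hasQuasiCopy_iff_exists_injective :
    HasQuasiCopy ι P ↔ ∃ f : Finset ι → Finset α, Function.Injective f ∧
      (∀ S T, S ⊆ T ↔ f S ⊆ f T) ∧ ∀ S, f S ≠ ∅ → f S ≠ univ → f S ∈ P :=
  ⟨fun ⟨f, hf⟩ => ⟨f, f.injective, fun _ _ => f.le_iff_le.symm, hf⟩,
    fun ⟨f, _, hle, hf⟩ => ⟨OrderEmbedding.ofMapLEIff f fun S T => (hle S T).symm, hf⟩⟩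

theorem hasQuasiRedCopy_iff {m N : ℕ} {c : Finset (Fin N) → Bool} :
    HasQuasiRedCopy m N c ↔ HasQuasiCopy (Fin m) {S | c S = true} := by
  simp only [hasQuasiCopy_iff_exists_injective, HasQuasiRedCopy, Set.mem_ofPred_eq]

theorem hasQuasiBlueCopy_iff {m N : ℕ} {c : Finset (Fin N) → Bool} :
    HasQuasiBlueCopy m N c ↔ HasQuasiCopy (Fin m) {S | c S = true}ᶜ := by
  simp only [hasQuasiCopy_iff_exists_injective, HasQuasiBlueCopy, Set.mem_compl_iff,
    Set.mem_ofPred_eq, Bool.not_eq_true]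

namespace HasQuasiCopy

theorem of_monotone {f : Finset ι → Finset α} (hf : Monotone f) (e : ι → α)
    (he : ∀ S i, e i ∈ f S ↔ i ∈ S) (hP : ∀ S, f S ≠ ∅ → f S ≠ univ → f S ∈ P) :
    HasQuasiCopy ι P :=
  ⟨OrderEmbedding.ofMapLEIff f fun S T =>
    ⟨fun hST i hi => (he T i).1 (hST ((he S i).2 hi)), fun hST => hf hST⟩, hP⟩

theorem of_preimage_compl [Finite ι] [DecidableEq α]
    (hP : HasQuasiCopy ι (compl ⁻¹' P)) : HasQuasiCopy ι P := by
  classical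
  cases nonempty_fintype ι
  obtain ⟨f, hf⟩ := hP
  refine ⟨OrderEmbedding.ofMapLEIff (fun S => (f Sᶜ)ᶜ) fun S T => ?_, fun S hbot htop => ?_⟩
  · rw [compl_le_compl_iff_le, f.le_iff_le, compl_le_compl_iff_le]
  · exact hf Sᶜ (fun h0 => htop (by simp [h0])) (fun h1 => hbot (by simp [h1]))

theorem of_Icc_subset [Fintype ι] {B C : Finset α} (hBC : B ⊆ C)
    (hcard : #B + Fintype.card ι ≤ #C) (hP : Set.Icc B C ⊆ P) :
    HasQuasiCopy ι P := by
  classical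
  obtain ⟨e⟩ : Nonempty (ι ↪ (C \ B : Finset α)) := by
    apply Function.Embedding.nonempty_of_card_le
    rw [Fintype.card_coe, card_sdiff_of_subset hBC]
    omega
  let e' : ι ↪ α := e.trans (.subtype _)
  have he' (i : ι) : e' i ∈ C ∧ e' i ∉ B := mem_sdiff.1 (e i).2
  refine of_monotone (f := fun S => B ∪ S.map e')
    (fun S T hST => union_subset_union_right (map_subset_map.2 hST)) e' (fun S i => ?_)
    fun S _ _ => hP ⟨subset_union_left, union_subset hBC fun a ha => ?_⟩
  · simp [(he' i).2]
  · obtain ⟨i, -, rfl⟩ := mem_map.1 ha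
    exact (he' i).1

-- The `A i` become the atoms and the `B i` the coatoms; a Boolean lattice on three points has no
-- further elements than the bottom and the top, which are sent to `∅` and `univ`.
theorem of_subset_iff_ne [Fintype ι] (hι : Fintype.card ι ≤ 3)
    {A B : ι → Finset α} (hA : ∀ i, A i ∈ P) (hB : ∀ i, B i ∈ P)
    (hAB : ∀ i j, A i ⊆ B j ↔ i ≠ j) : HasQuasiCopy ι P := by
  classical
  have hx (i : ι) : ∃ x ∈ A i, x ∉ B i := not_subset.1 fun hi => (hAB i i).1 hi rfl
  choose x hxA hxB using hx
  have mem_A {i j : ι} : x i ∈ A j ↔ i = j :=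
    ⟨fun hi => by_contra fun hij => hxB i ((hAB j i).2 (Ne.symm hij) hi), fun hij => hij ▸ hxA i⟩
  have mem_B {i j : ι} : x i ∈ B j ↔ i ≠ j :=
    ⟨fun hi hij => hxB i (hij ▸ hi), fun hij => (hAB i j).2 hij (hxA i)⟩
  have sup_A_le_inf_B {S T : Finset ι} (hST : S ⊆ T) : S.sup A ≤ Tᶜ.inf B :=
    Finset.sup_le fun i hi => Finset.le_inf fun j hj =>
      (hAB i j).2 fun hij => mem_compl.1 hj (hij ▸ hST hi)
  refine of_monotone (f := fun S => if #S ≤ 1 then S.sup A else Sᶜ.inf B)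
    (fun S T hST => ?_) x (fun S i => ?_) fun S hbot htop => ?_
  · have hcard := card_le_card hST
    dsimp only
    split_ifs with hS hT hT
    · exact sup_mono hST
    · exact sup_A_le_inf_B hST
    · omega
    · exact inf_mono (compl_subset_compl.2 hST)
  · split_ifs
    · simp [mem_sup, mem_A]
    · rw [← singleton_subset_iff, Finset.le_inf_iff]
      simp only [singleton_subset_iff, mem_B, mem_compl]
      grind
  · split_ifs at hbot htop ⊢ with hS
    · obtain rfl | ⟨i, rfl⟩ : S = ∅ ∨ ∃ i, S = {i} := by
        rwa [Nat.le_one_iff_eq_zero_or_eq_one, card_eq_zero, card_eq_one] at hS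
      · simp at hbot
      · simpa using hA i
    · have hSc : #Sᶜ ≤ 1 := by rw [card_compl]; omega
      rw [Nat.le_one_iff_eq_zero_or_eq_one, card_eq_zero, card_eq_one] at hSc
      obtain hSc | ⟨i, hSc⟩ := hSc
      · simp [hSc] at htop
      · simpa [hSc] using hB i

theorem of_layers [DecidableEq α] (e : ι ↪ α) {W : ℕ → Finset α} (hW : Monotone W)
    (heW : ∀ i k, e i ∉ W k)
    (hP : ∀ S : Finset ι, ∃ F ∈ Set.Icc (S.map e ∪ W #S) (S.map e ∪ W (#S + 1)),
      F ≠ ∅ → F ≠ univ → F ∈ P) :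
    HasQuasiCopy ι P := by
  choose f hf hfP using hP
  refine of_monotone (f := f) (fun S T hST => ?_) e (fun S i => ⟨fun hi => ?_, fun hi => ?_⟩) hfP
  · obtain rfl | hlt := eq_or_ssubset_of_subset hST
    · exact le_rfl
    calc f S ⊆ S.map e ∪ W (#S + 1) := (hf S).2
      _ ⊆ T.map e ∪ W #T := union_subset_union (map_subset_map.2 hST) (hW (card_lt_card hlt))
      _ ⊆ f T := (hf T).1
  · simpa [heW] using (hf S).2 hi
  · exact (hf S).1 (mem_union_left _ (mem_map_of_mem e hi))

end HasQuasiCopy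

theorem exists_mem_Icc_notMem [Fintype ι] (hP : ¬ HasQuasiCopy ι P)
    {B C : Finset α} (hBC : B ⊆ C) (hcard : #B + Fintype.card ι ≤ #C) :
    ∃ F ∈ Set.Icc B C, F ∉ P :=
  Set.not_subset.1 fun hIcc => hP (.of_Icc_subset hBC hcard hIcc)

theorem exists_isTransversal_card_le_two [Fintype ι]
    (hred : ¬ HasQuasiCopy (Fin 3) R) (hblue : ¬ HasQuasiCopy ι Rᶜ)
    (hcard : Fintype.card ι + 2 * h + 1 ≤ Fintype.card α) :
    ∃ T, IsTransversal (smallMembers R h) T ∧ #T ≤ 2 := by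
  classical
  obtain ⟨T, hT⟩ := exists_minimal_of_wellFoundedLT (IsTransversal (smallMembers R h))
    ⟨univ, isTransversal_univ fun _ hA => hA.2.1⟩
  refine ⟨T, hT.prop, by_contra fun hT3 => hred ?_⟩
  obtain ⟨x⟩ : Nonempty (Fin 3 ↪ T) :=
    Function.Embedding.nonempty_of_card_le (by simp; omega)
  choose A hA hAT using fun i => exists_inter_eq_singleton_of_minimal hT (x i).2
  have mem_A (i j : Fin 3) : (x i : α) ∈ A j ↔ i = j := by
    have hij : (x i : α) ∈ A j ∩ T ↔ i = j := by
      rw [hAT j, mem_singleton, Subtype.val_inj, x.injective.eq_iff]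
    simpa using hij
  have hB (j : Fin 3) : ∃ B ∈ Set.Icc ((univ.erase j).biUnion A) {(x j : α)}ᶜ, B ∈ R := by
    have hsub : (univ.erase j).biUnion A ⊆ {(x j : α)}ᶜ := by
      simp only [subset_compl_singleton, mem_biUnion, mem_erase, mem_A]
      grind
    have hunion : #((univ.erase j).biUnion A) ≤ 2 * h := by
      simpa using card_biUnion_le_card_mul (univ.erase j) A h fun i _ => (hA i).2.2
    simpa using exists_mem_Icc_notMem hblue hsub (by rw [card_compl, card_singleton]; omega)
  choose B hB hBR using hB
  refine .of_subset_iff_ne (by simp) (fun i => (hA i).1) hBR fun i j => ⟨?_, fun hij => ?_⟩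
  · rintro hAB rfl
    simpa using (hB i).2 (hAB ((mem_A i i).2 rfl))
  · exact (subset_biUnion_of_mem A (by simpa using hij)).trans (hB j).1

theorem HasQuasiCopy.of_isTransversal [Fintype ι] [Fintype κ] [DecidableEq α] {Y : Finset α}
    (hred : ¬ HasQuasiCopy κ R) (hcard : Fintype.card ι + #Y = Fintype.card α)
    (hY : Fintype.card κ * Fintype.card ι ≤ #Y + Fintype.card κ * (2 * h + 1))
    (hlow : IsTransversal (smallMembers R h) Y)
    (hhigh : IsTransversal (smallMembers (compl ⁻¹' R) h) Y) :
    HasQuasiCopy ι Rᶜ := by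
  obtain ⟨W, hW, hWY, hW_low, hW_high, hW_card⟩ := exists_layer_boundaries hY
  obtain ⟨e⟩ : Nonempty (ι ↪ (Yᶜ : Finset α)) := by
    apply Function.Embedding.nonempty_of_card_le
    rw [Fintype.card_coe, card_compl]
    omega
  let e' : ι ↪ α := e.trans (.subtype _)
  have he' (i : ι) : e' i ∉ Y := mem_compl.1 (e i).2
  have hdisj (S : Finset ι) : Disjoint (S.map e') Y := by
    simpa [disjoint_left] using fun i _ => he' i
  have hunion (S : Finset ι) (k : ℕ) : #(S.map e' ∪ W k) = #S + #(W k) := by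
    rw [card_union_of_disjoint ((hdisj S).mono_right (hWY k)), card_map]
  refine .of_layers e' hW (fun i k hi => he' i (hWY k hi)) fun S => ?_
  by_cases hS : #S ≤ h
  · refine ⟨S.map e', ⟨by simp [hW_low _ hS], subset_union_left⟩, fun hne _ hSR => ?_⟩
    exact hlow _ ⟨hSR, nonempty_iff_ne_empty.2 hne, by simpa using hS⟩ (hdisj S)
  by_cases hS' : Fintype.card ι ≤ #S + h
  · rw [hW_high (#S + 1) (by omega) (by omega)]
    refine ⟨S.map e' ∪ Y, ⟨union_subset_union_right (hWY _), le_rfl⟩, fun _ hne hSR => ?_⟩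
    refine hhigh (S.map e' ∪ Y)ᶜ ⟨by simpa using hSR, ?_, ?_⟩ ?_
    · rwa [nonempty_iff_ne_empty, Ne, compl_eq_empty_iff]
    · rw [card_compl, card_union_of_disjoint (hdisj S), card_map]
      omega
    · exact disjoint_compl_left.mono_right subset_union_right
  · obtain ⟨F, hF, hFR⟩ := exists_mem_Icc_notMem hred
      (union_subset_union_right (s := S.map e') (hW (by omega : #S ≤ #S + 1)))
      (by have := hW_card #S (by omega) (by omega); rw [hunion, hunion]; omega)
    exact ⟨F, hF, fun _ _ => hFR⟩

end BooleanRamsey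

open BooleanRamsey

theorem hat_ramsey_Q3_Qn_general {ι α : Type*} [Fintype ι] [Fintype α]
    (hcard : 7 * Fintype.card ι + 7 ≤ 4 * Fintype.card α) (R : Set (Finset α)) :
    HasQuasiCopy (Fin 3) R ∨ HasQuasiCopy ι Rᶜ := by
  classical
  by_contra! ⟨hred, hblue⟩
  obtain hι | hι := le_or_gt (Fintype.card ι) 1
  · -- Any `Y` of the right size will do, since there are no small members for `h = 0`.
    obtain ⟨Y, -, hY⟩ := exists_superset_card_eq (s := (∅ : Finset α))
      (n := Fintype.card α - Fintype.card ι) (by simp) (by omega)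
    exact hblue <| .of_isTransversal (Y := Y) hred (by omega)
      (by simp only [Fintype.card_fin]; omega) isTransversal_smallMembers_zero
      isTransversal_smallMembers_zero
  let h := (Fintype.card α - Fintype.card ι - 1) / 2
  have hh : Fintype.card ι + 2 * h + 1 ≤ Fintype.card α := by omega
  obtain ⟨T, hT, hTcard⟩ := exists_isTransversal_card_le_two hred hblue hh
  obtain ⟨T', hT', hTcard'⟩ := exists_isTransversal_card_le_two
    (mt .of_preimage_compl hred) (Set.preimage_compl ▸ mt .of_preimage_compl hblue) hh
  -- The constant `7` in `hcard` makes `card α - card ι ≥ 4` for `card ι ≥ 2`: room for `T ∪ T'`.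
  obtain ⟨Y, hTY, hY⟩ := exists_superset_card_eq (s := T ∪ T')
    (n := Fintype.card α - Fintype.card ι) (by have := card_union_le T T'; omega) (by omega)
  exact hblue <| .of_isTransversal hred (by omega) (by simp only [Fintype.card_fin]; omega)
    (hT.mono (union_subset_left hTY)) (hT'.mono (union_subset_right hTY))

/-- if n ≥ 1 and 4N ≥ 7n + 9, every 2-coloring of Q_N contains a copy of Q_3
red except possibly at ∅ and [N], or a copy of Q_n blue except possibly at ∅ and [N];
i.e. R̂(Q_3, Q_n) ≤ (7/4)n + 9/4. -/
theorem hat_ramsey_Q3_Qn (n N : ℕ) (hn : 1 ≤ n) (hN : 4 * N ≥ 7 * n + 9)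
    (c : Finset (Fin N) → Bool) :
    HasQuasiRedCopy 3 N c ∨ HasQuasiBlueCopy n N c := by
  rw [hasQuasiRedCopy_iff, hasQuasiBlueCopy_iff]
  exact hat_ramsey_Q3_Qn_general (by simp only [Fintype.card_fin]; omega) _
end

section
/- For all integers n ≥ m ≥ 4 and every integer N satisfying (N : ℝ) ≥ (m − 2 + 3/(2m − 3))·n + m, every 2-coloring of the Boolean lattice Q_N contains a copy of Q_m all of whose elements other than possibly the empty set and the full ground set [N] are red, or a copy of Q_n all of whose elements other than possibly the empty set and [N] are blue. (Equivalently, R̂(Q_m, Q_n) ≤ (m − 2 + 3/(2m − 3))n + m for all n ≥ m ≥ 4.) -/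
/-!
Suppose that there is neither a red `Q m` nor a blue `Q n`. Then every interval of length `n`
contains a red set and every interval of length `m` a blue one, so a copy of `Q m` can be built by
sending `S ⊆ Y`, where `#Y = m`, to a red set between `S ∪ G` and `S ∪ G'` for consecutive members
of a chain of subsets of `Yᶜ` (and dually for `Q n`). Done naively this costs one gap for each of
the `m + 1` levels. As `∅` and `univ` are free, savings come from the levels next to them.

If each `y ∈ Y` has a set `T y` of at most `p` elements of `Yᶜ` with `insert y (T y)` red, then the
levels `0` and `1` cost nothing, provided that the later levels contain the sets `T y`; making the
chain swallow their union first keeps the price of this low. Sets `C y` of size at most `q` whose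
unions with `{y}` have red complements do the same for the top two levels. If on the other hand such
`T y` or `C y` do not exist, then for some `a` all sets `insert a T` with `#T < p` are blue, or
dually all complements of `insert b C` with `#C < q`, and levels of a blue `Q n` come for free.
Taking `p` and `q` to be the thresholds between the two alternatives, the failure of the blue copy
gives `m * p + m * q + M ≤ m * n + n + 1` with `M = N - m`, and under the assumed bound
this makes the red copy possible. The ramps from both ends of the chain meet at level `2` if
`m ≤ 12` and at level `3` if `m ≥ 13`.
-/

open Finset

section QuasiCopies

variable {α : Type*} [Fintype α]

/-- The 2-colored lattice of subsets of `α` contains a copy of `Q n` all of whose elements other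
than possibly `∅` and `univ` have color `b`. This treats `HasQuasiRedCopy` (`b = true`) and
`HasQuasiBlueCopy` (`b = false`) uniformly. -/
def HasQuasiCopy (n : ℕ) (c : Finset α → Bool) (b : Bool) : Prop :=
  ∃ f : Finset (Fin n) ↪o Finset α, ∀ S, f S ≠ ∅ → f S ≠ univ → c (f S) = b

theorem HasQuasiCopy.hasQuasiRedCopy {n N : ℕ} {c : Finset (Fin N) → Bool} :
    HasQuasiCopy n c true → HasQuasiRedCopy n N c :=
  fun ⟨f, hf⟩ => ⟨f, f.injective, fun _ _ => f.le_iff_le.symm, hf⟩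

theorem HasQuasiCopy.hasQuasiBlueCopy {n N : ℕ} {c : Finset (Fin N) → Bool} :
    HasQuasiCopy n c false → HasQuasiBlueCopy n N c :=
  fun ⟨f, hf⟩ => ⟨f, f.injective, fun _ _ => f.le_iff_le.symm, hf⟩

variable {n : ℕ} {c : Finset α → Bool} {b : Bool}

theorem HasQuasiCopy.of_compl [DecidableEq α] (h : HasQuasiCopy n (c ∘ compl) b) :
    HasQuasiCopy n c b := by
  obtain ⟨f, hf⟩ := h
  refine ⟨OrderEmbedding.ofMapLEIff (fun S => (f Sᶜ)ᶜ) fun S T => ?_, fun S h0 h1 => hf Sᶜ ?_ ?_⟩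
  · rw [compl_le_compl_iff_le, f.le_iff_le, compl_le_compl_iff_le]
  · simpa using h1
  · simpa using h0

theorem HasQuasiCopy.of_intervals [DecidableEq α] {X : Finset α} {lo hi : Finset α → Finset α}
    (subset_lo : ∀ S ⊆ X, S ⊆ lo S) (hi_inter : ∀ S ⊆ X, hi S ∩ X ⊆ S)
    (hi_subset_lo : ∀ S T, S ⊂ T → T ⊆ X → hi S ⊆ lo T)
    (exists_color : ∀ S ⊆ X, ∃ F, lo S ⊆ F ∧ F ⊆ hi S ∧ (F ≠ ∅ → F ≠ univ → c F = b)) :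
    HasQuasiCopy #X c b := by
  choose! F lo_le le_hi hF using exists_color
  let e : Fin #X ↪ α := (X.equivFin.symm.toEmbedding).trans (.subtype _)
  have he (S : Finset (Fin #X)) : S.map e ⊆ X := by
    intro x hx
    obtain ⟨i, -, rfl⟩ := mem_map.1 hx
    exact (X.equivFin.symm i).2
  have hmono (S T : Finset α) (hST : S ⊆ T) (hT : T ⊆ X) : F S ⊆ F T := by
    rcases hST.eq_or_ssubset with rfl | hlt
    · rfl
    · exact (le_hi S (hST.trans hT)).trans ((hi_subset_lo S T hlt hT).trans (lo_le T hT))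
  have htrace (S T : Finset α) (hS : S ⊆ X) (hT : T ⊆ X) (hF : F S ⊆ F T) : S ⊆ T := fun x hx =>
    hi_inter T hT <| mem_inter.2 ⟨le_hi T hT (hF (lo_le S hS (subset_lo S hS hx))), hS hx⟩
  refine ⟨.ofMapLEIff (fun S => F (S.map e)) fun S T => ⟨fun h => ?_, fun h => ?_⟩,
    fun S => hF _ (he S)⟩
  · exact map_subset_map.1 (htrace _ _ (he S) (he T) h)
  · exact hmono _ _ (map_subset_map.2 h) (he T)

theorem hasQuasiCopy_zero : HasQuasiCopy 0 c b := by
  classical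
  exact .of_intervals (X := ∅) (lo := fun _ => ∅) (hi := fun _ => ∅) (fun _ => id)
    (fun S _ => inter_subset_left.trans (empty_subset S)) (fun _ _ _ _ => subset_rfl)
    fun _ _ => ⟨∅, subset_rfl, subset_rfl, fun h => (h rfl).elim⟩

theorem HasQuasiCopy.of_Icc {A B : Finset α} (hAB : A ⊆ B) (hcard : #A + n ≤ #B)
    (h : ∀ F, A ⊆ F → F ⊆ B → c F = b) : HasQuasiCopy n c b := by
  classical
  obtain ⟨X, hX, rfl⟩ := exists_subset_card_eq (s := B \ A) (n := n)
    (by rw [card_sdiff_of_subset hAB]; omega)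
  obtain ⟨hXB, hXA⟩ := subset_sdiff.1 hX
  refine .of_intervals (X := X) (lo := (A ∪ ·)) (hi := (A ∪ ·)) (fun S _ => subset_union_right)
    (fun S _ => ?_) (fun S T hST _ => union_subset_union_right hST.subset)
    (fun S hS => ⟨A ∪ S, subset_rfl, subset_rfl, fun _ _ =>
      h _ subset_union_left (union_subset hAB (hS.trans hXB))⟩)
  rw [union_inter_distrib_right, disjoint_iff_inter_eq_empty.1 hXA.symm, empty_union]
  exact inter_subset_left

theorem exists_color_eq_of_not_hasQuasiCopy (h : ¬ HasQuasiCopy n c (!b)) {A B : Finset α}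
    (hAB : A ⊆ B) (hcard : #A + n ≤ #B) : ∃ F, A ⊆ F ∧ F ⊆ B ∧ c F = b := by
  contrapose! h
  exact .of_Icc hAB hcard fun F hAF hFB => Bool.eq_not.2 (h F hAF hFB)

end QuasiCopies

section Chains

variable {α : Type*}

theorem exists_chain_through_s10 {A B M : Finset α} (hAB : A ⊆ B) (hBM : B ⊆ M) :
    ∃ G : ℕ → Finset α, Monotone G ∧ (∀ i, G i ⊆ M) ∧ (∀ i ≤ #M, #(G i) = i) ∧
      G #A = A ∧ G #B = B := by
  classical
  let l := A.toList ++ ((B \ A).toList ++ (M \ B).toList)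
  have hl : l.toFinset = M := by
    simp [l, ← union_assoc, union_sdiff_of_subset hAB, union_sdiff_of_subset hBM]
  have hcard : #A + (#(B \ A) + #(M \ B)) = #M := by
    rw [← card_sdiff_add_card_eq_card hBM, ← card_sdiff_add_card_eq_card hAB]; ring
  have hlen : l.length = #M := by simpa [l] using hcard
  have hnodup : l.Nodup := by
    rw [← Multiset.coe_nodup, ← Multiset.toFinset_card_eq_card_iff_nodup]
    exact (congrArg card hl).trans hlen.symm
  refine ⟨fun i => (l.take i).toFinset, fun i j hij => ?_, fun i => ?_, fun i hi => ?_, ?_, ?_⟩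
  · exact fun x hx => List.mem_toFinset.2 <|
      List.take_subset_take_left _ hij (List.mem_toFinset.1 hx)
  · exact fun x hx => hl.subset <|
      List.mem_toFinset.2 (List.mem_of_mem_take (List.mem_toFinset.1 hx))
  · rw [List.toFinset_card_of_nodup (hnodup.sublist (List.take_sublist _ _)),
      List.length_take, hlen, min_eq_left hi]
  · simp only [l]
    rw [List.take_left' (length_toList A), toList_toFinset]
  · simp only [l]
    rw [← List.append_assoc, List.take_left', List.toFinset_append, toList_toFinset,
      toList_toFinset, union_sdiff_of_subset hAB]
    rw [List.length_append, length_toList, length_toList, add_comm,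
      card_sdiff_add_card_eq_card hAB]

theorem card_sdiff_of_chain [DecidableEq α] {G : ℕ → Finset α} {k : ℕ} (hG : Monotone G)
    (hcard : ∀ i ≤ k, #(G i) = i) {i j : ℕ} (hi : i ≤ k) (hj : j ≤ k) :
    #(G j \ G i) = j - i := by
  rcases le_total i j with hij | hij
  · rw [card_sdiff_of_subset (hG hij), hcard i hi, hcard j hj]
  · rw [sdiff_eq_empty_iff_subset.2 (hG hij), card_empty, Nat.sub_eq_zero_of_le hij]

theorem card_biUnion_sdiff_chain_le [DecidableEq α] {G : ℕ → Finset α} {k : ℕ} (hG : Monotone G)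
    (hcard : ∀ i ≤ k, #(G i) = i) {Y S : Finset α} {T : α → Finset α} {p : ℕ}
    (hTp : ∀ y ∈ Y, #(T y) ≤ p) (hT : G #(Y.biUnion T) = Y.biUnion T) (hTk : #(Y.biUnion T) ≤ k)
    (hS : S ⊆ Y) {i : ℕ} (hi : i ≤ k) : #(S.biUnion T \ G i) ≤ min (#S * p) (#Y * p - i) := by
  refine le_min ((card_le_card sdiff_subset).trans ?_) ?_
  · exact card_biUnion_le_card_mul _ _ _ fun y hy => hTp y (hS hy)
  · calc #(S.biUnion T \ G i) ≤ #(G #(Y.biUnion T) \ G i) :=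
          hT.symm ▸ card_le_card (sdiff_subset_sdiff (biUnion_subset_biUnion_of_subset_left T hS)
            subset_rfl)
      _ = #(Y.biUnion T) - i := card_sdiff_of_chain hG hcard hi hTk
      _ ≤ #Y * p - i := Nat.sub_le_sub_right (card_biUnion_le_card_mul _ _ _ hTp) _

theorem card_chain_inter_biUnion_le [DecidableEq α] {G : ℕ → Finset α} {k : ℕ} (hG : Monotone G)
    (hcard : ∀ i ≤ k, #(G i) = i) {Y S : Finset α} {C : α → Finset α} {q : ℕ}
    (hCq : ∀ y ∈ Y, #(C y) ≤ q) (hC : Disjoint (G (k - #(Y.biUnion C))) (Y.biUnion C))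
    (hS : S ⊆ Y) {j : ℕ} (hj : j ≤ k) :
    #(G j ∩ (Y \ S).biUnion C) ≤ min ((#Y - #S) * q) (j + #Y * q - k) := by
  have hYS : #((Y \ S).biUnion C) ≤ (#Y - #S) * q := card_sdiff_of_subset hS ▸
    card_biUnion_le_card_mul _ _ _ fun y hy => hCq y (mem_sdiff.1 hy).1
  have hU : #(Y.biUnion C) ≤ #Y * q := card_biUnion_le_card_mul _ _ _ hCq
  have hsub : G j ∩ (Y \ S).biUnion C ⊆ G j \ G (k - #(Y.biUnion C)) := fun x hx =>
    mem_sdiff.2 ⟨(mem_inter.1 hx).1, fun hxG => disjoint_left.1 hC hxG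
      (biUnion_subset_biUnion_of_subset_left C sdiff_subset (mem_inter.1 hx).2)⟩
  have hle := card_le_card hsub
  rw [card_sdiff_of_chain hG hcard (Nat.sub_le _ _) hj] at hle
  exact le_min ((card_le_card inter_subset_right).trans hYS) (by omega)

end Chains

section Layers

variable {α : Type*} [DecidableEq α] {Y S S' A A' : Finset α} {T C : α → Finset α}

/-- The set with trace `S` on `Y` obtained from a chain element `A` disjoint from `Y` by adding the
sets `T y` for `y ∈ S` and removing the sets `C y` for `y ∈ Y \ S`. The red copy is
assembled from sets lying between `layer Y T C A S` and `layer Y T C A' S` for two consecutive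
chain elements `A ⊆ A'` attached to the level `#S`. -/
def layer (Y : Finset α) (T C : α → Finset α) (A S : Finset α) : Finset α :=
  S ∪ ((A ∪ S.biUnion T) \ (Y \ S).biUnion C)

theorem subset_layer : S ⊆ layer Y T C A S := subset_union_left

theorem layer_mono (hA : A ⊆ A') (hS : S ⊆ S') : layer Y T C A S ⊆ layer Y T C A' S' :=
  union_subset_union hS <| sdiff_subset_sdiff
    (union_subset_union hA (biUnion_subset_biUnion_of_subset_left T hS))
    (biUnion_subset_biUnion_of_subset_left C (sdiff_subset_sdiff subset_rfl hS))

theorem layer_inter_subset (hAY : Disjoint A Y) (hTY : ∀ y ∈ Y, Disjoint (T y) Y) (hS : S ⊆ Y) :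
    layer Y T C A S ∩ Y ⊆ S := by
  have hdisj : Disjoint (A ∪ S.biUnion T) Y :=
    disjoint_union_left.2 ⟨hAY, (disjoint_biUnion_left _ _ _).2 fun y hy => hTY y (hS hy)⟩
  rw [layer, union_inter_distrib_right,
    disjoint_iff_inter_eq_empty.1 (hdisj.mono_left sdiff_subset), union_empty]
  exact inter_subset_left

theorem layer_empty_empty : layer Y T C ∅ ∅ = ∅ := by
  simp [layer]

theorem layer_empty_singleton {y : α} (hTC : ∀ z ∈ Y, Disjoint (T y) (C z)) :
    layer Y T C ∅ {y} = insert y (T y) := by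
  have hdisj : Disjoint (T y) ((Y \ {y}).biUnion C) :=
    (disjoint_biUnion_right _ _ _).2 fun z hz => hTC z (mem_sdiff.1 hz).1
  simp only [layer, singleton_biUnion, empty_union, sdiff_eq_self_of_disjoint hdisj]
  rfl

variable [Fintype α]

theorem layer_compl_self : layer Y T C Yᶜ Y = univ := by
  simp [layer, ← union_assoc]

theorem layer_compl_erase {y : α} (hy : y ∈ Y) (hT : ∀ z ∈ Y, Disjoint (T z) Y)
    (hC : Disjoint (C y) Y) : layer Y T C Yᶜ (Y.erase y) = (insert y (C y))ᶜ := by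
  have hTY : Yᶜ ∪ (Y.erase y).biUnion T = Yᶜ := union_eq_left.2 <| biUnion_subset.2 fun z hz =>
    subset_compl_iff_disjoint_right.2 (hT z (mem_of_mem_erase hz))
  rw [layer, hTY, sdiff_erase hy, sdiff_self, bot_eq_empty, insert_empty_eq, singleton_biUnion]
  ext x
  have hxC : x ∈ C y → x ∉ Y := fun h => disjoint_left.1 hC h
  simp only [mem_union, mem_erase, mem_sdiff, mem_compl, mem_insert]
  by_cases hxy : x = y
  · simp [hxy, hy]
  · tauto

theorem exists_red_between_layers {c : Finset α → Bool} {n : ℕ} (hblue : ¬ HasQuasiCopy n c false)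
    {B : Finset α} (hAB : A ⊆ B) (hBY : Disjoint B Y) (hS : S ⊆ Y)
    (hcard : #A + n + #(S.biUnion T \ A) + #(B ∩ (Y \ S).biUnion C) ≤ #B) :
    ∃ F, layer Y T C A S ⊆ F ∧ F ⊆ layer Y T C B S ∧ c F = true := by
  refine exists_color_eq_of_not_hasQuasiCopy hblue (layer_mono hAB subset_rfl) ?_
  have hsub : B \ A ⊆ (layer Y T C B S \ layer Y T C A S) ∪
      (S.biUnion T \ A ∪ B ∩ (Y \ S).biUnion C) := by
    intro x hx
    have hxS : x ∉ S := fun h => disjoint_left.1 hBY (mem_sdiff.1 hx).1 (hS h)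
    simp only [layer, mem_union, mem_sdiff, mem_inter] at hx ⊢
    tauto
  have hle := (card_le_card hsub).trans ((card_union_le _ _).trans
    (Nat.add_le_add_left (card_union_le _ _) _))
  rw [card_sdiff_of_subset hAB, card_sdiff_of_subset (layer_mono hAB subset_rfl)] at hle
  have := card_le_card (layer_mono (Y := Y) (T := T) (C := C) hAB (subset_refl S))
  have := card_le_card hAB
  omega

end Layers

section RedCopies

variable {α : Type*} [DecidableEq α]

/-- Every `y ∈ Y` becomes red after adding at most `p` elements `T y` of `W`. Applied to
`c ∘ compl`, the notion says that the complements of the sets `insert y (T y)` are red. -/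
structure IsSeeding (c : Finset α → Bool) (W Y : Finset α) (p : ℕ) (T : α → Finset α) : Prop where
  subset : ∀ y ∈ Y, T y ⊆ W
  card_le : ∀ y ∈ Y, #(T y) ≤ p
  red : ∀ y ∈ Y, c (insert y (T y)) = true

variable [Fintype α] {c : Finset α → Bool} {n p q : ℕ} {V W Y : Finset α} {T C : α → Finset α}

theorem hasQuasiCopy_true_of_layers (hblue : ¬ HasQuasiCopy n c false)
    (hTY : ∀ y ∈ Y, Disjoint (T y) Y) (hCY : ∀ y ∈ Y, Disjoint (C y) Y)
    (hTC : ∀ y ∈ Y, ∀ z ∈ Y, Disjoint (T y) (C z)) (hred : ∀ y ∈ Y, c (insert y (T y)) = true)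
    {A : ℕ → Finset α} (hA : Monotone A) (hAY : ∀ l, Disjoint (A l) Y) (hA_two : A 2 = ∅)
    (hA_last : A (#Y + 1) = Yᶜ)
    (hlevel : ∀ S ⊆ Y, 2 ≤ #S → #S < #Y →
      (#S + 1 = #Y ∧ A #S = Yᶜ ∧ ∀ y ∈ Y, c (insert y (C y))ᶜ = true) ∨
      #(A #S) + n + #(S.biUnion T \ A #S) + #(A (#S + 1) ∩ (Y \ S).biUnion C) ≤ #(A (#S + 1))) :
    HasQuasiCopy #Y c true := by
  have hA_empty {l : ℕ} (hl : l ≤ 2) : A l = ∅ := subset_empty.1 (hA_two ▸ hA hl)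
  refine .of_intervals (lo := fun S => layer Y T C (A #S) S)
    (hi := fun S => layer Y T C (A (#S + 1)) S) (fun S _ => subset_layer)
    (fun S hS => layer_inter_subset (hAY _) hTY hS)
    (fun S S' hlt _ => layer_mono (hA (card_lt_card hlt)) hlt.subset) fun S hS => ?_
  have hlo_hi : layer Y T C (A #S) S ⊆ layer Y T C (A (#S + 1)) S :=
    layer_mono (hA (Nat.le_succ _)) subset_rfl
  rcases hS.eq_or_ssubset with rfl | hSY
  · exact ⟨univ, subset_univ _, by rw [hA_last, layer_compl_self], fun _ h => (h rfl).elim⟩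
  have hcard := card_lt_card hSY
  rcases Nat.lt_or_ge #S 2 with hS2 | hS2
  · rcases S.eq_empty_or_nonempty with rfl | hne
    · refine ⟨∅, ?_, empty_subset _, fun h => (h rfl).elim⟩
      rw [card_empty, hA_empty (Nat.zero_le 2), layer_empty_empty]
    · obtain ⟨y, rfl⟩ := card_eq_one.1 (le_antisymm (Nat.le_of_lt_succ hS2) hne.card_pos)
      have hy := singleton_subset_iff.1 hS
      refine ⟨_, subset_rfl, hlo_hi, fun _ _ => ?_⟩
      rw [card_singleton, hA_empty one_le_two, layer_empty_singleton (hTC y hy)]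
      exact hred y hy
  rcases hlevel S hS hS2 hcard with ⟨hco, hAS, hCred⟩ | hgap
  · obtain ⟨y, hyS, rfl⟩ := exists_eq_insert_iff.2 ⟨hS, hco⟩
    have hlayer := layer_compl_erase (mem_insert_self y S) hTY (hCY y (mem_insert_self y S))
    rw [erase_insert hyS] at hlayer
    refine ⟨_, subset_rfl, hlo_hi, fun _ _ => ?_⟩
    rw [hAS, hlayer]
    exact hCred y (mem_insert_self y S)
  · obtain ⟨F, hloF, hFhi, hF⟩ :=
      exists_red_between_layers hblue (hA (Nat.le_succ _)) (hAY _) hS hgap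
    exact ⟨F, hloF, hFhi, fun _ _ => hF⟩

theorem hasQuasiCopy_true_of_levels (hblue : ¬ HasQuasiCopy n c false) (hYW : Disjoint Y W)
    (hYV : Disjoint Y V) (hWV : Disjoint W V) (hT : IsSeeding c W Y p T)
    (hCV : ∀ y ∈ Y, C y ⊆ V) (hCq : ∀ y ∈ Y, #(C y) ≤ q) {r : ℕ → ℕ} (hr : Monotone r)
    (hr_two : r 2 = 0) (hr_le : ∀ l, r l ≤ #Yᶜ) (hr_last : r (#Y + 1) = #Yᶜ)
    (hlevel : ∀ l, 2 ≤ l → l < #Y →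
      (l + 1 = #Y ∧ r l = #Yᶜ ∧ ∀ y ∈ Y, c (insert y (C y))ᶜ = true) ∨
      r l + n + min (l * p) (#Y * p - r l) +
        min ((#Y - l) * q) (r (l + 1) + #Y * q - #Yᶜ) ≤ r (l + 1)) :
    HasQuasiCopy #Y c true := by
  have hTU : Y.biUnion T ⊆ W := biUnion_subset.2 hT.subset
  have hCU : Y.biUnion C ⊆ V := biUnion_subset.2 hCV
  have hCM : Y.biUnion C ⊆ Yᶜ := hCU.trans (subset_compl_iff_disjoint_left.2 hYV)
  have hTM : Y.biUnion T ⊆ Yᶜ \ Y.biUnion C := subset_sdiff.2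
    ⟨hTU.trans (subset_compl_iff_disjoint_left.2 hYW), hWV.mono hTU hCU⟩
  obtain ⟨G, hG, hGM, hGcard, hGT, hGC⟩ := exists_chain_through_s10 hTM sdiff_subset
  rw [card_sdiff_of_subset hCM] at hGC
  refine hasQuasiCopy_true_of_layers (A := G ∘ r) hblue
    (fun y hy => (hYW.mono_right (hT.subset y hy)).symm)
    (fun y hy => (hYV.mono_right (hCV y hy)).symm)
    (fun y hy z hz => hWV.mono (hT.subset y hy) (hCV z hz)) hT.red (hG.comp hr)
    (fun l => subset_compl_iff_disjoint_right.1 (hGM _)) ?_ ?_ fun S hS hS2 hSY => ?_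
  · exact card_eq_zero.1 ((hGcard _ (hr_le 2)).trans hr_two)
  · exact eq_of_subset_of_card_le (hGM _) ((hGcard _ (hr_le _)).trans hr_last).ge
  · have hTloss := card_biUnion_sdiff_chain_le hG hGcard hT.card_le hGT
      (card_le_card (hTM.trans sdiff_subset)) hS (hr_le #S)
    have hCloss := card_chain_inter_biUnion_le hG hGcard hCq (hGC ▸ sdiff_disjoint) hS
      (hr_le (#S + 1))
    refine (hlevel _ hS2 hSY).imp (fun h => ⟨h.1, ?_, h.2.2⟩) fun h => ?_
    · exact eq_of_subset_of_card_le (hGM _) ((hGcard _ (hr_le _)).trans h.2.1).ge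
    · rw [Function.comp_apply, Function.comp_apply, hGcard _ (hr_le _), hGcard _ (hr_le _)]
      omega

/-- A sequence of chain heights along which a red copy can be continued from level `2` upwards:
at level `l` at most `l * p` elements, and none beyond the first `m * p` elements of the chain, are
lost to the sets of a seeding, and `n` further ones guarantee a red set. -/
structure IsRamp (n m p : ℕ) (u : ℕ → ℕ) : Prop where
  eq_zero : ∀ l ≤ 2, u l = 0
  add_le : ∀ l, 2 ≤ l → u l + n + min (l * p) (m * p - u l) ≤ u (l + 1)

theorem IsRamp.monotone {m : ℕ} {u : ℕ → ℕ} (hu : IsRamp n m p u) : Monotone u := by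
  refine monotone_nat_of_le_succ fun l => ?_
  rcases Nat.lt_or_ge l 2 with hl | hl
  · rw [hu.eq_zero l hl.le]
    exact Nat.zero_le _
  · have := hu.add_le l hl
    omega

theorem IsSeeding.hasQuasiCopy_true (hT : IsSeeding c W Y p T) (hblue : ¬ HasQuasiCopy n c false)
    (hY : 2 ≤ #Y) (hYW : Disjoint Y W) {u : ℕ → ℕ} (hu : IsRamp n #Y p u) (hle : u #Y ≤ #Yᶜ) :
    HasQuasiCopy #Y c true := by
  have hbound {l : ℕ} (hl : l ≤ #Y) : u l ≤ #Yᶜ := (hu.monotone hl).trans hle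
  refine hasQuasiCopy_true_of_levels (q := 0) (V := ∅) (C := fun _ => ∅)
    (r := fun l => if l ≤ #Y then u l else #Yᶜ) hblue hYW (disjoint_empty_right _)
    (disjoint_empty_right _) hT (fun _ _ => subset_rfl) (fun _ _ => card_empty.le)
    (fun i j hij => ?_) ?_ (fun l => ?_) ?_ fun l hl hlY => .inr ?_
  · have := hu.monotone hij
    dsimp only
    split_ifs with hi hj
    exacts [this, hbound hi, by omega, le_rfl]
  · simp [hu.eq_zero 2 le_rfl, hY]
  · split_ifs with hl
    exacts [hbound hl, le_rfl]
  · simp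
  · simpa [hlY.le, show l + 1 ≤ #Y from hlY] using hu.add_le l hl

/-- The heights of a chain of length `M` that climb along the ramp `u` up to level `k` and beyond it
follow the ramp `v` downwards from the top level `m + 1`. -/
def glueRamps (m M k : ℕ) (u v : ℕ → ℕ) (l : ℕ) : ℕ :=
  if l ≤ k then u l else M - v (m + 1 - l)

section Glue

variable {m M k : ℕ} {u v : ℕ → ℕ}

theorem glueRamps_monotone (hu : Monotone u) (hv : Monotone v) (huv : u k + v (m - k) ≤ M) :
    Monotone (glueRamps m M k u v) := by
  intro i j hij
  have hvij := hv (show m + 1 - j ≤ m + 1 - i by omega)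
  unfold glueRamps
  split_ifs with hi hj hj
  · exact hu hij
  · have hui := hu hi
    have hvj := hv (show m + 1 - j ≤ m - k by omega)
    omega
  · omega
  · omega

theorem glueRamps_add_le (hu : IsRamp n m p u) (hv : IsRamp n m q v) (hk : k < m)
    (huq : u k + m * q ≤ M) (hvp : v (m - k) + m * p ≤ M)
    (hgap : u k + n + min (k * p) (m * p - u k) +
      (v (m - k) + min ((m - k) * q) (m * q - v (m - k))) ≤ M) {l : ℕ} (hl : 2 ≤ l)
    (hlm : l + 1 < m) :
    glueRamps m M k u v l + n + min (l * p) (m * p - glueRamps m M k u v l) +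
      min ((m - l) * q) (glueRamps m M k u v (l + 1) + m * q - M) ≤
        glueRamps m M k u v (l + 1) := by
  unfold glueRamps
  rcases lt_trichotomy l k with hlk | rfl | hlk
  · have hul := hu.add_le l hl
    have huk := hu.monotone (show l + 1 ≤ k from hlk)
    rw [if_pos hlk.le, if_pos (show l + 1 ≤ k from hlk)]
    omega
  · rw [if_pos le_rfl, if_neg (Nat.not_succ_le_self l), Nat.add_sub_add_right]
    omega
  · have hvl := hv.add_le (m - l) (by omega)
    have hvk := hv.monotone (show m - l + 1 ≤ m - k by omega)
    rw [if_neg hlk.not_ge, if_neg (by omega), Nat.add_sub_add_right,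
      show m + 1 - l = m - l + 1 by omega]
    omega

end Glue

theorem IsSeeding.hasQuasiCopy_true_of_compl (hT : IsSeeding c W Y p T)
    (hC : IsSeeding (c ∘ compl) V Y q C) (hblue : ¬ HasQuasiCopy n c false) (hYW : Disjoint Y W)
    (hYV : Disjoint Y V) (hWV : Disjoint W V) {u v : ℕ → ℕ} (hu : IsRamp n #Y p u)
    (hv : IsRamp n #Y q v) {k : ℕ} (hk : 2 ≤ k) (hkY : k + 2 ≤ #Y) (huq : u k + #Y * q ≤ #Yᶜ)
    (hvp : v (#Y - k) + #Y * p ≤ #Yᶜ)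
    (hgap : u k + n + min (k * p) (#Y * p - u k) +
      (v (#Y - k) + min ((#Y - k) * q) (#Y * q - v (#Y - k))) ≤ #Yᶜ) :
    HasQuasiCopy #Y c true := by
  refine hasQuasiCopy_true_of_levels (C := C) (r := glueRamps #Y #Yᶜ k u v) hblue hYW hYV hWV hT
    hC.subset hC.card_le (glueRamps_monotone hu.monotone hv.monotone (by omega)) ?_ (fun l => ?_) ?_
    fun l hl hlY => ?_
  · simp [glueRamps, hu.eq_zero 2 le_rfl, hk]
  · unfold glueRamps
    split_ifs with hl
    · exact (hu.monotone hl).trans (by omega)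
    · exact Nat.sub_le _ _
  · simp [glueRamps, hv.eq_zero 0, show ¬ #Y + 1 ≤ k by omega]
  · rcases (show l + 1 ≤ #Y from hlY).eq_or_lt with hlast | hlast
    · refine .inl ⟨hlast, ?_, hC.red⟩
      rw [glueRamps, if_neg (by omega), ← hlast, show l + 1 + 1 - l = 2 by omega,
        hv.eq_zero 2 le_rfl, Nat.sub_zero]
    · exact .inr (glueRamps_add_le hu hv (by omega) huq hvp hgap hl hlast)

end RedCopies

section BlueCopies

variable {α : Type*} [DecidableEq α] {c : Finset α → Bool} {m n p q : ℕ} {W Y : Finset α} {a b : α}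

/-- No set `insert a T` with `T ⊆ W` of size less than `p` is red. Together with `IsSeeding` this is
the dichotomy of the proof: a minimal red set above `a` is either small or large. -/
def IsBlocked (c : Finset α → Bool) (W : Finset α) (p : ℕ) (a : α) : Prop :=
  ∀ T ⊆ W, #T < p → c (insert a T) = false

theorem exists_isBlocked_isSeeding (c : Finset α → Bool) (W : Finset α) (hY : Y.Nonempty) (n : ℕ) :
    ∃ a ∈ Y, ∃ p, IsBlocked c W p a ∧ (p < n → ∃ T, IsSeeding c W Y p T) := by
  classical
  let P : ℕ → Prop := fun p => ∃ a ∈ Y, IsBlocked c W p a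
  have hP : P 0 := hY.imp fun a ha => ⟨ha, fun T _ hT => (Nat.not_lt_zero _ hT).elim⟩
  obtain ⟨a, ha, hblocked⟩ := Nat.findGreatest_spec (Nat.zero_le n) hP
  refine ⟨a, ha, _, hblocked, fun hlt => ?_⟩
  have hmax : ¬ P (Nat.findGreatest P n + 1) :=
    Nat.findGreatest_is_greatest (Nat.lt_succ_self _) hlt
  simp only [P, IsBlocked, not_exists, not_and, not_forall, Bool.not_eq_false] at hmax
  choose! T hTW hTp hTc using hmax
  exact ⟨T, hTW, fun y hy => Nat.le_of_lt_succ (hTp y hy), hTc⟩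

theorem IsSeeding.mono {V Z : Finset α} {T : α → Finset α} (hT : IsSeeding c W Y p T) (hZ : Z ⊆ Y)
    (hTV : ∀ y ∈ Z, T y ⊆ V) : IsSeeding c V Z p T :=
  ⟨hTV, fun y hy => hT.card_le y (hZ hy), fun y hy => hT.red y (hZ hy)⟩

theorem IsBlocked.mono {V : Finset α} (ha : IsBlocked c W p a) (hVW : V ⊆ W) :
    IsBlocked c V p a :=
  fun T hT => ha T (hT.trans hVW)

/-- The heights along a chain through `{a}` and the complement of `{b}` used for the blue copy: they
stay at the set `{a}` below level `p`, gain `m` per level until level `n - q`, and then stay at the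
complement of `{b}`, whose height is `h`. -/
def blueHeights (m n p q h l : ℕ) : ℕ :=
  if l + q ≤ n then 1 + (l - p) * m else h

theorem blueHeights_add_le {h l : ℕ} (hh : 1 + m * (n + 1 - p - q) ≤ h) (hpl : p ≤ l)
    (hlq : l + q ≤ n) : blueHeights m n p q h l + m ≤ blueHeights m n p q h (l + 1) := by
  have hsucc : (l - p) * m + m = (l + 1 - p) * m := by
    rw [Nat.succ_sub hpl, Nat.succ_mul]
  have htop : (l + 1 - p) * m ≤ m * (n + 1 - p - q) :=
    (mul_comm _ m).trans_le (Nat.mul_le_mul_left m (by omega))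
  unfold blueHeights
  split_ifs <;> omega

theorem blueHeights_monotone {h : ℕ} (hh : 1 + m * (n + 1 - p - q) ≤ h) :
    Monotone (blueHeights m n p q h) := by
  refine monotone_nat_of_le_succ fun l => ?_
  rcases le_or_gt (l + q) n with hlq | hlq
  · rcases le_or_gt p l with hpl | hpl
    · exact (Nat.le_add_right _ _).trans (blueHeights_add_le hh hpl hlq)
    · unfold blueHeights
      rw [if_pos hlq, Nat.sub_eq_zero_of_le hpl.le]
      split_ifs <;> omega
  · rw [blueHeights, blueHeights, if_neg (by omega), if_neg (by omega)]

variable [Fintype α]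

theorem IsBlocked.eq_false_of_compl {S : Finset α} (hb : IsBlocked (c ∘ compl) W q b) (hbW : b ∉ W)
    (hS : S ⊆ W) (hSq : #W < #S + q) : c (S ∪ Wᶜ.erase b) = false := by
  have hcompl : S ∪ Wᶜ.erase b = (insert b (W \ S))ᶜ := by
    ext x
    have hxS := @hS x
    rcases eq_or_ne x b with rfl | hxb
    · simpa using fun hx => hbW (hxS hx)
    · simp only [mem_union, mem_erase, mem_compl, mem_insert, mem_sdiff, hxb]
      tauto
  have hcard := card_le_card hS
  exact hcompl ▸ hb (W \ S) sdiff_subset (by rw [card_sdiff_of_subset hS]; omega)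

theorem IsBlocked.hasQuasiCopy_false (ha : IsBlocked c W p a) (hb : IsBlocked (c ∘ compl) W q b)
    (hred : ¬ HasQuasiCopy m c true) (hab : a ≠ b) (haW : a ∉ W) (hbW : b ∉ W)
    (hcard : #W + m * (#W + 1 - p - q) + 2 ≤ Fintype.card α) : HasQuasiCopy #W c false := by
  have haM : {a} ⊆ Wᶜ.erase b := by simp [hab, haW]
  obtain ⟨G, hG, hGM, hGcard, hGa, hGb⟩ := exists_chain_through_s10 haM (erase_subset b _)
  have hMcard := card_compl W
  rw [card_singleton] at hGa
  rw [card_erase_of_mem (mem_compl.2 hbW)] at hGb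
  have hh : 1 + m * (#W + 1 - p - q) ≤ #Wᶜ - 1 := by omega
  set r := blueHeights m #W p q (#Wᶜ - 1) with hr
  have hr_mono : Monotone r := blueHeights_monotone hh
  have hr_le (l : ℕ) : r l ≤ #Wᶜ := by
    have htop : r (l + #W + 1) = #Wᶜ - 1 := if_neg (by omega)
    have := hr_mono (show l ≤ l + #W + 1 by omega)
    omega
  have hGW (i : ℕ) : Disjoint (G i) W := subset_compl_iff_disjoint_right.1 (hGM i)
  have hlo_hi (S : Finset α) : S ∪ G (r #S) ⊆ S ∪ G (r (#S + 1)) :=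
    union_subset_union_right (hG (hr_mono (Nat.le_succ _)))
  refine .of_intervals (lo := fun S => S ∪ G (r #S)) (hi := fun S => S ∪ G (r (#S + 1)))
    (fun S _ => subset_union_left) (fun S _ => ?_)
    (fun S T hST _ => union_subset_union hST.subset (hG (hr_mono (card_lt_card hST))))
    fun S hS => ?_
  · rw [union_inter_distrib_right, disjoint_iff_inter_eq_empty.1 (hGW _), union_empty]
    exact inter_subset_left
  rcases Nat.lt_or_ge #W (#S + q) with hSq | hSq
  · refine ⟨_, subset_rfl, hlo_hi S, fun _ _ => ?_⟩
    rw [hr, blueHeights, if_neg hSq.not_ge, hGb]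
    exact hb.eq_false_of_compl hbW hS hSq
  rcases Nat.lt_or_ge #S p with hSp | hSp
  · refine ⟨_, subset_rfl, hlo_hi S, fun _ _ => ?_⟩
    rw [hr, blueHeights, if_pos hSq, Nat.sub_eq_zero_of_le hSp.le, zero_mul, add_zero, hGa,
      union_comm, singleton_union]
    exact ha S hS hSp
  · have hcard_lo (l : ℕ) : #(S ∪ G (r l)) = #S + r l := by
      rw [card_union_of_disjoint ((hGW _).mono_right hS).symm, hGcard _ (hr_le _)]
    have hgap : r #S + m ≤ r (#S + 1) := blueHeights_add_le hh hSp hSq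
    obtain ⟨F, hlo, hhi, hF⟩ := exists_color_eq_of_not_hasQuasiCopy (n := m) (b := false) hred
      (hlo_hi S) (by rw [hcard_lo, hcard_lo]; omega)
    exact ⟨F, hlo, hhi, fun _ _ => hF⟩

end BlueCopies

section Ramps

variable {m n M p q : ℕ}

/-- The ramp whose first step above level `2` is long enough to absorb all the sets of a
seeding. -/
def shortRamp (n m p : ℕ) : ℕ → ℕ
  | 0 | 1 | 2 => 0
  | l + 3 => max (m * p) (n + 2 * p) + l * n

/-- The ramp that needs two steps above level `2` to absorb all the sets of a seeding: up
to `2 * p` and `3 * p` elements are lost at levels `2` and `3`. -/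
def longRamp (n m p : ℕ) : ℕ → ℕ
  | 0 | 1 | 2 => 0
  | 3 => n + 2 * p
  | l + 4 => max (m * p) (2 * n + 5 * p) + l * n

theorem isRamp_shortRamp : IsRamp n m p (shortRamp n m p) where
  eq_zero l hl := by interval_cases l <;> rfl
  add_le l hl := by
    obtain ⟨l, rfl⟩ := Nat.exists_eq_add_of_le' hl
    cases l with
    | zero => simp only [shortRamp]; omega
    | succ l => simp only [shortRamp, Nat.succ_mul]; omega

theorem isRamp_longRamp : IsRamp n m p (longRamp n m p) where
  eq_zero l hl := by interval_cases l <;> rfl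
  add_le l hl := by
    obtain ⟨l, rfl⟩ := Nat.exists_eq_add_of_le' hl
    match l with
    | 0 => simp only [longRamp]; omega
    | 1 => simp only [longRamp]; omega
    | l + 2 => simp only [longRamp, Nat.succ_mul]; omega

theorem mul_lt_add_two_mul (hn : 0 < n)
    (hbound : ((2 * m - 3) * (m - 2) + 3) * n ≤ (2 * m - 3) * M) : m * n < M + 2 * n := by
  by_contra! h
  have hMn : M ≤ (m - 2) * n := by rw [Nat.sub_mul]; omega
  have hle := Nat.mul_le_mul_left (2 * m - 3) hMn
  rw [Nat.add_mul, mul_assoc] at hbound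
  omega

theorem lt_and_lt_and_add_le_of_lt (hm : 4 ≤ m) (hn : 0 < n) (hM : m * n < M + 2 * n)
    (hpq : M + m < n + m * (n + 1 - p - q) + 2) :
    p < n ∧ q < n ∧ m * p + m * q + M ≤ m * n + n + 1 := by
  have hmn : 4 * n ≤ m * n := Nat.mul_le_mul_right n hm
  rcases Nat.lt_or_ge (p + q) n with hlt | hge
  · obtain ⟨d, rfl⟩ := Nat.exists_eq_add_of_lt hlt
    rw [show p + q + d + 1 + 1 - p - q = d + 2 by omega] at hpq
    refine ⟨by omega, by omega, ?_⟩
    linarith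
  · have : m * (n + 1 - p - q) ≤ m := mul_le_of_le_one_right (Nat.zero_le m) (by omega)
    omega

theorem mul_add_lt_of_lt_shortRamp (hm : 4 ≤ m) (hn : 0 < n)
    (hbound : ((2 * m - 3) * (m - 2) + 3) * n ≤ (2 * m - 3) * M)
    (hpq : m * p + m * q + M ≤ m * n + n + 1) (hq : M < shortRamp n m q m) :
    m * p + n < M := by
  have hstrict := mul_lt_add_two_mul hn hbound
  rcases Nat.lt_or_ge m 7 with h7 | h7
  · interval_cases m <;> simp only [shortRamp] at hq <;> omega
  · have : 7 * n ≤ m * n := Nat.mul_le_mul_right n h7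
    omega

theorem two_mul_add_mul_le (hm : 4 ≤ m) (hm12 : m ≤ 12)
    (hbound : ((2 * m - 3) * (m - 2) + 3) * n ≤ (2 * m - 3) * M)
    (hpq : m * p + m * q + M ≤ m * n + n + 1) (hp : M < shortRamp n m p m) :
    2 * p + m * q + m * n ≤ M + 4 * n := by
  have hshort : M < max (m * p) (n + 2 * p) + (m - 3) * n := by
    rwa [← Nat.sub_add_cancel (show 3 ≤ m by omega), shortRamp,
      Nat.sub_add_cancel (show 3 ≤ m by omega)] at hp
  -- Eliminating `q` and then `p` through `M < 2 * p + (m - 2) * n` leaves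
  -- `2 * (2 * m - 3) ≤ 3 * (m + 2)`, which holds exactly up to `m = 12`.
  interval_cases m <;> omega

theorem two_mul_add_two_mul_le (hm : 4 ≤ m) (hn : 0 < n)
    (hbound : ((2 * m - 3) * (m - 2) + 3) * n ≤ (2 * m - 3) * M)
    (hpq : m * p + m * q + M ≤ m * n + n + 1) : 2 * p + 2 * q + m * n ≤ M + 3 * n := by
  by_contra! h
  have hlt : (m + 2) * M + m * n < (m * m + 2) * n + 1 := by nlinarith
  zify [show 3 ≤ 2 * m by omega, show 2 ≤ m by omega] at *
  nlinarith [mul_le_mul_of_nonneg_left hbound (show (0 : ℤ) ≤ m + 2 by omega),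
    mul_le_mul_of_nonneg_left (Int.lt_add_one_iff.1 hlt) (show (0 : ℤ) ≤ 2 * m - 3 by omega),
    mul_pos (show (0 : ℤ) < 2 * m * m - 12 * m + 24 by nlinarith) hn]

theorem shortRamp_bounds (hm : 4 ≤ m) (hm12 : m ≤ 12) (hn : 0 < n)
    (hbound : ((2 * m - 3) * (m - 2) + 3) * n ≤ (2 * m - 3) * M)
    (hpq : m * p + m * q + M ≤ m * n + n + 1) (hp : M < shortRamp n m p m)
    (hq : M < shortRamp n m q m) :
    shortRamp n m p 2 + m * q ≤ M ∧ shortRamp n m q (m - 2) + m * p ≤ M ∧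
      shortRamp n m p 2 + n + min (2 * p) (m * p - shortRamp n m p 2) +
        (shortRamp n m q (m - 2) + min ((m - 2) * q) (m * q - shortRamp n m q (m - 2))) ≤ M := by
  have hstrict := mul_lt_add_two_mul hn hbound
  have hkeyp := two_mul_add_mul_le hm hm12 hbound hpq hp
  have hkeyq := two_mul_add_mul_le (q := p) hm hm12 hbound (by omega) hq
  have hkey := two_mul_add_two_mul_le hm hn hbound hpq
  rcases hm.eq_or_lt with rfl | hm5
  · simp only [shortRamp, Nat.reduceSub]
    omega
  have hshort : shortRamp n m q (m - 2) = max (m * q) (n + 2 * q) + (m - 5) * n := by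
    rw [show m - 2 = m - 5 + 3 by omega, shortRamp]
  have hmn : (m - 5) * n + 5 * n = m * n := by rw [← Nat.add_mul, Nat.sub_add_cancel hm5]
  rw [hshort, shortRamp]
  omega

theorem five_mul_add_le (hm : 13 ≤ m) (hn : 0 < n)
    (hbound : ((2 * m - 3) * (m - 2) + 3) * n ≤ (2 * m - 3) * M)
    (hpq : m * p + m * q + M ≤ m * n + n + 1) : 5 * p + 5 * q + m * n ≤ M + 3 * n := by
  by_contra! h
  have hlt : (m + 5) * M < (m * m + 2 * m + 5) * n := by nlinarith
  -- Eliminating `M` leaves `2 * m ^ 2 - 30 * m + 60 ≤ 0` up to a positive factor, which fails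
  -- exactly from `m = 13` on.
  zify [show 3 ≤ 2 * m by omega, show 2 ≤ m by omega] at *
  nlinarith [mul_le_mul_of_nonneg_left hbound (show (0 : ℤ) ≤ m + 5 by omega),
    mul_lt_mul_of_pos_left hlt (show (0 : ℤ) < 2 * m - 3 by omega),
    mul_nonneg (show (0 : ℤ) ≤ 2 * m * m - 30 * m + 60 by nlinarith) hn.le]

theorem longRamp_bounds (hm : 13 ≤ m) (hn : 0 < n)
    (hbound : ((2 * m - 3) * (m - 2) + 3) * n ≤ (2 * m - 3) * M)
    (hpq : m * p + m * q + M ≤ m * n + n + 1) :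
    longRamp n m p 3 + m * q ≤ M ∧ longRamp n m q (m - 3) + m * p ≤ M ∧
      longRamp n m p 3 + n + min (3 * p) (m * p - longRamp n m p 3) + (longRamp n m q (m - 3) +
        min ((m - 3) * q) (m * q - longRamp n m q (m - 3))) ≤ M := by
  have hstrict := mul_lt_add_two_mul hn hbound
  have hkey := five_mul_add_le hm hn hbound hpq
  have hp : 13 * p ≤ m * p := Nat.mul_le_mul_right p hm
  have hq : 13 * q ≤ m * q := Nat.mul_le_mul_right q hm
  have hlong : longRamp n m q (m - 3) = max (m * q) (2 * n + 5 * q) + (m - 7) * n := by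
    rw [show m - 3 = m - 7 + 4 by omega, longRamp]
  have hmn : (m - 7) * n + 7 * n = m * n := by rw [← Nat.add_mul, Nat.sub_add_cancel (by omega)]
  rw [hlong, longRamp]
  omega

end Ramps

section SeedingPairs

variable {α : Type*} [Fintype α] [DecidableEq α] {c : Finset α → Bool} {m n p q M : ℕ}
  {V W Y : Finset α} {a : α} {T C : α → Finset α}

theorem IsBlocked.exists_isSeeding_compl (ha : IsBlocked c W p a) (hred : ¬ HasQuasiCopy m c true)
    (hblue : ¬ HasQuasiCopy n c false) (hY : Y.Nonempty) (haY : a ∉ Y) (haW : a ∉ W)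
    (hYW : Disjoint Y W) (hW : n ≤ #W) (hm : 4 ≤ m) (hn : 0 < n) (hM : m * n < M + 2 * n)
    (hcard : M + m ≤ Fintype.card α) :
    p < n ∧ ∃ q C, IsSeeding (c ∘ compl) W Y q C ∧ m * p + m * q + M ≤ m * n + n + 1 := by
  obtain ⟨X, hXW, rfl⟩ := exists_subset_card_eq hW
  obtain ⟨b, hb, q, hblocked, hC⟩ := exists_isBlocked_isSeeding (c ∘ compl) W hY #X
  have hlt : M + m < #X + m * (#X + 1 - p - q) + 2 := by
    by_contra! hle
    exact hblue <| (ha.mono hXW).hasQuasiCopy_false (hblocked.mono hXW) hred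
      (ne_of_mem_of_not_mem hb haY).symm (notMem_mono hXW haW)
      (notMem_mono hXW (disjoint_left.1 hYW hb)) (hle.trans hcard)
  obtain ⟨hp, hq, hpq⟩ := lt_and_lt_and_add_le_of_lt hm hn hM hlt
  obtain ⟨C, hC⟩ := hC hq
  exact ⟨hp, q, C, hC, hpq⟩

theorem IsSeeding.lt_shortRamp (hT : IsSeeding c W Y p T) (hred : ¬ HasQuasiCopy #Y c true)
    (hblue : ¬ HasQuasiCopy n c false) (hY : 2 ≤ #Y) (hYW : Disjoint Y W) :
    #Yᶜ < shortRamp n #Y p #Y :=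
  lt_of_not_ge fun hle => hred (hT.hasQuasiCopy_true hblue hY hYW isRamp_shortRamp hle)

theorem IsSeeding.compl_lt_shortRamp (hC : IsSeeding (c ∘ compl) V Y q C)
    (hred : ¬ HasQuasiCopy #Y c true) (hblue : ¬ HasQuasiCopy n c false) (hY : 2 ≤ #Y)
    (hYV : Disjoint Y V) : #Yᶜ < shortRamp n #Y q #Y :=
  hC.lt_shortRamp (mt HasQuasiCopy.of_compl hred) (mt HasQuasiCopy.of_compl hblue) hY hYV

theorem IsSeeding.hasQuasiCopy_true_of_le (hT : IsSeeding c W Y p T)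
    (hC : IsSeeding (c ∘ compl) V Y q C) (hblue : ¬ HasQuasiCopy n c false) (hYW : Disjoint Y W)
    (hYV : Disjoint Y V) (hWV : Disjoint W V) (hY : 4 ≤ #Y) (hn : 0 < n)
    (hbound : ((2 * #Y - 3) * (#Y - 2) + 3) * n ≤ (2 * #Y - 3) * #Yᶜ)
    (hpq : #Y * p + #Y * q + #Yᶜ ≤ #Y * n + n + 1) : HasQuasiCopy #Y c true := by
  rcases le_or_gt #Y 12 with h12 | h13
  · by_contra hred
    obtain ⟨huq, hvp, hgap⟩ := shortRamp_bounds hY h12 hn hbound hpq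
      (hT.lt_shortRamp hred hblue (by omega) hYW) (hC.compl_lt_shortRamp hred hblue (by omega) hYV)
    exact hred <| hT.hasQuasiCopy_true_of_compl hC hblue hYW hYV hWV isRamp_shortRamp
      isRamp_shortRamp (k := 2) le_rfl hY huq hvp hgap
  · obtain ⟨huq, hvp, hgap⟩ := longRamp_bounds h13 hn hbound hpq
    exact hT.hasQuasiCopy_true_of_compl hC hblue hYW hYV hWV isRamp_longRamp isRamp_longRamp
      (k := 3) (by omega) (by omega) huq hvp hgap

theorem IsSeeding.hasQuasiCopy_true_of_isBlocked (hT : IsSeeding c W Y p T)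
    (ha : IsBlocked c W p a) (hblue : ¬ HasQuasiCopy n c false) (haY : a ∉ Y) (haW : a ∉ W)
    (hYW : Disjoint Y W) (hY : 4 ≤ #Y) (hn : 0 < n)
    (hbound : ((2 * #Y - 3) * (#Y - 2) + 3) * n ≤ (2 * #Y - 3) * #Yᶜ) (hW : #Yᶜ ≤ #W + 1) :
    HasQuasiCopy #Y c true := by
  by_contra hred
  have hM := mul_lt_add_two_mul hn hbound
  have hYn : 4 * n ≤ #Y * n := Nat.mul_le_mul_right n hY
  have hopposite {V : Finset α} (hVW : V ⊆ W) (hV : n ≤ #V) :=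
    (ha.mono hVW).exists_isSeeding_compl hred hblue (card_pos.1 (by omega)) haY
      (notMem_mono hVW haW) (hYW.mono_right hVW) hV hY hn hM (card_compl_add_card Y).le
  obtain ⟨-, q₀, C₀, hC₀, hpq₀⟩ := hopposite subset_rfl (by omega)
  have hroom : #Y * p + n < #Yᶜ := mul_add_lt_of_lt_shortRamp hY hn hbound hpq₀
    (hC₀.compl_lt_shortRamp hred hblue (by omega) hYW)
  have hTU : #(Y.biUnion T) ≤ #Y * p := card_biUnion_le_card_mul _ _ _ hT.card_le
  have hV : n ≤ #(W \ Y.biUnion T) := by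
    rw [card_sdiff_of_subset (biUnion_subset.2 hT.subset)]
    omega
  obtain ⟨-, q, C, hC, hpq⟩ := hopposite sdiff_subset hV
  exact hred <| (hT.mono subset_rfl fun y hy => subset_biUnion_of_mem T hy).hasQuasiCopy_true_of_le
    hC hblue (hYW.mono_right (biUnion_subset.2 hT.subset)) (hYW.mono_right sdiff_subset)
    disjoint_sdiff hY hn hbound hpq

end SeedingPairs

section Main

variable {α : Type*} [Fintype α] {m n : ℕ}

theorem hasQuasiCopy_true_or_false_of_le {M : ℕ} (c : Finset α → Bool) (hm : 4 ≤ m)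
    (hbound : ((2 * m - 3) * (m - 2) + 3) * n ≤ (2 * m - 3) * M) (hcard : Fintype.card α = M + m) :
    HasQuasiCopy m c true ∨ HasQuasiCopy n c false := by
  classical
  rcases n.eq_zero_or_pos with rfl | hn
  · exact .inr hasQuasiCopy_zero
  by_contra! h
  obtain ⟨hred, hblue⟩ := h
  have hM := mul_lt_add_two_mul hn hbound
  have hmn : 4 * n ≤ m * n := Nat.mul_le_mul_right n hm
  obtain ⟨Z, hZ⟩ : ∃ Z : Finset α, #Z = m + 1 := by
    simpa using exists_subset_card_eq (s := (univ : Finset α)) (n := m + 1)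
      (by rw [card_univ]; omega)
  obtain ⟨a, ha, p, hap, hT⟩ :=
    exists_isBlocked_isSeeding c Zᶜ (card_pos.1 (by omega : 0 < #Z)) n
  obtain ⟨Y, haY, rfl⟩ : ∃ Y, a ∉ Y ∧ insert a Y = Z :=
    ⟨Z.erase a, notMem_erase a Z, insert_erase ha⟩
  obtain rfl : #Y = m := by rwa [card_insert_of_notMem haY, Nat.add_right_cancel_iff] at hZ
  obtain rfl : #Yᶜ = M := by rw [card_compl, hcard, Nat.add_sub_cancel]
  have haW : a ∉ (insert a Y)ᶜ := notMem_compl.2 ha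
  have hYW : Disjoint Y (insert a Y)ᶜ := disjoint_compl_right.mono_left (subset_insert a Y)
  have hW : #Yᶜ ≤ #(insert a Y)ᶜ + 1 := by rw [card_compl (insert a Y), hcard, hZ]; omega
  obtain ⟨hp, -⟩ := hap.exists_isSeeding_compl hred hblue (card_pos.1 (by omega)) haY haW hYW
    (by omega) hm hn hM hcard.ge
  obtain ⟨T, hT⟩ := hT hp
  have hTY : IsSeeding c (insert a Y)ᶜ Y p T :=
    hT.mono (subset_insert a Y) fun y hy => hT.subset y (mem_insert_of_mem hy)
  exact hred (hTY.hasQuasiCopy_true_of_isBlocked hap hblue haY haW hYW hm hn hbound hW)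

theorem exists_eq_add_and_mul_le {N : ℕ} (hm : 4 ≤ m)
    (hN : ((m : ℝ) - 2 + 3 / (2 * (m : ℝ) - 3)) * n + m ≤ N) :
    ∃ M, N = M + m ∧ ((2 * m - 3) * (m - 2) + 3) * n ≤ (2 * m - 3) * M := by
  have hm4 : (4 : ℝ) ≤ m := by exact_mod_cast hm
  have hden : 0 < 2 * (m : ℝ) - 3 := by linarith
  have hcoeff : 0 ≤ (m : ℝ) - 2 + 3 / (2 * (m : ℝ) - 3) :=
    add_nonneg (by linarith) (div_nonneg zero_le_three hden.le)
  have hmN : m ≤ N := by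
    exact_mod_cast (le_add_of_nonneg_left (mul_nonneg hcoeff n.cast_nonneg)).trans hN
  obtain ⟨M, rfl⟩ := Nat.exists_eq_add_of_le' hmN
  refine ⟨M, rfl, ?_⟩
  have hM : ((m : ℝ) - 2 + 3 / (2 * (m : ℝ) - 3)) * n ≤ M := by
    push_cast at hN
    linarith
  have hclear : ((2 * (m : ℝ) - 3) * (m - 2) + 3) * n ≤ (2 * m - 3) * M :=
    calc ((2 * (m : ℝ) - 3) * (m - 2) + 3) * n
        = (2 * m - 3) * (((m : ℝ) - 2 + 3 / (2 * (m : ℝ) - 3)) * n) := by field_simp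
      _ ≤ (2 * m - 3) * M := mul_le_mul_of_nonneg_left hM hden.le
  rify [show 3 ≤ 2 * m by omega, show 2 ≤ m by omega]
  exact hclear

theorem hat_ramsey_Qm_Qn_general (hm : 4 ≤ m)
    (hN : ((m : ℝ) - 2 + 3 / (2 * (m : ℝ) - 3)) * n + m ≤ Fintype.card α)
    (c : Finset α → Bool) : HasQuasiCopy m c true ∨ HasQuasiCopy n c false := by
  obtain ⟨M, hcard, hbound⟩ := exists_eq_add_and_mul_le hm hN
  exact hasQuasiCopy_true_or_false_of_le c hm hbound hcard

end Main

/-- for n ≥ m ≥ 4 and (N : ℝ) ≥ (m − 2 + 3/(2m − 3))n + m, every 2-coloring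
of Q_N contains a copy of Q_m red except possibly at ∅ and [N], or a copy of Q_n blue
except possibly at ∅ and [N]; i.e. R̂(Q_m, Q_n) ≤ (m − 2 + 3/(2m − 3))n + m. -/
theorem hat_ramsey_Qm_Qn (m n N : ℕ) (hm : 4 ≤ m) (hmn : m ≤ n)
    (hN : (N : ℝ) ≥ ((m : ℝ) - 2 + 3 / (2 * (m : ℝ) - 3)) * (n : ℝ) + (m : ℝ))
    (c : Finset (Fin N) → Bool) :
    HasQuasiRedCopy m N c ∨ HasQuasiBlueCopy n N c :=
  (hat_ramsey_Qm_Qn_general hm (by rwa [Fintype.card_fin]) c).imp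
    HasQuasiCopy.hasQuasiRedCopy HasQuasiCopy.hasQuasiBlueCopy
end
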